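/- arXiv:0708.1620 — 3 statements merged into one kernel-verified Lean document; each statement's English description precedes it below -/
import Mathlib

section
/- Let K be a field of characteristic p > 0 and let Γ = {σ ∈ Aut_K(K[X, Y]) : J(σ) = 1}, where J denotes the Jacobian. Every σ ∈ Γ can be written as a product σ = t_ν ∘ φ_{f_1} ∘ s ∘ φ_{f_2} ∘ s ∘ ⋯ ∘ φ_{f_{n-1}} ∘ s ∘ φ_{f_n} for some n ≥ 1, ν ∈ K^*, and f_1, …, f_n ∈ K[X]. -/
/-!
STATEMENT 14: Let `K` be a field of characteristic `p > 0` and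
`Γ = {σ ∈ Aut_K(K[X, Y]) : J(σ) = 1}`.  Every `σ ∈ Γ` can be written as
`σ = t_ν ∘ φ_{f₁} ∘ s ∘ φ_{f₂} ∘ s ∘ ⋯ ∘ φ_{f_{n-1}} ∘ s ∘ φ_{f_n}`
for some `n ≥ 1`, `ν ∈ K^*`, `f₁, …, f_n ∈ K[X]`.

Here `K[X, Y] = MvPolynomial (Fin 2) K` with `X = X 0`, `Y = X 1`; the automorphisms
`t_ν : X ↦ νX, Y ↦ ν⁻¹Y`, `s : X ↦ Y, Y ↦ −X`, `φ_f : X ↦ X, Y ↦ Y + f(X)` are specified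
by their values on the generators; the word `φ_{f₁} s φ_{f₂} s ⋯ φ_{f_n}` is the product
of the list `w 0, …, w (2n−2)` with even entries the `φ_{f_k}` and odd entries `s`.
-/

noncomputable section

/-- The Jacobian `J(τ)` of an automorphism of `K[X, Y]`. -/
def jacP (K : Type*) [CommRing K]
    (τ : MvPolynomial (Fin 2) K ≃ₐ[K] MvPolynomial (Fin 2) K) : MvPolynomial (Fin 2) K :=
  MvPolynomial.pderiv 0 (τ (MvPolynomial.X 0)) * MvPolynomial.pderiv 1 (τ (MvPolynomial.X 1))
    - MvPolynomial.pderiv 1 (τ (MvPolynomial.X 0)) *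
        MvPolynomial.pderiv 0 (τ (MvPolynomial.X 1))

/-!
An automorphism `σ` yields a nontrivial one-parameter deformation of the identity of `K[X, Y]`
that fixes `f = σ X`, namely `σ Y ↦ σ Y + T`. Factors of an invariant of a deformation are
invariant, and the leading form of an invariant, for any weights, is an invariant of another
deformation. An invariant that involves both `X` and `Y` in each of its monomials would have `X`
and `Y` among its factors and leave nothing to deform; so the leading form of `f` for the weights
`(b, a)`, where `a` and `b` are the degrees of `f` in `X` and `Y`, has a monomial on an axis, and
the Newton polygon of `f` lies in the triangle with vertices `(0, 0)`, `(a, 0)` and `(0, b)`.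

Over the algebraic closure the form along the edge from `(a, 0)` to `(0, b)` splits into binomials
`Y ^ n - l X ^ m` with `m` and `n` coprime, each of them an invariant. Differentiating such a
relation bounds degrees in `T` and forces `m = 1` or `n = 1`, that is `a ∣ b` or `b ∣ a`. In the
latter case `l` lies in `K`, since it can be read off the deformation, and the shear
`Y ↦ Y + l X ^ m` lowers the degree of `f` in `X`. Once one of the variables has disappeared from
`f`, the polynomial `f` is affine in the other one and the Jacobian condition determines `σ` up to
a shear.
-/

open MvPolynomial

section RestrictSupport

variable {σ R M : Type*} [CommSemiring R]

theorem mul_mem_restrictSupport {s t u : Set (σ →₀ ℕ)} {P Q : MvPolynomial σ R}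
    (hP : P ∈ restrictSupport R s) (hQ : Q ∈ restrictSupport R t)
    (hu : ∀ a ∈ s, ∀ b ∈ t, a + b ∈ u) : P * Q ∈ restrictSupport R u := by
  classical
  rw [mem_restrictSupport_iff] at *
  intro m hm
  obtain ⟨a, ha, b, hb, rfl⟩ := Finset.mem_add.mp (support_mul P Q hm)
  exact hu a (hP ha) b (hQ hb)

theorem isWeightedHomogeneous_iff_mem_restrictSupport [AddCommMonoid M] {w : σ → M}
    {n : M} {P : MvPolynomial σ R} :
    IsWeightedHomogeneous w P n ↔ P ∈ restrictSupport R {m | Finsupp.weight w m = n} := by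
  simp [IsWeightedHomogeneous, mem_restrictSupport_iff, Set.subset_def]

end RestrictSupport

section LeadingForm

variable {σ τ R M : Type*} [CommRing R] [AddCommMonoid M] [PartialOrder M]

/-- `Q` is the leading form of `P` for the weights `w`: every monomial of `P` has weight at
most `n`, and `Q` is the part of `P` of weight exactly `n`. Weights may be negative, and `Q`
may vanish. -/
structure IsLeadingForm (w : σ → M) (n : M) (P Q : MvPolynomial σ R) : Prop where
  homogeneous : IsWeightedHomogeneous w Q n
  remainder_mem : P - Q ∈ restrictSupport R {m | Finsupp.weight w m < n}

namespace IsLeadingForm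

variable {w : σ → M} {n n' : M} {P P' Q Q' : MvPolynomial σ R}

theorem of_homogeneous (hQ : IsWeightedHomogeneous w Q n) : IsLeadingForm w n Q Q :=
  ⟨hQ, by simp⟩

theorem zero_of_mem (hP : P ∈ restrictSupport R {m | Finsupp.weight w m < n}) :
    IsLeadingForm w n P 0 :=
  ⟨isWeightedHomogeneous_zero R w n, by simpa using hP⟩

theorem of_component
    (hP : P ∈ restrictSupport R {m | Finsupp.weight w m ≤ n}) :
    IsLeadingForm w n P (weightedHomogeneousComponent w n P) := by
  classical
  refine ⟨weightedHomogeneousComponent_isWeightedHomogeneous n P, fun m hm => ?_⟩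
  have hm : coeff m (P - weightedHomogeneousComponent w n P) ≠ 0 :=
    mem_support_iff.mp hm
  rw [coeff_sub, coeff_weightedHomogeneousComponent] at hm
  split_ifs at hm with h
  · simp at hm
  · exact lt_of_le_of_ne (hP (mem_support_iff.mpr (by simpa using hm))) h

theorem mem_restrictSupport (h : IsLeadingForm w n P Q) :
    P ∈ restrictSupport R {m | Finsupp.weight w m ≤ n} := by
  have hQ := isWeightedHomogeneous_iff_mem_restrictSupport.mp h.homogeneous
  rw [← sub_add_cancel P Q]
  exact add_mem (restrictSupport_mono R (fun _ => le_of_lt) h.remainder_mem)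
    (restrictSupport_mono R (fun _ => le_of_eq) hQ)

theorem unique (h : IsLeadingForm w n P Q) (h' : IsLeadingForm w n P Q') : Q = Q' := by
  ext m
  by_contra hne
  have hm : coeff m (Q - Q') ≠ 0 := by rwa [coeff_sub, sub_ne_zero]
  have hlt : Q - Q' ∈ restrictSupport R {m | Finsupp.weight w m < n} := by
    simpa using sub_mem h'.remainder_mem h.remainder_mem
  exact (hlt (mem_support_iff.mpr hm)).ne ((h.homogeneous.sub h'.homogeneous) hm)

theorem add (h : IsLeadingForm w n P Q) (h' : IsLeadingForm w n P' Q') :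
    IsLeadingForm w n (P + P') (Q + Q') :=
  ⟨h.homogeneous.add h'.homogeneous, by
    rw [add_sub_add_comm]; exact add_mem h.remainder_mem h'.remainder_mem⟩

theorem sum {κ : Type*} (s : Finset κ) {P Q : κ → MvPolynomial σ R}
    (h : ∀ i ∈ s, IsLeadingForm w n (P i) (Q i)) :
    IsLeadingForm w n (∑ i ∈ s, P i) (∑ i ∈ s, Q i) :=
  ⟨.sum s Q n fun i hi => (h i hi).homogeneous, by
    rw [← Finset.sum_sub_distrib]; exact sum_mem fun i hi => (h i hi).remainder_mem⟩

variable [IsOrderedCancelAddMonoid M]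

theorem mul (h : IsLeadingForm w n P Q) (h' : IsLeadingForm w n' P' Q') :
    IsLeadingForm w (n + n') (P * P') (Q * Q') := by
  have hQ := isWeightedHomogeneous_iff_mem_restrictSupport.mp h.homogeneous
  refine ⟨h.homogeneous.mul h'.homogeneous, ?_⟩
  rw [show P * P' - Q * Q' = (P - Q) * P' + Q * (P' - Q') by ring]
  refine add_mem (mul_mem_restrictSupport h.remainder_mem h'.mem_restrictSupport ?_)
    (mul_mem_restrictSupport hQ h'.remainder_mem ?_)
  · intro a ha b hb
    simpa using add_lt_add_of_lt_of_le ha hb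
  · intro a ha b hb
    simpa using add_lt_add_of_le_of_lt ha.le hb

theorem pow (h : IsLeadingForm w n P Q) (k : ℕ) : IsLeadingForm w (k • n) (P ^ k) (Q ^ k) := by
  induction k with
  | zero => simpa using of_homogeneous (isWeightedHomogeneous_one R w)
  | succ k ih => simpa only [pow_succ, succ_nsmul] using ih.mul h

theorem prod {κ : Type*} (s : Finset κ) {n : κ → M} {P Q : κ → MvPolynomial σ R}
    (h : ∀ i ∈ s, IsLeadingForm w (n i) (P i) (Q i)) :
    IsLeadingForm w (∑ i ∈ s, n i) (∏ i ∈ s, P i) (∏ i ∈ s, Q i) := by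
  classical
  induction s using Finset.induction_on with
  | empty => simpa using of_homogeneous (isWeightedHomogeneous_one R w)
  | insert i s hi ih =>
    simp only [Finset.sum_insert hi, Finset.prod_insert hi]
    exact (h i (Finset.mem_insert_self i s)).mul (ih fun j hj => h j (Finset.mem_insert_of_mem hj))

theorem subst_monomial {v : τ → M} {P Q : τ → MvPolynomial σ R}
    (h : ∀ i, IsLeadingForm w (v i) (P i) (Q i)) (m : τ →₀ ℕ) (c : R) :
    IsLeadingForm w (Finsupp.weight v m) (aeval P (monomial m c)) (aeval Q (monomial m c)) := by
  have hprod := prod m.support fun i _ => (h i).pow (m i)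
  have hC := of_homogeneous (isWeightedHomogeneous_C w c)
  simp only [aeval_monomial, algebraMap_eq, Finsupp.weight_apply, Finsupp.sum, Finsupp.prod]
  simpa only [zero_add] using hC.mul hprod

theorem subst {v : τ → M} {d : M} {P Q : τ → MvPolynomial σ R} {f F : MvPolynomial τ R}
    (h : ∀ i, IsLeadingForm w (v i) (P i) (Q i)) (hf : IsLeadingForm v d f F) :
    IsLeadingForm w d (aeval P f) (aeval Q F) := by
  have hF : IsLeadingForm w d (aeval P F) (aeval Q F) := by
    rw [F.as_sum, map_sum, map_sum]
    refine sum _ fun m hm => ?_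
    rw [← hf.homogeneous (mem_support_iff.mp hm)]
    exact subst_monomial h m _
  have hrest : IsLeadingForm w d (aeval P (f - F)) 0 := by
    refine zero_of_mem ?_
    rw [(f - F).as_sum, map_sum]
    refine sum_mem fun m hm => restrictSupport_mono R (fun k hk => ?_)
      (subst_monomial h m _).mem_restrictSupport
    exact lt_of_le_of_lt hk (hf.remainder_mem hm)
  simpa using hrest.add hF

end IsLeadingForm

end LeadingForm

section Deformation

variable {R S A ι : Type*} [CommRing R] [CommRing S] [Algebra R S] [CommRing A] [Algebra R A]

/-- A nontrivial one-parameter deformation of the identity of the algebra `A`: an algebra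
homomorphism `A → A[T]` which is the identity at `T = 0` but is not the inclusion of `A`.
It plays the role of an action of the additive group; no group law is imposed. -/
structure IsDeformation (φ : A →ₐ[R] Polynomial A) : Prop where
  coeff_zero : ∀ a, (φ a).coeff 0 = a
  nontrivial : ∃ a, φ a ≠ Polynomial.C a

theorem IsDeformation.eq_C_of_dvd [NoZeroDivisors A] {φ : A →ₐ[R] Polynomial A}
    (hφ : IsDeformation φ) {a b : A} (ha : a ≠ 0) (hinv : φ a = Polynomial.C a) (hba : b ∣ a) :
    φ b = Polynomial.C b := by
  have hdeg : (φ b).natDegree ≤ (Polynomial.C a).natDegree :=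
    Polynomial.natDegree_le_of_dvd (hinv ▸ map_dvd φ hba) (Polynomial.C_ne_zero.mpr ha)
  rw [Polynomial.natDegree_C, Nat.le_zero] at hdeg
  rw [Polynomial.eq_C_of_natDegree_eq_zero hdeg, hφ.coeff_zero]

theorem IsDeformation.exists_X_ne_C {φ : MvPolynomial ι R →ₐ[R] Polynomial (MvPolynomial ι R)}
    (hφ : IsDeformation φ) : ∃ i, φ (X i) ≠ Polynomial.C (X i) := by
  by_contra! h
  obtain ⟨a, ha⟩ := hφ.nontrivial
  exact ha (DFunLike.congr_fun (algHom_ext (g := Polynomial.CAlgHom) h) a)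

theorem isDeformation_of_X {φ : MvPolynomial ι R →ₐ[R] Polynomial (MvPolynomial ι R)}
    (h0 : ∀ i, (φ (X i)).coeff 0 = X i) (hne : ∃ i, φ (X i) ≠ Polynomial.C (X i)) :
    IsDeformation φ where
  coeff_zero a := by
    have h : ((Polynomial.aeval (0 : MvPolynomial ι R)).restrictScalars R).comp φ =
        AlgHom.id R _ := algHom_ext fun i => by simp [← Polynomial.coeff_zero_eq_eval_zero, h0]
    simpa [Polynomial.coeff_zero_eq_aeval_zero] using DFunLike.congr_fun h a
  nontrivial := hne.imp' X fun _ => id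

/-- The deformation `σ (X j) ↦ σ (X j) + T` fixes all the other coordinates. -/
theorem exists_isDeformation_fixing_coordinate [Nontrivial A] (σ : MvPolynomial ι R ≃ₐ[R] A)
    {i j : ι} (hij : i ≠ j) :
    ∃ φ : A →ₐ[R] Polynomial A, IsDeformation φ ∧ φ (σ (X i)) = Polynomial.C (σ (X i)) := by
  classical
  let φ₀ : MvPolynomial ι R →ₐ[R] Polynomial A :=
    aeval fun k => Polynomial.C (σ (X k)) + if k = j then Polynomial.X else 0
  refine ⟨φ₀.comp σ.symm, ⟨fun a => ?_, σ (X j), by simp [φ₀]⟩, by simp [φ₀, hij]⟩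
  have h : ((Polynomial.aeval (0 : A)).restrictScalars R).comp φ₀ = σ :=
    algHom_ext fun k => by by_cases hk : k = j <;> simp [φ₀, hk]
  simpa [Polynomial.coeff_zero_eq_aeval_zero] using DFunLike.congr_fun h (σ.symm a)

/-- The extension of `φ : R[ι] → R[ι][T]` along `R → S`. -/
def extendScalars (S : Type*) [CommRing S] [Algebra R S]
    (φ : MvPolynomial ι R →ₐ[R] Polynomial (MvPolynomial ι R)) :
    MvPolynomial ι S →ₐ[S] Polynomial (MvPolynomial ι S) :=
  aeval fun i => (φ (X i)).map (map (algebraMap R S))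

theorem extendScalars_map (φ : MvPolynomial ι R →ₐ[R] Polynomial (MvPolynomial ι R))
    (f : MvPolynomial ι R) :
    extendScalars S φ (map (algebraMap R S) f) = (φ f).map (map (algebraMap R S)) := by
  have h : (extendScalars S φ).toRingHom.comp (map (algebraMap R S)) =
      (Polynomial.mapRingHom (map (algebraMap R S))).comp φ.toRingHom :=
    MvPolynomial.ringHom_ext
      (fun r => by simp [← algebraMap_eq, Polynomial.algebraMap_apply])
      fun i => by simp [extendScalars]
  exact DFunLike.congr_fun h f

theorem isDeformation_extendScalars [FaithfulSMul R S]
    {φ : MvPolynomial ι R →ₐ[R] Polynomial (MvPolynomial ι R)} (hφ : IsDeformation φ) :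
    IsDeformation (extendScalars S φ) := by
  have hX : ∀ i, extendScalars S φ (X i) = (φ (X i)).map (map (algebraMap R S)) :=
    fun i => by simp [extendScalars]
  have hinj : Function.Injective (map (algebraMap R S) : MvPolynomial ι R → _) :=
    map_injective _ (FaithfulSMul.algebraMap_injective R S)
  refine isDeformation_of_X (fun i => by simp [hX, hφ.coeff_zero]) ?_
  obtain ⟨i, hi⟩ := hφ.exists_X_ne_C
  refine ⟨i, fun h => hi (Polynomial.map_injective _ hinj ?_)⟩
  simpa [← hX] using h

theorem weight_option_elim {M : Type*} [AddCommMonoid M] (w : ι → M) (t : M)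
    (m : Option ι →₀ ℕ) :
    Finsupp.weight (fun o : Option ι => o.elim t w) m = m none • t + Finsupp.weight w m.some := by
  simp only [Finsupp.weight_apply]
  exact m.sum_option_index_smul _

/-- The weight `t` of the new variable is the smallest of the slopes `(w i - weight m) / m none`:
it is the largest one for which no monomial of `P i` is heavier than `w i`. -/
theorem exists_parameter_weight [Finite ι] (w : ι → ℚ) {P : ι → MvPolynomial (Option ι) R}
    (h0 : ∀ i, ∀ m ∈ (P i).support, m none = 0 → Finsupp.weight w m.some ≤ w i)
    (hne : ∃ i, ∃ m ∈ (P i).support, m none ≠ 0) :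
    ∃ t : ℚ,
      (∀ i, P i ∈ restrictSupport R {m | Finsupp.weight (fun o : Option ι => o.elim t w) m ≤ w i}) ∧
      ∃ i, ∃ m ∈ (P i).support, m none ≠ 0 ∧
        Finsupp.weight (fun o : Option ι => o.elim t w) m = w i := by
  cases nonempty_fintype ι
  let S := Finset.univ.sigma fun i => {m ∈ (P i).support | m none ≠ 0}
  have hS : S.Nonempty := let ⟨i, m, hm, hk⟩ := hne; ⟨⟨i, m⟩, by simp_all [S]⟩
  obtain ⟨⟨i, m⟩, him, hmin⟩ := S.exists_min_image
    (fun q => (w q.1 - Finsupp.weight w q.2.some) / q.2 none) hS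
  obtain ⟨hm, hk⟩ : m ∈ (P i).support ∧ m none ≠ 0 := by
    simpa only [S, Finset.mem_sigma, Finset.mem_univ, true_and, Finset.mem_filter] using him
  refine ⟨(w i - Finsupp.weight w m.some) / m none, fun j n (hn : n ∈ (P j).support) => ?_,
    i, m, hm, hk, ?_⟩
  · rw [Set.mem_ofPred_eq, weight_option_elim]
    by_cases hnk : n none = 0
    · simpa [hnk] using h0 j n hn hnk
    · have hle := hmin ⟨j, n⟩ (by simp_all [S])
      rw [le_div_iff₀' (by positivity)] at hle
      rw [nsmul_eq_mul]
      linarith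
  · rw [weight_option_elim, nsmul_eq_mul, mul_div_cancel₀ _ (by exact_mod_cast hk),
      sub_add_cancel]

theorem optionEquivLeft_symm_C (f : MvPolynomial ι R) :
    (optionEquivLeft R ι).symm (Polynomial.C f) = rename some f := by
  have h : (optionEquivLeft R ι).symm.toAlgHom.comp Polynomial.CAlgHom = rename some :=
    algHom_ext fun i => by simp
  exact DFunLike.congr_fun h f

/-- The polynomial `φ (X i)` over `R[ι]` in the parameter `T`, read as a polynomial in the
variables `ι ∪ {T}`, the index `none` standing for `T`. -/
def expansion (φ : MvPolynomial ι R →ₐ[R] Polynomial (MvPolynomial ι R)) (i : ι) :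
    MvPolynomial (Option ι) R :=
  (optionEquivLeft R ι).symm (φ (X i))

theorem coeff_expansion (φ : MvPolynomial ι R →ₐ[R] Polynomial (MvPolynomial ι R)) (i : ι)
    (m : Option ι →₀ ℕ) :
    coeff m (expansion φ i) = coeff m.some ((φ (X i)).coeff (m none)) := by
  rw [expansion, ← optionEquivLeft_coeff_some_coeff_none, AlgEquiv.apply_symm_apply]

theorem aeval_expansion (φ : MvPolynomial ι R →ₐ[R] Polynomial (MvPolynomial ι R))
    (f : MvPolynomial ι R) : aeval (expansion φ) f = (optionEquivLeft R ι).symm (φ f) := by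
  have h : aeval (expansion φ) = (optionEquivLeft R ι).symm.toAlgHom.comp φ :=
    algHom_ext fun i => by simp [expansion]
  exact DFunLike.congr_fun h f

theorem IsDeformation.weight_le_of_mem_support_expansion
    {φ : MvPolynomial ι R →ₐ[R] Polynomial (MvPolynomial ι R)} (hφ : IsDeformation φ)
    (w : ι → ℚ) {i : ι} {m : Option ι →₀ ℕ} (hm : m ∈ (expansion φ i).support)
    (hk : m none = 0) : Finsupp.weight w m.some ≤ w i := by
  rw [mem_support_iff, coeff_expansion, hk, hφ.coeff_zero] at hm
  exact (isWeightedHomogeneous_X R w i hm).le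

theorem IsDeformation.exists_mem_support_expansion
    {φ : MvPolynomial ι R →ₐ[R] Polynomial (MvPolynomial ι R)} (hφ : IsDeformation φ) :
    ∃ i, ∃ m ∈ (expansion φ i).support, m none ≠ 0 := by
  obtain ⟨i, hi⟩ := hφ.exists_X_ne_C
  refine ⟨i, ?_⟩
  by_contra! h
  refine hi (Polynomial.ext fun k => ?_)
  rcases Nat.eq_zero_or_pos k with rfl | hk
  · rw [hφ.coeff_zero, Polynomial.coeff_C_zero]
  · rw [Polynomial.coeff_C_of_ne_zero hk.ne']
    ext m
    by_contra hne
    have hm := h (m.optionElim k) (by simpa [coeff_expansion] using hne)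
    rw [Finsupp.optionElim_apply_none] at hm
    exact hk.ne' hm

/-- The leading form of the deformation `φ`, when `T` has weight `t`. -/
def leadingHom (w : ι → ℚ) (t : ℚ) (φ : MvPolynomial ι R →ₐ[R] Polynomial (MvPolynomial ι R)) :
    MvPolynomial ι R →ₐ[R] Polynomial (MvPolynomial ι R) :=
  (optionEquivLeft R ι).toAlgHom.comp <| aeval fun i =>
    weightedHomogeneousComponent (fun o : Option ι => o.elim t w) (w i) (expansion φ i)

theorem coeff_coeff_leadingHom_X (w : ι → ℚ) (t : ℚ)
    (φ : MvPolynomial ι R →ₐ[R] Polynomial (MvPolynomial ι R)) (i : ι) (k : ℕ) (m : ι →₀ ℕ) :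
    coeff m ((leadingHom w t φ (X i)).coeff k) =
      if k • t + Finsupp.weight w m = w i then coeff m ((φ (X i)).coeff k) else 0 := by
  have h := optionEquivLeft_coeff_some_coeff_none (R := R) ι (m.optionElim k)
    (weightedHomogeneousComponent (fun o : Option ι => o.elim t w) (w i) (expansion φ i))
  rw [coeff_weightedHomogeneousComponent, weight_option_elim, coeff_expansion,
    Finsupp.some_optionElim, Finsupp.optionElim_apply_none] at h
  simpa [leadingHom] using h

theorem isDeformation_leadingHom {w : ι → ℚ} {t : ℚ}
    {φ : MvPolynomial ι R →ₐ[R] Polynomial (MvPolynomial ι R)} (hφ : IsDeformation φ)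
    (ht : ∃ i, ∃ m ∈ (expansion φ i).support, m none ≠ 0 ∧
      Finsupp.weight (fun o : Option ι => o.elim t w) m = w i) :
    IsDeformation (leadingHom w t φ) := by
  refine isDeformation_of_X (fun i => ?_) ?_
  · ext m
    rw [coeff_coeff_leadingHom_X, hφ.coeff_zero, zero_smul, zero_add]
    split_ifs with h
    · rfl
    · by_contra hne
      exact h (isWeightedHomogeneous_X R w i (Ne.symm hne))
  · obtain ⟨i, m, hm, hk, hw⟩ := ht
    rw [weight_option_elim] at hw
    rw [mem_support_iff, coeff_expansion] at hm
    refine ⟨i, fun h => hm ?_⟩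
    have hcoeff := coeff_coeff_leadingHom_X w t φ i (m none) m.some
    rwa [if_pos hw, h, Polynomial.coeff_C_of_ne_zero hk, MvPolynomial.coeff_zero, eq_comm] at hcoeff

theorem leadingHom_eq_C {w : ι → ℚ} {t d : ℚ}
    {φ : MvPolynomial ι R →ₐ[R] Polynomial (MvPolynomial ι R)} {f F : MvPolynomial ι R}
    (ht : ∀ i, expansion φ i ∈
      restrictSupport R {m | Finsupp.weight (fun o : Option ι => o.elim t w) m ≤ w i})
    (hf : φ f = Polynomial.C f) (hF : IsLeadingForm w d f F) :
    leadingHom w t φ F = Polynomial.C F := by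
  have hφ := hF.subst fun i => IsLeadingForm.of_component (ht i)
  have hC : IsLeadingForm (fun o : Option ι => o.elim t w) d (rename some f) (rename some F) := by
    simpa only [rename_eq_aeval] using hF.subst (P := X ∘ some) (Q := X ∘ some) fun i =>
      IsLeadingForm.of_homogeneous (isWeightedHomogeneous_X R _ (some i))
  rw [aeval_expansion, hf, optionEquivLeft_symm_C] at hφ
  have hF' := hφ.unique hC
  rw [← optionEquivLeft_symm_C, AlgEquiv.eq_symm_apply] at hF'
  exact hF'

/-- `ψ` is the leading form of `φ` when `T` is given the largest weight for which `φ` does not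
raise weights. -/
theorem IsDeformation.exists_fixing_leadingForm [Finite ι]
    {φ : MvPolynomial ι R →ₐ[R] Polynomial (MvPolynomial ι R)} (hφ : IsDeformation φ)
    {w : ι → ℚ} {d : ℚ} {f F : MvPolynomial ι R} (hf : φ f = Polynomial.C f)
    (hF : IsLeadingForm w d f F) :
    ∃ ψ : MvPolynomial ι R →ₐ[R] Polynomial (MvPolynomial ι R),
      IsDeformation ψ ∧ ψ F = Polynomial.C F := by
  obtain ⟨t, hle, heq⟩ := exists_parameter_weight w
    (fun _ _ => hφ.weight_le_of_mem_support_expansion w) hφ.exists_mem_support_expansion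
  exact ⟨leadingHom w t φ, isDeformation_leadingHom hφ heq, leadingHom_eq_C hle hf hF⟩

end Deformation

section Newton

variable {R ι : Type*} [CommRing R]

theorem weight_vecCons_fin_two {M : Type*} [AddCommMonoid M] (u v : M) (m : Fin 2 →₀ ℕ) :
    Finsupp.weight ![u, v] m = m 0 • u + m 1 • v := by
  simp [Finsupp.weight_eq_sum]

theorem exists_mem_support_eq_degreeOf {f : MvPolynomial ι R} (hf : f ≠ 0) (i : ι) :
    ∃ m ∈ f.support, m i = degreeOf i f := by
  obtain ⟨m, hm, h⟩ := f.support.exists_mem_eq_sup (support_nonempty.mpr hf) fun m => m i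
  exact ⟨m, hm, (h.symm.trans (degreeOf_eq_sup i f).symm)⟩

theorem IsDeformation.exists_mem_support_apply_eq_zero [IsDomain R]
    {φ : MvPolynomial ι R →ₐ[R] Polynomial (MvPolynomial ι R)} (hφ : IsDeformation φ)
    {F : MvPolynomial ι R} (hF : F ≠ 0) (hinv : φ F = Polynomial.C F) :
    ∃ i, ∃ m ∈ F.support, m i = 0 := by
  by_contra! h
  obtain ⟨i, hi⟩ := hφ.exists_X_ne_C
  refine hi (hφ.eq_C_of_dvd hF hinv ?_)
  rw [F.as_sum]
  exact Finset.dvd_sum fun m hm => X_dvd_monomial.mpr (Or.inr (h i m hm))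

/-- The part of `f` of largest weight is an invariant of a deformation too, hence has a monomial on
one of the axes, where the bound is clear. -/
theorem IsDeformation.mem_restrictSupport_newton [IsDomain R]
    {φ : MvPolynomial (Fin 2) R →ₐ[R] Polynomial (MvPolynomial (Fin 2) R)} (hφ : IsDeformation φ)
    {f : MvPolynomial (Fin 2) R} (hinv : φ f = Polynomial.C f) {a b : ℕ}
    (ha : degreeOf 0 f ≤ a) (hb : degreeOf 1 f ≤ b) :
    f ∈ restrictSupport R {m | Finsupp.weight ![(b : ℚ), a] m ≤ a * b} := by
  intro m (hm : m ∈ f.support)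
  have hf : f ≠ 0 := support_nonempty.mp ⟨m, hm⟩
  obtain ⟨n, hn, hmax⟩ := f.support.exists_max_image (Finsupp.weight ![(b : ℚ), a])
    (support_nonempty.mpr hf)
  have hlead := IsLeadingForm.of_component
    (show f ∈ restrictSupport R {k | Finsupp.weight ![(b : ℚ), a] k ≤ _} from hmax)
  obtain ⟨ψ, hψ, hψF⟩ := hφ.exists_fixing_leadingForm hinv hlead
  have hF : weightedHomogeneousComponent ![(b : ℚ), a] (Finsupp.weight ![(b : ℚ), a] n) f ≠ 0 := by
    rw [← support_nonempty, support_weightedHomogeneousComponent]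
    exact ⟨n, Finset.mem_filter.mpr ⟨hn, rfl⟩⟩
  obtain ⟨i, k, hk, hki⟩ := hψ.exists_mem_support_apply_eq_zero hF hψF
  rw [support_weightedHomogeneousComponent, Finset.mem_filter] at hk
  refine (hmax m hm).trans (hk.2.symm.trans_le ?_)
  have hk0 : (k 0 : ℚ) ≤ a := by exact_mod_cast (monomial_le_degreeOf 0 hk.1).trans ha
  have hk1 : (k 1 : ℚ) ≤ b := by exact_mod_cast (monomial_le_degreeOf 1 hk.1).trans hb
  rw [weight_vecCons_fin_two, nsmul_eq_mul, nsmul_eq_mul]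
  fin_cases i <;> simp only [Fin.zero_eta, Fin.mk_one] at hki <;>
    simp only [hki, Nat.cast_zero, zero_mul, zero_add, add_zero]
  · nlinarith
  · nlinarith

theorem IsDeformation.exists_isLeadingForm_newton [IsDomain R]
    {φ : MvPolynomial (Fin 2) R →ₐ[R] Polynomial (MvPolynomial (Fin 2) R)} (hφ : IsDeformation φ)
    {f : MvPolynomial (Fin 2) R} (hinv : φ f = Polynomial.C f)
    (h0 : 0 < degreeOf 0 f) (h1 : 0 < degreeOf 1 f) :
    ∃ F, IsLeadingForm ![(degreeOf 1 f : ℚ), degreeOf 0 f] (degreeOf 0 f * degreeOf 1 f) f F ∧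
      coeff (.single 0 (degreeOf 0 f)) F ≠ 0 ∧ coeff (.single 1 (degreeOf 1 f)) F ≠ 0 ∧
      ∃ ψ : MvPolynomial (Fin 2) R →ₐ[R] Polynomial (MvPolynomial (Fin 2) R),
        IsDeformation ψ ∧ ψ F = Polynomial.C F := by
  have hf : f ≠ 0 := by rintro rfl; simp at h0
  have htri := hφ.mem_restrictSupport_newton hinv le_rfl le_rfl
  have hlead := IsLeadingForm.of_component htri
  have hle : ∀ m ∈ f.support, (m 0 * degreeOf 1 f + m 1 * degreeOf 0 f : ℚ) ≤
      degreeOf 0 f * degreeOf 1 f := fun m hm => by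
    simpa only [Set.mem_ofPred_eq, weight_vecCons_fin_two, nsmul_eq_mul] using htri hm
  obtain ⟨m, hm, hm0⟩ := exists_mem_support_eq_degreeOf hf 0
  obtain ⟨n, hn, hn1⟩ := exists_mem_support_eq_degreeOf hf 1
  have hm1 : m 1 = 0 := by
    have := hle m hm
    rw [hm0, add_le_iff_nonpos_right] at this
    norm_cast at this
    exact (mul_eq_zero.mp (Nat.le_zero.mp this)).resolve_right h0.ne'
  have hn0 : n 0 = 0 := by
    have := hle n hn
    rw [hn1, mul_comm (degreeOf 1 f : ℚ), add_le_iff_nonpos_left] at this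
    norm_cast at this
    exact (mul_eq_zero.mp (Nat.le_zero.mp this)).resolve_right h1.ne'
  have hm' : m = .single 0 (degreeOf 0 f) := by
    ext i; fin_cases i <;> simp [hm0, hm1]
  have hn' : n = .single 1 (degreeOf 1 f) := by
    ext i; fin_cases i <;> simp [hn0, hn1]
  refine ⟨_, hlead, ?_, ?_, hφ.exists_fixing_leadingForm hinv hlead⟩
  · rw [coeff_weightedHomogeneousComponent, if_pos (by simp [weight_vecCons_fin_two])]
    exact mem_support_iff.mp (hm' ▸ hm)
  · rw [coeff_weightedHomogeneousComponent, if_pos (by simp [weight_vecCons_fin_two, mul_comm])]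
    exact mem_support_iff.mp (hn' ▸ hn)

end Newton

section Jacobian

variable {R B : Type*} [CommRing R] [CommRing B] [Algebra R B]

/-- The derivation of `B[T]` acting as `D` on each coefficient. -/
def coeffDerivation (D : Derivation R B B) : Derivation R (Polynomial B) (Polynomial B) :=
  (PolynomialModule.equivPolynomialSelf (R := B)).toLinearMap.compDer D.mapCoeffs

theorem coeff_coeffDerivation (D : Derivation R B B) (P : Polynomial B) (k : ℕ) :
    (coeffDerivation D P).coeff k = D (P.coeff k) := rfl

theorem coeffDerivation_C (D : Derivation R B B) (b : B) :
    coeffDerivation D (Polynomial.C b) = Polynomial.C (D b) := by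
  ext k
  simp only [coeff_coeffDerivation, Polynomial.coeff_C]
  split_ifs <;> simp

theorem natDegree_coeffDerivation_le (D : Derivation R B B) (P : Polynomial B) :
    (coeffDerivation D P).natDegree ≤ P.natDegree :=
  Polynomial.natDegree_le_iff_coeff_eq_zero.mpr fun n hn => by
    rw [coeff_coeffDerivation, Polynomial.coeff_eq_zero_of_natDegree_lt hn, map_zero]

/-- The Jacobian determinant of `x` and `y` for the coefficientwise derivations given by `D₀` and
`D₁`. -/
def coeffJacobian (D₀ D₁ : Derivation R B B) (x y : Polynomial B) : Polynomial B :=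
  coeffDerivation D₀ x * coeffDerivation D₁ y - coeffDerivation D₁ x * coeffDerivation D₀ y

theorem coeffJacobian_swap (D₀ D₁ : Derivation R B B) (x y : Polynomial B) :
    coeffJacobian D₀ D₁ y x = -coeffJacobian D₀ D₁ x y := by
  simp only [coeffJacobian]; ring

theorem mul_coeffJacobian_eq {D₀ D₁ : Derivation R B B} {x y : Polynomial B} {l : R} {c : B}
    {m n : ℕ} (h : y ^ n - l • x ^ m = Polynomial.C c) :
    (n * y ^ (n - 1) : Polynomial B) * coeffJacobian D₀ D₁ x y =
      coeffDerivation D₀ x * Polynomial.C (D₁ c) - coeffDerivation D₁ x * Polynomial.C (D₀ c) := by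
  have hD : ∀ D : Derivation R B B, Polynomial.C (D c) =
      n * y ^ (n - 1) * coeffDerivation D y -
        l • (m * x ^ (m - 1)) * coeffDerivation D x := fun D => by
    rw [← coeffDerivation_C, ← h, map_sub, Derivation.map_smul, Derivation.leibniz_pow,
      Derivation.leibniz_pow]
    simp only [nsmul_eq_mul, smul_eq_mul, smul_mul_assoc, mul_assoc]
  rw [hD, hD, coeffJacobian]
  ring

theorem mul_natDegree_le_of_coeffJacobian_ne_zero [IsDomain B] {D₀ D₁ : Derivation R B B}
    {x y : Polynomial B} {l : R} {c : B} {m n : ℕ} (h : y ^ n - l • x ^ m = Polynomial.C c)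
    (hJ : coeffJacobian D₀ D₁ x y ≠ 0) (hn : (n : B) ≠ 0) :
    (n - 1) * y.natDegree ≤ x.natDegree := by
  rcases eq_or_ne y 0 with rfl | hy
  · simp
  have hn' : (n : Polynomial B) ≠ 0 := by
    rw [← Polynomial.C_eq_natCast]; exact Polynomial.C_ne_zero.mpr hn
  have hdeg := congrArg Polynomial.natDegree (mul_coeffJacobian_eq (D₀ := D₀) (D₁ := D₁) h)
  rw [Polynomial.natDegree_mul (mul_ne_zero hn' (pow_ne_zero _ hy)) hJ,
    Polynomial.natDegree_mul hn' (pow_ne_zero _ hy), Polynomial.natDegree_pow] at hdeg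
  have hle : ∀ (D : Derivation R B B) (b : B),
      (coeffDerivation D x * Polynomial.C b).natDegree ≤ x.natDegree := fun D _ =>
    (Polynomial.natDegree_mul_C_le _ _).trans (natDegree_coeffDerivation_le D x)
  have := (Polynomial.natDegree_sub_le _ _).trans (max_le (hle D₀ (D₁ c)) (hle D₁ (D₀ c)))
  omega

end Jacobian

section CoprimeExponents

variable {L B : Type*} [Field L] [CommRing B] [IsDomain B] [Algebra L B]

theorem eq_one_or_eq_one_of_coeffJacobian_ne_zero {D₀ D₁ : Derivation L B B}
    {x y : Polynomial B} {l : L} {c : B} {m n : ℕ} (h : y ^ n - l • x ^ m = Polynomial.C c)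
    (hJ : coeffJacobian D₀ D₁ x y ≠ 0) (hl : l ≠ 0) (hmn : m.Coprime n) (hn : (n : B) ≠ 0)
    (hm : 0 < m) (hx : 0 < x.natDegree ∨ 0 < y.natDegree) : m = 1 ∨ n = 1 := by
  have hn0 : 0 < n := Nat.pos_of_ne_zero (by rintro rfl; simp at hn)
  have hdeg : n * y.natDegree = m * x.natDegree := by
    rw [← Polynomial.natDegree_pow, ← Polynomial.natDegree_pow, sub_eq_iff_eq_add'.mp h,
      Polynomial.natDegree_add_C, Polynomial.natDegree_smul _ hl]
  have hle := mul_natDegree_le_of_coeffJacobian_ne_zero h hJ hn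
  have hx : 0 < x.natDegree := by
    refine hx.elim id fun hy => Nat.pos_of_mul_pos_left (a := m) ?_
    exact hdeg ▸ Nat.mul_pos hn0 hy
  by_contra! hne
  obtain ⟨n, rfl⟩ : ∃ k, n = k + 2 := ⟨n - 2, by omega⟩
  obtain ⟨m, rfl⟩ : ∃ k, m = k + 2 := ⟨m - 2, by omega⟩
  have hprod : (n + 1) * (m + 2) ≤ n + 2 := by
    refine Nat.le_of_mul_le_mul_right ?_ hx
    calc (n + 1) * (m + 2) * x.natDegree = (n + 2) * ((n + 1) * y.natDegree) := by
          linear_combination (n + 1) * hdeg.symm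
      _ ≤ (n + 2) * x.natDegree := Nat.mul_le_mul_left _ hle
  obtain ⟨rfl, rfl⟩ : m = 0 ∧ n = 0 := by constructor <;> nlinarith
  simp at hmn

end CoprimeExponents

theorem IsDeformation.eq_one_or_eq_one {L : Type*} [Field L]
    {φ : MvPolynomial (Fin 2) L →ₐ[L] Polynomial (MvPolynomial (Fin 2) L)} (hφ : IsDeformation φ)
    {l : L} (hl : l ≠ 0) {m n : ℕ} (hmn : m.Coprime n) (hm : 0 < m) (hn : 0 < n)
    (hinv : φ (X 1 ^ n - l • X 0 ^ m) = Polynomial.C (X 1 ^ n - l • X 0 ^ m)) :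
    m = 1 ∨ n = 1 := by
  rw [map_sub, map_smul, map_pow, map_pow] at hinv
  have hJ : coeffJacobian (pderiv 0) (pderiv 1) (φ (X 0)) (φ (X 1)) ≠ 0 := fun h => by
    have := congrArg (Polynomial.coeff · 0) h
    simp [coeffJacobian, Polynomial.mul_coeff_zero, coeff_coeffDerivation, hφ.coeff_zero] at this
  have hdeg : 0 < (φ (X 0)).natDegree ∨ 0 < (φ (X 1)).natDegree := by
    obtain ⟨i, hi⟩ := hφ.exists_X_ne_C
    have : 0 < (φ (X i)).natDegree := Nat.pos_of_ne_zero fun h => hi <| by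
      rw [Polynomial.eq_C_of_natDegree_eq_zero h, hφ.coeff_zero]
    fin_cases i
    exacts [.inl this, .inr this]
  by_cases hn0 : (n : MvPolynomial (Fin 2) L) = 0
  · have hm0 : (m : MvPolynomial (Fin 2) L) ≠ 0 := fun hm0 => by
      have := hmn.isCoprime.map (Int.castRingHom (MvPolynomial (Fin 2) L))
      simp [hm0, hn0, isCoprime_zero_left] at this
    have hinv' : φ (X 0) ^ m - l⁻¹ • φ (X 1) ^ n =
        Polynomial.C (-l⁻¹ • (X 1 ^ n - l • X 0 ^ m)) := by
      rw [← Polynomial.smul_C, ← hinv, smul_sub, neg_smul, neg_smul, inv_smul_smul₀ hl]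
      ring
    have hJ' := neg_ne_zero.mpr hJ
    rw [← coeffJacobian_swap] at hJ'
    exact (eq_one_or_eq_one_of_coeffJacobian_ne_zero hinv' hJ' (inv_ne_zero hl)
      hmn.symm hm0 hn hdeg.symm).symm
  · exact eq_one_or_eq_one_of_coeffJacobian_ne_zero hinv hJ hl hmn hn0 hm hdeg

section EdgeForm

theorem sub_smul_dvd_sum {R A : Type*} [CommRing R] [CommRing A] [Algebra R A] {c : ℕ → R} {k : ℕ}
    {l : R} (hl : ∑ j ∈ Finset.range (k + 1), c j * l ^ j = 0) (u v : A) :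
    u - l • v ∣ ∑ j ∈ Finset.range (k + 1), c j • (u ^ j * v ^ (k - j)) := by
  have hzero : ∑ j ∈ Finset.range (k + 1), c j • ((l • v) ^ j * v ^ (k - j)) = 0 := by
    rw [← zero_smul R (v ^ k), ← hl, Finset.sum_smul]
    refine Finset.sum_congr rfl fun j hj => ?_
    rw [smul_pow, smul_mul_assoc, ← pow_add, Nat.add_sub_cancel' (Finset.mem_range_succ_iff.mp hj),
      mul_smul]
  rw [← sub_zero (∑ j ∈ _, _), ← hzero, ← Finset.sum_sub_distrib]
  refine Finset.dvd_sum fun j _ => ?_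
  rw [← smul_sub, ← sub_mul]
  exact dvd_smul_of_dvd _ ((sub_dvd_pow_sub_pow u (l • v) j).mul_right _)

theorem exists_ne_zero_sum_eq_zero {L : Type*} [Field L] [IsAlgClosed L] {c : ℕ → L} {k : ℕ}
    (hk : 0 < k) (h0 : c 0 ≠ 0) (hck : c k ≠ 0) :
    ∃ l, l ≠ 0 ∧ ∑ j ∈ Finset.range (k + 1), c j * l ^ j = 0 := by
  let g : Polynomial L := ∑ j ∈ Finset.range (k + 1), Polynomial.C (c j) * Polynomial.X ^ j
  have hcoeff : ∀ i ≤ k, g.coeff i = c i := fun i hi => by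
    simp [g, Polynomial.coeff_X_pow, hi]
  have hdeg : g.degree ≠ 0 := fun h => by
    refine hck ?_
    rw [← hcoeff k le_rfl]
    exact Polynomial.coeff_eq_zero_of_degree_lt (by rw [h]; exact_mod_cast hk)
  obtain ⟨l, hl⟩ := IsAlgClosed.exists_root g hdeg
  refine ⟨l, ?_, by simpa [g, Polynomial.IsRoot, Polynomial.eval_finsetSum] using hl⟩
  rintro rfl
  rw [Polynomial.IsRoot, ← Polynomial.coeff_zero_eq_eval_zero, hcoeff 0 hk.le] at hl
  exact h0 hl

theorem exists_eq_mul_sub_and_eq_mul {m n k a b : ℕ} (hm : 0 < m) (hn : 0 < n) (hmn : m.Coprime n)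
    (h : a * n + b * m = m * n * k) : ∃ j ≤ k, a = m * (k - j) ∧ b = n * j := by
  obtain ⟨j, rfl⟩ : n ∣ b := hmn.symm.dvd_of_dvd_mul_right <|
    (Nat.dvd_add_right (Dvd.intro_left a rfl)).mp (h ▸ Dvd.dvd.mul_right ⟨m, mul_comm m n⟩ k)
  have hj : a + m * j = m * k := by
    refine Nat.eq_of_mul_eq_mul_right hn ?_
    linarith
  refine ⟨j, Nat.le_of_mul_le_mul_left (by omega) hm, ?_, rfl⟩
  rw [Nat.mul_sub, ← hj, Nat.add_sub_cancel]

variable {R : Type*} [CommRing R]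

/-- The monomials on a line of slope `-n / m` with `m`, `n` coprime and with a lattice point on each
axis are the products of powers of `X ^ m` and `Y ^ n`. -/
theorem eq_sum_of_isWeightedHomogeneous {m n k : ℕ} (hm : 0 < m) (hn : 0 < n) (hk : 0 < k)
    (hmn : m.Coprime n) {F : MvPolynomial (Fin 2) R}
    (hF : IsWeightedHomogeneous ![((n * k : ℕ) : ℚ), (m * k : ℕ)] F ((m * k : ℕ) * (n * k : ℕ))) :
    F = ∑ j ∈ Finset.range (k + 1),
      coeff (.single 0 (m * (k - j)) + .single 1 (n * j)) F •
        ((X 1 ^ n) ^ j * (X 0 ^ m) ^ (k - j)) := by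
  have hmono : ∀ j, (X 1 ^ n) ^ j * (X 0 ^ m) ^ (k - j) =
      monomial (R := R) (.single 0 (m * (k - j)) + .single (1 : Fin 2) (n * j)) 1 := fun j => by
    rw [← mul_one (1 : R), ← monomial_mul, ← X_pow_eq_monomial, ← X_pow_eq_monomial, pow_mul,
      pow_mul, mul_comm]
  simp only [hmono, smul_monomial, smul_eq_mul, mul_one]
  have hinj : Set.InjOn (fun j => Finsupp.single (0 : Fin 2) (m * (k - j)) + .single 1 (n * j))
      (Finset.range (k + 1) : Set ℕ) := fun i _ j _ h => by
    have := DFunLike.congr_fun h 1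
    simpa [hn.ne'] using this
  rw [← Finset.sum_image (f := fun e => monomial e (coeff e F)) hinj]
  conv_lhs => rw [F.as_sum]
  refine Finset.sum_subset (fun e he => ?_) fun e _ he => by simpa using he
  have hw := hF (mem_support_iff.mp he)
  rw [weight_vecCons_fin_two, nsmul_eq_mul, nsmul_eq_mul] at hw
  have hw : e 0 * n + e 1 * m = m * n * k := by
    refine Nat.eq_of_mul_eq_mul_right hk ?_
    have : e 0 * (n * k) + e 1 * (m * k) = m * k * (n * k) := by exact_mod_cast hw
    linarith
  obtain ⟨j, hj, h0, h1⟩ := exists_eq_mul_sub_and_eq_mul hm hn hmn hw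
  refine Finset.mem_image.mpr ⟨j, Finset.mem_range_succ_iff.mpr hj, ?_⟩
  ext i
  fin_cases i <;> simp [h0, h1]

end EdgeForm

section EdgeInvariance

variable {K : Type*} [Field K]

/-- Over `L` the form `F` splits into binomials, which are factors of an invariant. -/
theorem IsDeformation.exists_root_of_edge_form (L : Type*) [Field L] [IsAlgClosed L] [Algebra K L]
    {φ : MvPolynomial (Fin 2) K →ₐ[K] Polynomial (MvPolynomial (Fin 2) K)} (hφ : IsDeformation φ)
    {F : MvPolynomial (Fin 2) K} (hinv : φ F = Polynomial.C F) {m n k : ℕ} (hk : 0 < k)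
    {c : ℕ → K} (hF : F = ∑ j ∈ Finset.range (k + 1), c j • ((X 1 ^ n) ^ j * (X 0 ^ m) ^ (k - j)))
    (hF0 : F ≠ 0) (hc0 : c 0 ≠ 0) (hck : c k ≠ 0) :
    ∃ l : L, l ≠ 0 ∧ ∑ j ∈ Finset.range (k + 1), algebraMap K L (c j) * l ^ j = 0 ∧
      extendScalars L φ (X 1 ^ n - l • X 0 ^ m) = Polynomial.C (X 1 ^ n - l • X 0 ^ m) := by
  have hinj : Function.Injective (map (algebraMap K L) : MvPolynomial (Fin 2) K → _) :=
    map_injective _ (algebraMap K L).injective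
  obtain ⟨l, hl0, hl⟩ := exists_ne_zero_sum_eq_zero (c := fun j => algebraMap K L (c j)) hk
    (by simpa using hc0) (by simpa using hck)
  refine ⟨l, hl0, hl, (isDeformation_extendScalars hφ).eq_C_of_dvd
    (a := map (algebraMap K L) F) ?_ ?_ ?_⟩
  · exact (map_ne_zero_iff _ hinj).mpr hF0
  · rw [extendScalars_map, hinv, Polynomial.map_C]
  · convert sub_smul_dvd_sum hl (X 1 ^ n) (X 0 ^ m : MvPolynomial (Fin 2) L)
    rw [hF, map_sum]
    exact Finset.sum_congr rfl fun j _ => by simp [smul_eq_C_mul, -algebraMap_smul]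

theorem mem_range_algebraMap_of_map_eq_smul_map {L ι : Type*} [Field L] [Algebra K L]
    {u v : MvPolynomial ι K} {l : L} (hu : u ≠ 0)
    (h : map (algebraMap K L) u = l • map (algebraMap K L) v) : l ∈ (algebraMap K L).range := by
  obtain ⟨m, hm⟩ := ne_zero_iff.mp hu
  have hm' : algebraMap K L (coeff m u) = l * algebraMap K L (coeff m v) := by
    rw [← coeff_map, ← coeff_map, h, coeff_smul, smul_eq_mul]
  have hv : algebraMap K L (coeff m v) ≠ 0 := fun hv => by simp [hv, hm] at hm'
  exact ⟨coeff m u / coeff m v, by rw [map_div₀, hm', mul_div_cancel_right₀ _ hv]⟩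

/-- The scalar is read off a coefficient at a positive power of `T`, where the invariance of
`Y - l X ^ m` equates the two terms. -/
theorem IsDeformation.mem_range_algebraMap {L : Type*} [Field L] [Algebra K L]
    {φ : MvPolynomial (Fin 2) K →ₐ[K] Polynomial (MvPolynomial (Fin 2) K)} (hφ : IsDeformation φ)
    {m : ℕ} (hm : 0 < m) {l : L} (hl : l ≠ 0)
    (hinv : extendScalars L φ (X 1 - l • X 0 ^ m) = Polynomial.C (X 1 - l • X 0 ^ m)) :
    l ∈ (algebraMap K L).range := by
  set ψ := extendScalars L φ
  have hψ : IsDeformation ψ := isDeformation_extendScalars hφ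
  have hX : ∀ i, ψ (X i) = (φ (X i)).map (map (algebraMap K L)) := fun i => by
    simpa using extendScalars_map (S := L) φ (X i)
  have hY : φ (X 1) ≠ Polynomial.C (X 1) := fun hY => by
    have hY' : ψ (X 1) = Polynomial.C (X 1) := by simp [hX, hY]
    have hpow : ψ (l • X 0 ^ m) = Polynomial.C (l • X 0 ^ m) := by
      rwa [map_sub, Polynomial.C_sub, hY', sub_right_inj] at hinv
    have hX' : ψ (X 0) = Polynomial.C (X 0) := hψ.eq_C_of_dvd
      (smul_ne_zero hl (pow_ne_zero m (X_ne_zero 0))) hpow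
      (dvd_smul_of_dvd l (dvd_pow_self _ hm.ne'))
    obtain ⟨i, hi⟩ := hψ.exists_X_ne_C
    fin_cases i
    exacts [hi hX', hi hY']
  obtain ⟨k, hk⟩ : ∃ k, (φ (X 1)).coeff k ≠ (Polynomial.C (X 1)).coeff k := by
    simpa [Polynomial.ext_iff] using hY
  have hk0 : k ≠ 0 := fun hk0 => hk (by rw [hk0, hφ.coeff_zero, Polynomial.coeff_C_zero])
  rw [Polynomial.coeff_C_of_ne_zero hk0] at hk
  refine mem_range_algebraMap_of_map_eq_smul_map (v := (φ (X 0) ^ m).coeff k) hk ?_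
  have := congrArg (Polynomial.coeff · k) hinv
  simpa only [map_sub, map_smul, map_pow, hX, ← Polynomial.map_pow, Polynomial.coeff_sub,
    Polynomial.coeff_smul, Polynomial.coeff_map, Polynomial.coeff_C_of_ne_zero hk0, sub_zero,
    sub_eq_zero]
    using this

theorem IsDeformation.edge_form
    {φ : MvPolynomial (Fin 2) K →ₐ[K] Polynomial (MvPolynomial (Fin 2) K)} (hφ : IsDeformation φ)
    {F : MvPolynomial (Fin 2) K} (hinv : φ F = Polynomial.C F) {m n k : ℕ}
    (hm : 0 < m) (hn : 0 < n) (hk : 0 < k) (hmn : m.Coprime n)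
    (hF : IsWeightedHomogeneous ![((n * k : ℕ) : ℚ), (m * k : ℕ)] F ((m * k : ℕ) * (n * k : ℕ)))
    (h0 : coeff (.single 0 (m * k)) F ≠ 0) (h1 : coeff (.single 1 (n * k)) F ≠ 0) :
    (m = 1 ∨ n = 1) ∧ (n = 1 → ∃ l : K, X 1 - l • X 0 ^ m ∣ F) := by
  have hsum := eq_sum_of_isWeightedHomogeneous hm hn hk hmn hF
  obtain ⟨l, hl0, hl, hlinv⟩ := hφ.exists_root_of_edge_form (AlgebraicClosure K) hinv hk hsum
    (fun h => h0 (by rw [h, MvPolynomial.coeff_zero])) (by simpa using h0) (by simpa using h1)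
  refine ⟨(isDeformation_extendScalars hφ).eq_one_or_eq_one hl0 hmn hm hn hlinv, ?_⟩
  rintro rfl
  simp only [pow_one] at hlinv hsum
  obtain ⟨l, rfl⟩ := hφ.mem_range_algebraMap hm hl0 hlinv
  refine ⟨l, ?_⟩
  rw [hsum]
  refine sub_smul_dvd_sum ((algebraMap K (AlgebraicClosure K)).injective ?_) (X 1) (X 0 ^ m)
  simpa using hl

end EdgeInvariance

section Automorphisms

variable {R : Type*} [CommRing R]

theorem algHom_ext_fin_two {A : Type*} [CommSemiring A] [Algebra R A]
    {φ ψ : MvPolynomial (Fin 2) R →ₐ[R] A} (h0 : φ (X 0) = ψ (X 0)) (h1 : φ (X 1) = ψ (X 1)) :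
    φ = ψ :=
  algHom_ext fun i => by
    fin_cases i
    exacts [h0, h1]

theorem algEquiv_ext_fin_two {σ τ : MvPolynomial (Fin 2) R ≃ₐ[R] MvPolynomial (Fin 2) R}
    (h0 : σ (X 0) = τ (X 0)) (h1 : σ (X 1) = τ (X 1)) : σ = τ :=
  AlgEquiv.coe_toAlgHom_injective (algHom_ext_fin_two h0 h1)

@[simp] theorem algEquiv_apply_C {ι : Type*} (σ : MvPolynomial ι R ≃ₐ[R] MvPolynomial ι R)
    (c : R) : σ (C c) = C c :=
  σ.commutes c

/-- The automorphism `X ↦ X`, `Y ↦ Y + f(X)`, denoted `φ_f` in the paper. -/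
def shear (f : Polynomial R) : MvPolynomial (Fin 2) R ≃ₐ[R] MvPolynomial (Fin 2) R :=
  AlgEquiv.ofAlgHom (aeval ![X 0, X 1 + Polynomial.aeval (X 0) f])
    (aeval ![X 0, X 1 - Polynomial.aeval (X 0) f])
    (algHom_ext_fin_two (by simp) (by simp [← Polynomial.aeval_algHom_apply]))
    (algHom_ext_fin_two (by simp) (by simp [← Polynomial.aeval_algHom_apply]))

@[simp] theorem shear_X_zero (f : Polynomial R) : shear f (X 0) = X 0 := by simp [shear]

@[simp] theorem shear_X_one (f : Polynomial R) :
    shear f (X 1) = X 1 + Polynomial.aeval (X 0) f := by simp [shear]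

variable (R) in
/-- The automorphism `X ↦ Y`, `Y ↦ -X`, denoted `s` in the paper. -/
def rot : MvPolynomial (Fin 2) R ≃ₐ[R] MvPolynomial (Fin 2) R :=
  AlgEquiv.ofAlgHom (aeval ![X 1, -X 0]) (aeval ![-X 1, X 0])
    (algHom_ext_fin_two (by simp) (by simp)) (algHom_ext_fin_two (by simp) (by simp))

@[simp] theorem rot_X_zero : rot R (X 0) = X 1 := by simp [rot]

@[simp] theorem rot_X_one : rot R (X 1) = -X 0 := by simp [rot]

/-- The automorphism `X ↦ u X`, `Y ↦ u⁻¹ Y`, denoted `t_u` in the paper. -/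
def torus (u : Rˣ) : MvPolynomial (Fin 2) R ≃ₐ[R] MvPolynomial (Fin 2) R :=
  AlgEquiv.ofAlgHom (aeval ![(u : R) • X 0, (↑u⁻¹ : R) • X 1])
    (aeval ![(↑u⁻¹ : R) • X 0, (u : R) • X 1])
    (algHom_ext_fin_two (by simp [smul_smul]) (by simp [smul_smul]))
    (algHom_ext_fin_two (by simp [smul_smul]) (by simp [smul_smul]))

@[simp] theorem torus_X_zero (u : Rˣ) : torus u (X 0) = (u : R) • X 0 := by simp [torus]

@[simp] theorem torus_X_one (u : Rˣ) : torus u (X 1) = (↑u⁻¹ : R) • X 1 := by simp [torus]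

theorem shear_mul_shear (f g : Polynomial R) : shear f * shear g = shear (f + g) :=
  algEquiv_ext_fin_two (by simp) (by simp [← Polynomial.aeval_algHom_apply, add_assoc])

theorem shear_zero : shear (0 : Polynomial R) = 1 := algEquiv_ext_fin_two (by simp) (by simp)

theorem torus_one : torus (1 : Rˣ) = 1 := algEquiv_ext_fin_two (by simp) (by simp)

theorem torus_mul_torus (u v : Rˣ) : torus u * torus v = torus (u * v) :=
  algEquiv_ext_fin_two (by simp [smul_smul, mul_comm]) (by simp [smul_smul])

theorem rot_mul_rot : rot R * rot R = torus (-1) := algEquiv_ext_fin_two (by simp) (by simp)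

theorem rot_mul_torus (u : Rˣ) : rot R * torus u = torus u⁻¹ * rot R :=
  algEquiv_ext_fin_two (by simp) (by simp)

theorem shear_mul_torus (f : Polynomial R) (u : Rˣ) :
    shear f * torus u =
      torus u * shear ((↑u⁻¹ : R) • f.comp (Polynomial.C (↑u⁻¹ : R) * Polynomial.X)) :=
  algEquiv_ext_fin_two (by simp) (by
    simp [← Polynomial.aeval_algHom_apply, Polynomial.aeval_comp, ← smul_eq_C_mul, smul_smul])

theorem shear_inv (f : Polynomial R) : (shear f)⁻¹ = shear (-f) :=
  inv_eq_of_mul_eq_one_right (by rw [shear_mul_shear, add_neg_cancel, shear_zero])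

theorem torus_inv (u : Rˣ) : (torus u)⁻¹ = torus u⁻¹ :=
  inv_eq_of_mul_eq_one_right (by rw [torus_mul_torus, mul_inv_cancel, torus_one])

theorem rot_inv : (rot R)⁻¹ = torus (-1) * rot R :=
  inv_eq_of_mul_eq_one_left (by
    rw [mul_assoc, rot_mul_rot, torus_mul_torus, neg_one_mul, neg_neg, torus_one])

end Automorphisms

section Jacobian

variable {R ι : Type*} [CommRing R]

theorem derivation_apply_algHom [Fintype ι] {A : Type*} [CommRing A] [Algebra R A]
    (D : Derivation R A A) (φ : MvPolynomial ι R →ₐ[R] A) (f : MvPolynomial ι R) :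
    D (φ f) = ∑ i, φ (pderiv i f) * D (φ (X i)) := by
  classical
  induction f using MvPolynomial.induction_on with
  | C a => simp [← algebraMap_eq]
  | add p q hp hq => simp only [map_add, hp, hq, add_mul, Finset.sum_add_distrib]
  | mul_X p i hp =>
    have hsum : φ p * D (φ (X i)) = ∑ j, φ (p * pderiv j (X i)) * D (φ (X j)) := by
      rw [Finset.sum_eq_single i (fun j _ hj => by simp [pderiv_X_of_ne hj.symm]) (by simp)]
      simp
    simp only [map_mul, map_add, Derivation.leibniz, smul_eq_mul, hp, hsum, add_mul,
      Finset.sum_add_distrib, Finset.mul_sum, mul_assoc]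

theorem jacP_mul (σ τ : MvPolynomial (Fin 2) R ≃ₐ[R] MvPolynomial (Fin 2) R) :
    jacP R (σ * τ) = σ (jacP R τ) * jacP R σ := by
  have chain : ∀ (D : Derivation R (MvPolynomial (Fin 2) R) (MvPolynomial (Fin 2) R)) f,
      D (σ f) = σ (pderiv 0 f) * D (σ (X 0)) + σ (pderiv 1 f) * D (σ (X 1)) := fun D f =>
    (derivation_apply_algHom D (σ : _ →ₐ[R] _) f).trans (Fin.sum_univ_two _)
  simp only [jacP, AlgEquiv.mul_apply, map_sub, map_mul, chain _ (τ _)]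
  ring

variable (R) in
/-- The group `Γ` of automorphisms of `R[X, Y]` with Jacobian `1`. -/
def unimodularGroup : Subgroup (MvPolynomial (Fin 2) R ≃ₐ[R] MvPolynomial (Fin 2) R) where
  carrier := {σ | jacP R σ = 1}
  one_mem' := by simp [jacP]
  mul_mem' {σ τ} (hσ : jacP R σ = 1) (hτ : jacP R τ = 1) := by
    simp [jacP_mul, hσ, hτ]
  inv_mem' {σ} (hσ : jacP R σ = 1) := by
    have h : jacP R 1 = σ (jacP R σ⁻¹) := by
      rw [← mul_inv_cancel σ, jacP_mul, hσ, mul_one]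
    change jacP R σ⁻¹ = 1
    refine σ.injective ?_
    rw [← h]
    simp [jacP]

variable (R) in
/-- The subgroup generated by the automorphisms `shear f`, `rot R` and `torus u`. -/
def elementaryGroup : Subgroup (MvPolynomial (Fin 2) R ≃ₐ[R] MvPolynomial (Fin 2) R) :=
  Subgroup.closure (Set.range shear ∪ {rot R} ∪ Set.range torus)

theorem shear_mem_elementaryGroup (f : Polynomial R) : shear f ∈ elementaryGroup R :=
  Subgroup.subset_closure (.inl (.inl ⟨f, rfl⟩))

theorem rot_mem_elementaryGroup : rot R ∈ elementaryGroup R :=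
  Subgroup.subset_closure (.inl (.inr rfl))

theorem torus_mem_elementaryGroup (u : Rˣ) : torus u ∈ elementaryGroup R :=
  Subgroup.subset_closure (.inr ⟨u, rfl⟩)

theorem elementaryGroup_le_unimodularGroup : elementaryGroup R ≤ unimodularGroup R := by
  refine (Subgroup.closure_le _).mpr ?_
  rintro _ ((⟨f, rfl⟩ | rfl) | ⟨u, rfl⟩) <;> change jacP R _ = 1
  · simp [jacP, pderiv_X_of_ne zero_ne_one]
  · simp [jacP]
  · simp [jacP, smul_smul]

end Jacobian

section NormalForm

variable {R : Type*} [CommRing R]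

/-- The automorphisms `t_u φ_f (s φ_{g₁}) (s φ_{g₂}) ⋯`, with the bracketing that makes the
words easy to multiply from the left. -/
def HasNormalForm (σ : MvPolynomial (Fin 2) R ≃ₐ[R] MvPolynomial (Fin 2) R) : Prop :=
  ∃ (u : Rˣ) (f : Polynomial R) (gs : List (Polynomial R)),
    σ = torus u * (shear f * (gs.map fun g => rot R * shear g).prod)

namespace HasNormalForm

variable {σ : MvPolynomial (Fin 2) R ≃ₐ[R] MvPolynomial (Fin 2) R}

theorem one : HasNormalForm (1 : MvPolynomial (Fin 2) R ≃ₐ[R] MvPolynomial (Fin 2) R) :=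
  ⟨1, 0, [], by simp [torus_one, shear_zero]⟩

theorem torus_mul (h : HasNormalForm σ) (v : Rˣ) : HasNormalForm (torus v * σ) := by
  obtain ⟨u, f, gs, rfl⟩ := h
  exact ⟨v * u, f, gs, by rw [← mul_assoc, torus_mul_torus]⟩

theorem shear_mul (h : HasNormalForm σ) (g : Polynomial R) : HasNormalForm (shear g * σ) := by
  obtain ⟨u, f, gs, rfl⟩ := h
  exact ⟨u, _, gs, by
    rw [← mul_assoc, shear_mul_torus, mul_assoc, ← mul_assoc (shear _), shear_mul_shear]⟩

theorem rot_mul (h : HasNormalForm σ) : HasNormalForm (rot R * σ) := by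
  obtain ⟨u, f, gs, rfl⟩ := h
  refine ⟨u⁻¹, 0, f :: gs, ?_⟩
  simp only [List.map_cons, List.prod_cons, shear_zero, one_mul, mul_assoc]
  rw [← mul_assoc, rot_mul_torus, mul_assoc]

theorem of_mem_elementaryGroup (h : σ ∈ elementaryGroup R) : HasNormalForm σ := by
  induction h using Subgroup.closure_induction_left with
  | one => exact one
  | mul_left x hx y _ hy =>
    obtain (⟨f, rfl⟩ | rfl) | ⟨u, rfl⟩ := hx
    exacts [hy.shear_mul f, hy.rot_mul, hy.torus_mul u]
  | inv_mul_cancel x hx y _ hy =>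
    obtain (⟨f, rfl⟩ | rfl) | ⟨u, rfl⟩ := hx
    · exact shear_inv f ▸ hy.shear_mul (-f)
    · rw [rot_inv, mul_assoc]
      exact hy.rot_mul.torus_mul (-1)
    · exact torus_inv u ▸ hy.torus_mul u⁻¹

end HasNormalForm

theorem prod_range_alternating {M : Type*} [Monoid M] (s : M) (a : ℕ → M) (n : ℕ) :
    ((List.range (2 * n + 1)).map fun k => if Even k then a (k / 2) else s).prod =
      a 0 * ((List.range n).map fun k => s * a (k + 1)).prod := by
  induction n with
  | zero => simp
  | succ n ih =>
    have h2 : (2 * n + 1 + 1) / 2 = n + 1 := by omega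
    rw [show 2 * (n + 1) + 1 = 2 * n + 1 + 1 + 1 by ring, List.range_succ, List.range_succ,
      List.range_succ (n := n)]
    simp [ih, h2, mul_assoc, Nat.even_add_one]

theorem map_range_length_getD {α β : Type*} (l : List α) (d : α) (g : α → β) :
    (List.range l.length).map (fun k => g (l.getD k d)) = l.map g :=
  List.ext_getElem (by simp) (by simp +contextual)

theorem HasNormalForm.exists_word {σ : MvPolynomial (Fin 2) R ≃ₐ[R] MvPolynomial (Fin 2) R}
    (h : HasNormalForm σ) :
    ∃ (n : ℕ) (u : Rˣ) (fs : ℕ → Polynomial R),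
      σ = torus u * ((List.range (2 * n + 1)).map fun k =>
        if Even k then shear (fs (k / 2)) else rot R).prod := by
  obtain ⟨u, f, gs, rfl⟩ := h
  refine ⟨gs.length, u, fun k => (f :: gs).getD k 0, ?_⟩
  rw [prod_range_alternating (rot R) fun k => shear ((f :: gs).getD k 0),
    ← map_range_length_getD gs 0]
  rfl

end NormalForm

section Reduction

theorem IsLeadingForm.degreeOf_le_of_X_dvd {R : Type*} [CommRing R]
    {g G : MvPolynomial (Fin 2) R} {a b : ℕ} (hg : IsLeadingForm ![(b : ℚ), a] (a * b) g G)
    (ha : 0 < a) (hb : 0 < b) (hG : X 1 ∣ G) : degreeOf 0 g < a ∧ degreeOf 1 g ≤ b := by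
  have hle : ∀ m ∈ g.support, m 0 * b + m 1 * a ≤ a * b := fun m hm => by
    have h := hg.mem_restrictSupport hm
    rw [Set.mem_ofPred_eq, weight_vecCons_fin_two, nsmul_eq_mul, nsmul_eq_mul] at h
    exact_mod_cast h
  refine ⟨(degreeOf_lt_iff ha).mpr fun m hm => ?_, degreeOf_le_iff.mpr fun m hm => ?_⟩
  · have h0 : m 0 ≤ a := Nat.le_of_mul_le_mul_right (le_of_add_le_left (hle m hm)) hb
    refine h0.lt_of_ne fun hma => ?_
    have hm1 : m 1 = 0 := by
      have := hle m hm
      rw [hma, add_le_iff_nonpos_right, Nat.le_zero, mul_eq_zero] at this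
      exact this.resolve_right ha.ne'
    obtain ⟨H, rfl⟩ := hG
    have hcoeff : coeff m (X 1 * H) = 0 := by simp [coeff_X_mul', hm1]
    have hlt := hg.remainder_mem (show m ∈ (g - X 1 * H).support by
      rwa [mem_support_iff, coeff_sub, hcoeff, sub_zero, ← mem_support_iff])
    rw [Set.mem_ofPred_eq, weight_vecCons_fin_two, hm1, hma] at hlt
    simp at hlt
  · exact Nat.le_of_mul_le_mul_right
      ((le_of_add_le_right (hle m hm)).trans_eq (mul_comm a b)) ha

theorem IsLeadingForm.shear {R : Type*} [CommRing R] {f F : MvPolynomial (Fin 2) R} {c d : ℚ}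
    {k : ℕ} (h : IsLeadingForm ![c, k * c] d f F) (l : R) :
    IsLeadingForm ![c, k * c] d (shear (Polynomial.C l * Polynomial.X ^ k) f)
      (shear (Polynomial.C l * Polynomial.X ^ k) F) := by
  refine subst (fun i => of_homogeneous ?_) h
  have h0 := isWeightedHomogeneous_X R ![c, k * c] 0
  have h1 := isWeightedHomogeneous_X R ![c, k * c] 1
  fin_cases i
  · exact h0
  · refine h1.add ?_
    simpa [smul_eq_C_mul, algebraMap_eq] using (h0.pow k).C_mul l

theorem shear_sub_smul {R : Type*} [CommRing R] (l : R) (k : ℕ) :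
    shear (Polynomial.C l * Polynomial.X ^ k) (X 1 - l • X 0 ^ k) = X 1 := by
  simp [smul_eq_C_mul, algebraMap_eq]

variable {K : Type*} [Field K]
  {φ : MvPolynomial (Fin 2) K →ₐ[K] Polynomial (MvPolynomial (Fin 2) K)}
  {f : MvPolynomial (Fin 2) K}

theorem IsDeformation.dvd_or_dvd (hφ : IsDeformation φ) (hinv : φ f = Polynomial.C f)
    (h0 : 0 < degreeOf 0 f) (h1 : 0 < degreeOf 1 f) :
    degreeOf 1 f ∣ degreeOf 0 f ∨ degreeOf 0 f ∣ degreeOf 1 f := by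
  obtain ⟨F, hF, hF0, hF1, ψ, hψ, hψF⟩ := hφ.exists_isLeadingForm_newton hinv h0 h1
  obtain ⟨k, m, n, hk, hmn, hm, hn⟩ :=
    Nat.exists_coprime' (Nat.gcd_pos_of_pos_left (degreeOf 1 f) h0)
  rw [hm] at hF hF0 h0 ⊢
  rw [hn] at hF hF1 h1 ⊢
  rcases (hψ.edge_form hψF (Nat.pos_of_mul_pos_right h0) (Nat.pos_of_mul_pos_right h1) hk hmn
    hF.homogeneous hF0 hF1).1 with rfl | rfl
  · exact .inr ⟨n, by ring⟩
  · exact .inl ⟨m, by ring⟩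

/-- The leading form along the edge is divisible by some `Y - l X ^ k`, and the shear taking this
factor to `Y` kills the extreme monomial on the first axis. -/
theorem IsDeformation.exists_degreeOf_shear_lt (hφ : IsDeformation φ)
    (hinv : φ f = Polynomial.C f) (h0 : 0 < degreeOf 0 f) (h1 : 0 < degreeOf 1 f)
    (hdvd : degreeOf 1 f ∣ degreeOf 0 f) :
    ∃ q, degreeOf 0 (shear q f) < degreeOf 0 f ∧ degreeOf 1 (shear q f) ≤ degreeOf 1 f := by
  obtain ⟨F, hF, hF0, hF1, ψ, hψ, hψF⟩ := hφ.exists_isLeadingForm_newton hinv h0 h1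
  obtain ⟨k, hk⟩ := hdvd
  rw [mul_comm] at hk
  have hkpos : 0 < k := Nat.pos_of_mul_pos_right (hk ▸ h0)
  obtain ⟨l, hl⟩ : ∃ l : K, X 1 - l • X 0 ^ k ∣ F := by
    refine (hψ.edge_form hψF hkpos one_pos h1 k.coprime_one_right ?_ ?_ ?_).2 rfl
    · simpa only [one_mul, ← hk] using hF.homogeneous
    · rwa [← hk]
    · rwa [one_mul]
  have hlead : IsLeadingForm ![(degreeOf 1 f : ℚ), degreeOf 0 f] (degreeOf 0 f * degreeOf 1 f)
      (shear (Polynomial.C l * Polynomial.X ^ k) f)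
      (shear (Polynomial.C l * Polynomial.X ^ k) F) := by
    have hcast : (degreeOf 0 f : ℚ) = k * degreeOf 1 f := by exact_mod_cast hk
    exact hcast ▸ IsLeadingForm.shear (hcast ▸ hF) l
  refine ⟨_, hlead.degreeOf_le_of_X_dvd h0 h1 ?_⟩
  rw [← shear_sub_smul l k]
  exact map_dvd _ hl

end Reduction

section Rotation

variable {R M : Type*} [CommRing R] [AddCommMonoid M] [PartialOrder M] [IsOrderedCancelAddMonoid M]

theorem IsLeadingForm.rot {u v d : M} {f F : MvPolynomial (Fin 2) R}
    (h : IsLeadingForm ![u, v] d f F) : IsLeadingForm ![v, u] d (rot R f) (rot R F) := by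
  refine subst (fun i => of_homogeneous ?_) h
  fin_cases i
  · exact isWeightedHomogeneous_X R ![v, u] 1
  · exact (isWeightedHomogeneous_X R ![v, u] 0).neg

theorem degreeOf_zero_le_iff {f : MvPolynomial (Fin 2) R} {d : ℕ} :
    degreeOf 0 f ≤ d ↔ f ∈ restrictSupport R {m | Finsupp.weight ![1, 0] m ≤ d} := by
  simp [degreeOf_le_iff, mem_restrictSupport_iff, weight_vecCons_fin_two, Set.subset_def]

theorem degreeOf_one_le_iff {f : MvPolynomial (Fin 2) R} {d : ℕ} :
    degreeOf 1 f ≤ d ↔ f ∈ restrictSupport R {m | Finsupp.weight ![0, 1] m ≤ d} := by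
  simp [degreeOf_le_iff, mem_restrictSupport_iff, weight_vecCons_fin_two, Set.subset_def]

theorem degreeOf_zero_rot_le (f : MvPolynomial (Fin 2) R) :
    degreeOf 0 (rot R f) ≤ degreeOf 1 f :=
  degreeOf_zero_le_iff.mpr
    (IsLeadingForm.of_component (degreeOf_one_le_iff.mp le_rfl)).rot.mem_restrictSupport

theorem degreeOf_one_rot_le (f : MvPolynomial (Fin 2) R) :
    degreeOf 1 (rot R f) ≤ degreeOf 0 f :=
  degreeOf_one_le_iff.mpr
    (IsLeadingForm.of_component (degreeOf_zero_le_iff.mp le_rfl)).rot.mem_restrictSupport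

theorem degreeOf_rot (f : MvPolynomial (Fin 2) R) :
    degreeOf 0 (rot R f) = degreeOf 1 f ∧ degreeOf 1 (rot R f) = degreeOf 0 f := by
  have hrot : rot R (rot R (rot R (rot R f))) = f := by
    have h : (rot R * rot R) * (rot R * rot R) = 1 := by
      rw [rot_mul_rot, torus_mul_torus, neg_one_mul, neg_neg, torus_one]
    exact DFunLike.congr_fun h f
  constructor
  · refine (degreeOf_zero_rot_le f).antisymm ?_
    calc degreeOf 1 f = degreeOf 1 (rot R (rot R (rot R (rot R f)))) := by rw [hrot]
      _ ≤ degreeOf 0 (rot R (rot R (rot R f))) := degreeOf_one_rot_le _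
      _ ≤ degreeOf 1 (rot R (rot R f)) := degreeOf_zero_rot_le _
      _ ≤ degreeOf 0 (rot R f) := degreeOf_one_rot_le _
  · refine (degreeOf_one_rot_le f).antisymm ?_
    calc degreeOf 0 f = degreeOf 0 (rot R (rot R (rot R (rot R f)))) := by rw [hrot]
      _ ≤ degreeOf 1 (rot R (rot R (rot R f))) := degreeOf_zero_rot_le _
      _ ≤ degreeOf 0 (rot R (rot R f)) := degreeOf_one_rot_le _
      _ ≤ degreeOf 1 (rot R f) := degreeOf_zero_rot_le _

end Rotation

section BaseCase

variable {R : Type*} [CommRing R] {σ : MvPolynomial (Fin 2) R ≃ₐ[R] MvPolynomial (Fin 2) R}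

/-- The automorphism `X ↦ X - c`, `Y ↦ Y`. -/
def translation (c : R) : MvPolynomial (Fin 2) R ≃ₐ[R] MvPolynomial (Fin 2) R :=
  rot R * shear (Polynomial.C c) * (rot R)⁻¹

theorem translation_X_zero (c : R) : translation c (X 0) = X 0 - C c := by
  simp [translation, rot_inv, algebraMap_eq, neg_add_eq_sub]

theorem translation_mem_elementaryGroup (c : R) : translation c ∈ elementaryGroup R :=
  mul_mem (mul_mem rot_mem_elementaryGroup (shear_mem_elementaryGroup _))
    (inv_mem rot_mem_elementaryGroup)

theorem exists_eq_aeval_of_degreeOf_one_eq_zero {f : MvPolynomial (Fin 2) R}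
    (h : degreeOf 1 f = 0) : ∃ q : Polynomial R, f = Polynomial.aeval (X 0) q := by
  have hf : f ∈ supported R {(0 : Fin 2)} := by
    refine mem_supported.mpr fun i hi => ?_
    fin_cases i
    · rfl
    · exact absurd h (mem_vars_iff_degreeOf_ne_zero.mp hi)
  rw [supported_eq_adjoin_X, Set.image_singleton, Algebra.adjoin_singleton_eq_range_aeval] at hf
  exact hf.imp fun q hq => hq.symm

variable [IsDomain R]

theorem exists_apply_X_zero_eq_add_C (h : degreeOf 1 (σ (X 0)) = 0) :
    ∃ (u : Rˣ) (c : R), σ (X 0) = (u : R) • X 0 + C c := by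
  obtain ⟨q, hq⟩ := exists_eq_aeval_of_degreeOf_one_eq_zero h
  obtain ⟨r, hr⟩ := Polynomial.X_dvd_sub_C (p := q)
  have hirr : Irreducible (σ (translation (q.coeff 0) (X 0))) :=
    ((MulEquiv.irreducible_iff (σ * translation (q.coeff 0))).mpr X_prime.irreducible)
  have hfactor : σ (translation (q.coeff 0) (X 0)) = X 0 * Polynomial.aeval (X 0) r := by
    simpa [translation_X_zero, hq, algebraMap_eq] using
      congrArg (Polynomial.aeval (X 0 : MvPolynomial (Fin 2) R)) hr
  have hunit := (hirr.isUnit_or_isUnit hfactor).resolve_left X_prime.not_isUnit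
  obtain ⟨_, ⟨u, rfl⟩, hu⟩ := isUnit_iff_eq_C_of_isReduced.mp hunit
  rw [translation_X_zero, map_sub, hu, sub_eq_iff_eq_add] at hfactor
  exact ⟨u, q.coeff 0, by rw [hfactor, algEquiv_apply_C, smul_eq_C_mul, mul_comm]⟩

/-- An automorphism fixing `X` is affine in `Y` over `R[X]`: this amounts to the composition
inverse of a polynomial of `R[X][Y]`, and degrees are multiplicative under composition. -/
theorem exists_apply_X_one_eq (h : σ (X 0) = X 0) :
    ∃ a b : Polynomial R, σ (X 1) = Polynomial.aeval (X 0) a * X 1 + Polynomial.aeval (X 0) b := by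
  let e := Polynomial.Bivariate.equivMvPolynomial R
  have hcomp : ∀ g, e.symm (σ g) = (e.symm g).comp (e.symm (σ (X 1))) := fun g => by
    let θ := (Polynomial.aeval (R := Polynomial R) (e.symm (σ (X 1)))).restrictScalars R
    have hθ : e.symm.toAlgHom.comp σ.toAlgHom = θ.comp e.symm.toAlgHom :=
      algHom_ext_fin_two (by simp [θ, e, h]) (by simp [θ, e])
    exact DFunLike.congr_fun hθ g
  have hdeg : (e.symm (σ (X 1))).natDegree = 1 := by
    have hX := congrArg Polynomial.natDegree (hcomp (σ.symm (X 1)))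
    rw [AlgEquiv.apply_symm_apply, Polynomial.Bivariate.equivMvPolynomial_symm_X_1,
      Polynomial.natDegree_X, Polynomial.natDegree_comp] at hX
    exact Nat.eq_one_of_mul_eq_one_left hX.symm
  have he : ∀ a : Polynomial R, e (Polynomial.C a) = Polynomial.aeval (X 0) a := fun a => by
    have hC : e.toAlgHom.comp (Polynomial.CAlgHom (R := R)) = Polynomial.aeval (X 0) :=
      Polynomial.algHom_ext (by simp [e])
    exact DFunLike.congr_fun hC a
  obtain ⟨a, -, b, hab⟩ := Polynomial.natDegree_eq_one.mp hdeg
  refine ⟨a, b, ?_⟩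
  rw [← e.apply_symm_apply (σ (X 1)), ← hab, map_add, map_mul, he, he]
  simp [e]

theorem mem_elementaryGroup_of_apply_X_zero_eq (hJ : jacP R σ = 1) (h : σ (X 0) = X 0) :
    σ ∈ elementaryGroup R := by
  obtain ⟨a, b, hab⟩ := exists_apply_X_one_eq h
  have ha : Polynomial.aeval (X (0 : Fin 2)) a = (1 : MvPolynomial (Fin 2) R) := by
    simpa [jacP, h, hab, Derivation.map_aeval, pderiv_X_of_ne zero_ne_one] using hJ
  have hσ : σ = shear b := algEquiv_ext_fin_two (by simp [h]) (by simp [hab, ha])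
  exact hσ ▸ shear_mem_elementaryGroup b

theorem mem_elementaryGroup_of_degreeOf_one_eq_zero (hJ : jacP R σ = 1)
    (h : degreeOf 1 (σ (X 0)) = 0) : σ ∈ elementaryGroup R := by
  obtain ⟨u, c, huc⟩ := exists_apply_X_zero_eq_add_C h
  set ρ := torus u⁻¹ * translation (↑u⁻¹ * c)
  have hρ : ρ ∈ elementaryGroup R :=
    mul_mem (torus_mem_elementaryGroup _) (translation_mem_elementaryGroup _)
  refine (Subgroup.mul_mem_cancel_left _ hρ).mp (mem_elementaryGroup_of_apply_X_zero_eq ?_ ?_)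
  · exact mul_mem (elementaryGroup_le_unimodularGroup hρ) hJ
  · have hc : (u : R) • (C (↑u⁻¹ * c) : MvPolynomial (Fin 2) R) = C c := by
      rw [smul_eq_C_mul, ← C_mul, Units.mul_inv_cancel_left]
    simp only [ρ, AlgEquiv.mul_apply, huc, map_add, map_smul, translation_X_zero, map_sub,
      torus_X_zero, algEquiv_apply_C, smul_sub, smul_smul, hc, Units.mul_inv, one_smul,
      sub_add_cancel]

end BaseCase

section Generation

variable {K : Type*} [Field K]

theorem unimodularGroup_le_elementaryGroup : unimodularGroup K ≤ elementaryGroup K := by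
  intro σ hσ
  induction hd : degreeOf 0 (σ (X 0)) + degreeOf 1 (σ (X 0)) using Nat.strong_induction_on
    generalizing σ with | _ d ih
  obtain h1 | h1 := (degreeOf 1 (σ (X 0))).eq_zero_or_pos
  · exact mem_elementaryGroup_of_degreeOf_one_eq_zero hσ h1
  have hrotσ := mul_mem (elementaryGroup_le_unimodularGroup rot_mem_elementaryGroup) hσ
  obtain ⟨hrot0, hrot1⟩ := degreeOf_rot (σ (X 0))
  obtain h0 | h0 := (degreeOf 0 (σ (X 0))).eq_zero_or_pos
  · exact (Subgroup.mul_mem_cancel_left _ rot_mem_elementaryGroup).mp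
      (mem_elementaryGroup_of_degreeOf_one_eq_zero hrotσ (hrot1.trans h0))
  have reduce : ∀ τ ∈ unimodularGroup K, 0 < degreeOf 0 (τ (X 0)) → 0 < degreeOf 1 (τ (X 0)) →
      degreeOf 0 (τ (X 0)) + degreeOf 1 (τ (X 0)) = d →
      degreeOf 1 (τ (X 0)) ∣ degreeOf 0 (τ (X 0)) → τ ∈ elementaryGroup K := by
    intro τ hτ h0 h1 hd hdvd
    obtain ⟨φ, hφ, hinv⟩ := exists_isDeformation_fixing_coordinate τ zero_ne_one
    obtain ⟨q, hlt, hle⟩ := hφ.exists_degreeOf_shear_lt hinv h0 h1 hdvd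
    have hq := shear_mem_elementaryGroup q
    exact (Subgroup.mul_mem_cancel_left _ hq).mp
      (ih _ (hd ▸ add_lt_add_of_lt_of_le hlt hle)
        (mul_mem (elementaryGroup_le_unimodularGroup hq) hτ) rfl)
  obtain ⟨φ, hφ, hinv⟩ := exists_isDeformation_fixing_coordinate σ zero_ne_one
  rcases hφ.dvd_or_dvd hinv h0 h1 with hdvd | hdvd
  · exact reduce σ hσ h0 h1 hd hdvd
  · refine (Subgroup.mul_mem_cancel_left _ rot_mem_elementaryGroup).mp (reduce _ hrotσ ?_ ?_ ?_ ?_)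
    all_goals simp only [AlgEquiv.mul_apply, hrot0, hrot1]
    exacts [h1, h0, (add_comm _ _).trans hd, hdvd]

end Generation

theorem statement14_general (K : Type*) [Field K]
    (σ : MvPolynomial (Fin 2) K ≃ₐ[K] MvPolynomial (Fin 2) K)
    (hσ : jacP K σ = 1) :
    ∃ n : ℕ, 1 ≤ n ∧ ∃ ν : K, ν ≠ 0 ∧
    ∃ t : MvPolynomial (Fin 2) K ≃ₐ[K] MvPolynomial (Fin 2) K,
    ∃ fs : ℕ → Polynomial K,
    ∃ w : ℕ → MvPolynomial (Fin 2) K ≃ₐ[K] MvPolynomial (Fin 2) K,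
      (t (MvPolynomial.X 0) = MvPolynomial.C ν * MvPolynomial.X 0 ∧
        t (MvPolynomial.X 1) = MvPolynomial.C ν⁻¹ * MvPolynomial.X 1) ∧
      (∀ k : ℕ, k < n →
        w (2 * k) (MvPolynomial.X 0) = MvPolynomial.X 0 ∧
        w (2 * k) (MvPolynomial.X 1)
          = MvPolynomial.X 1 + Polynomial.aeval (MvPolynomial.X 0) (fs k)) ∧
      (∀ k : ℕ, k < n - 1 →
        w (2 * k + 1) (MvPolynomial.X 0) = MvPolynomial.X 1 ∧
        w (2 * k + 1) (MvPolynomial.X 1) = - MvPolynomial.X 0) ∧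
      σ = t * ((List.range (2 * n - 1)).map w).prod := by
  obtain ⟨n, u, fs, hword⟩ :=
    (HasNormalForm.of_mem_elementaryGroup (unimodularGroup_le_elementaryGroup hσ)).exists_word
  refine ⟨n + 1, by omega, u, u.ne_zero, torus u, fs, _, ⟨?_, ?_⟩, fun k _ => ?_, fun k _ => ?_,
    hword⟩
  · rw [torus_X_zero, smul_eq_C_mul]
  · rw [torus_X_one, smul_eq_C_mul, Units.val_inv_eq_inv_val]
  · simp
  · simp

theorem statement14 (p : ℕ) (hp : p.Prime) (K : Type*) [Field K] [CharP K p]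
    (σ : MvPolynomial (Fin 2) K ≃ₐ[K] MvPolynomial (Fin 2) K)
    (hσ : jacP K σ = 1) :
    ∃ n : ℕ, 1 ≤ n ∧ ∃ ν : K, ν ≠ 0 ∧
    ∃ t : MvPolynomial (Fin 2) K ≃ₐ[K] MvPolynomial (Fin 2) K,
    ∃ fs : ℕ → Polynomial K,
    ∃ w : ℕ → MvPolynomial (Fin 2) K ≃ₐ[K] MvPolynomial (Fin 2) K,
      (t (MvPolynomial.X 0) = MvPolynomial.C ν * MvPolynomial.X 0 ∧
        t (MvPolynomial.X 1) = MvPolynomial.C ν⁻¹ * MvPolynomial.X 1) ∧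
      (∀ k : ℕ, k < n →
        w (2 * k) (MvPolynomial.X 0) = MvPolynomial.X 0 ∧
        w (2 * k) (MvPolynomial.X 1)
          = MvPolynomial.X 1 + Polynomial.aeval (MvPolynomial.X 0) (fs k)) ∧
      (∀ k : ℕ, k < n - 1 →
        w (2 * k + 1) (MvPolynomial.X 0) = MvPolynomial.X 1 ∧
        w (2 * k + 1) (MvPolynomial.X 1) = - MvPolynomial.X 0) ∧
      σ = t * ((List.range (2 * n - 1)).map w).prod :=
  statement14_general K σ hσ
end
end

section
/- Let K be a field. For all σ, τ ∈ Aut_K(K[X, Y]) one has J(στ) = J(σ) · σ(J(τ)); the Jacobian J(σ) of any automorphism σ is a nonzero element of K (a unit); the induced map J : Aut_K(K[X, Y]) → K^* is a group homomorphism with kernel Γ = {σ : J(σ) = 1}; and every automorphism σ ∈ Aut_K(K[X, Y]) factors uniquely as σ = γ_μ ∘ τ with μ ∈ K^* and τ ∈ Γ, so that Aut_K(K[X, Y]) is the semidirect product K^* ⋉ Γ. -/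
/-!
STATEMENT 15: Let `K` be a field.  For all `σ, τ ∈ Aut_K(K[X, Y])`:
`J(στ) = J(σ)·σ(J(τ))`; `J(σ)` is a nonzero constant (a unit of `K`); `J` is a group
homomorphism into `K^*` (so its kernel is `Γ = {σ : J(σ) = 1}`); and every `σ` factors
uniquely as `σ = γ_μ ∘ τ` with `μ ∈ K^*` and `τ ∈ Γ`, i.e.
`Aut_K(K[X, Y]) = K^* ⋉ Γ`.

Here `K[X, Y] = MvPolynomial (Fin 2) K`, multiplication of automorphisms is composition
(`(σ * τ)(f) = σ(τ(f))`), and `γ_μ : X ↦ μX, Y ↦ Y`.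
-/

noncomputable section

/-!
By the chain rule, the Jacobian matrix of `ψ ∘ φ` is `ψ` applied entrywise to that of `φ`, times
that of `ψ`. Taking determinants shows that the Jacobian of an automorphism `σ` is a unit with
inverse `σ (J (σ⁻¹))`, and the units of a polynomial ring over a reduced ring are the units of the
coefficient ring. Hence `J` is a homomorphism to the units, of which `μ ↦ γ_μ` is a section; the
unique factorization holds for any group homomorphism with a section.
-/

section Group

variable {G H : Type*} [Group G] [Group H]

theorem existsUnique_mul_of_comp_eq_id {f : G →* H} {s : H →* G} (hfs : f.comp s = .id H) (g : G) :
    ∃! p : G × G, p.1 ∈ s.range ∧ p.2 ∈ f.ker ∧ g = p.1 * p.2 := by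
  have f_s (h : H) : f (s h) = h := DFunLike.congr_fun hfs h
  refine ⟨(s (f g), (s (f g))⁻¹ * g), ⟨⟨f g, rfl⟩, ?_, ?_⟩, ?_⟩
  · simp [MonoidHom.mem_ker, f_s]
  · simp
  · rintro ⟨_, k⟩ ⟨⟨h, rfl⟩, hk, hg⟩
    have hfg : f g = h := by rw [hg, map_mul, f_s, MonoidHom.mem_ker.1 hk, mul_one]
    rw [hfg, hg, inv_mul_cancel_left]

end Group

section ChainRule

open MvPolynomial

variable {ι R A M : Type*} [Fintype ι] [CommSemiring R] [CommSemiring A] [Algebra R A]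
  [AddCommMonoid M] [Module A M] [Module R M]

theorem derivation_aeval_eq_sum (D : Derivation R A M) (x : ι → A) (f : MvPolynomial ι R) :
    D (aeval x f) = ∑ i, aeval x (pderiv i f) • D (x i) := by
  classical
  induction f using MvPolynomial.induction_on with
  | C a => simp [algHom_C]
  | add p q hp hq => simp only [map_add, hp, hq, add_smul, Finset.sum_add_distrib]
  | mul_X p j hp =>
    calc D (aeval x (p * X j))
        = aeval x p • D (x j) + x j • ∑ i, aeval x (pderiv i p) • D (x i) := by
          rw [map_mul, Derivation.leibniz, aeval_X, hp]
      _ = ∑ i, aeval x (pderiv i (p * X j)) • D (x i) := by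
          simp [Derivation.leibniz, pderiv_X, Pi.single_apply, apply_ite (aeval x), add_smul,
            mul_smul, Finset.sum_add_distrib, Finset.smul_sum]

end ChainRule

section AlgEquiv

variable {R A : Type*} [CommSemiring R] [Semiring A] [Algebra R A]

theorem toAlgHom_one : (1 : A ≃ₐ[R] A).toAlgHom = 1 := rfl

theorem toAlgHom_mul (σ τ : A ≃ₐ[R] A) : (σ * τ).toAlgHom = σ.toAlgHom.comp τ.toAlgHom := rfl

end AlgEquiv

section Jacobian

open MvPolynomial

/-- The Jacobian matrix `(∂φ(X i)/∂X j)` of a homomorphism of polynomial algebras. -/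
def jacobianMatrix {ι κ R : Type*} [CommSemiring R]
    (φ : MvPolynomial ι R →ₐ[R] MvPolynomial κ R) : Matrix ι κ (MvPolynomial κ R) :=
  .of fun i j ↦ pderiv j (φ (X i))

theorem jacobianMatrix_comp {ι κ ν R : Type*} [CommSemiring R] [Fintype κ]
    (ψ : MvPolynomial κ R →ₐ[R] MvPolynomial ν R) (φ : MvPolynomial ι R →ₐ[R] MvPolynomial κ R) :
    jacobianMatrix (ψ.comp φ) = (jacobianMatrix φ).map ψ * jacobianMatrix ψ := by
  ext1 i k
  have chain_rule := derivation_aeval_eq_sum (pderiv k) (ψ ∘ X) (φ (X i))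
  rw [← aeval_unique ψ] at chain_rule
  exact chain_rule

/-- The diagonal endomorphisms `X i ↦ u i * X i` of a polynomial algebra. -/
def diagonalHom (ι R : Type*) [CommSemiring R] :
    (ι → R) →* (MvPolynomial ι R →ₐ[R] MvPolynomial ι R) where
  toFun u := aeval fun i ↦ C (u i) * X i
  map_one' := by ext1 i; simp
  map_mul' u v := by ext1 i; simp [algHom_C, mul_assoc, mul_left_comm]

variable {ι R : Type*} [Fintype ι] [DecidableEq ι] [CommRing R]

/-- The Jacobian of an endomorphism of a polynomial algebra, the determinant of its Jacobian
matrix. -/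
def jacobian (φ : MvPolynomial ι R →ₐ[R] MvPolynomial ι R) : MvPolynomial ι R :=
  (jacobianMatrix φ).det

theorem jacP_eq_jacobian (σ : MvPolynomial (Fin 2) R ≃ₐ[R] MvPolynomial (Fin 2) R) :
    jacP R σ = jacobian σ.toAlgHom :=
  (Matrix.det_fin_two (jacobianMatrix σ.toAlgHom)).symm

theorem jacobian_comp (ψ φ : MvPolynomial ι R →ₐ[R] MvPolynomial ι R) :
    jacobian (ψ.comp φ) = jacobian ψ * ψ (jacobian φ) := by
  rw [jacobian, jacobianMatrix_comp, Matrix.det_mul, mul_comm, jacobian, jacobian, AlgHom.map_det]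
  rfl

theorem jacobian_mul (σ τ : MvPolynomial ι R ≃ₐ[R] MvPolynomial ι R) :
    jacobian (σ * τ).toAlgHom = jacobian σ.toAlgHom * σ (jacobian τ.toAlgHom) := by
  rw [toAlgHom_mul, jacobian_comp, AlgEquiv.toAlgHom_apply]

theorem jacobian_diagonalHom (u : ι → R) : jacobian (diagonalHom ι R u) = C (∏ i, u i) := by
  have matrix_eq : jacobianMatrix (diagonalHom ι R u) = .diagonal fun i ↦ C (u i) := by
    ext1 i j
    simp [diagonalHom, jacobianMatrix, Matrix.diagonal_apply, pderiv_X, Pi.single_apply,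
      Derivation.leibniz]
  rw [jacobian, matrix_eq, Matrix.det_diagonal, map_prod]

theorem jacobian_one : jacobian (1 : MvPolynomial ι R →ₐ[R] MvPolynomial ι R) = 1 := by
  rw [← map_one (diagonalHom ι R), jacobian_diagonalHom]
  simp

theorem isUnit_jacobian (σ : MvPolynomial ι R ≃ₐ[R] MvPolynomial ι R) :
    IsUnit (jacobian σ.toAlgHom) := by
  refine .of_mul_eq_one (σ (jacobian σ⁻¹.toAlgHom)) ?_
  rw [← jacobian_mul, mul_inv_cancel, toAlgHom_one, jacobian_one]

theorem exists_isUnit_jacobian_eq_C [IsReduced R]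
    (σ : MvPolynomial ι R ≃ₐ[R] MvPolynomial ι R) :
    ∃ c : R, IsUnit c ∧ jacobian σ.toAlgHom = C c :=
  isUnit_iff_eq_C_of_isReduced.1 (isUnit_jacobian σ)

theorem jacobian_mul_eq_C {σ τ : MvPolynomial ι R ≃ₐ[R] MvPolynomial ι R} {c d : R}
    (hσ : jacobian σ.toAlgHom = C c) (hτ : jacobian τ.toAlgHom = C d) :
    jacobian (σ * τ).toAlgHom = C (c * d) := by
  rw [jacobian_mul, hσ, hτ, ← algebraMap_eq, σ.commutes, map_mul]

/-- The Jacobian as a homomorphism from the automorphism group to the units of the coefficient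
ring. It is encoded as the constant coefficient of `jacobian`, which loses nothing since the
Jacobian of an automorphism over a reduced ring is constant. -/
def jacobianHom (ι R : Type*) [Fintype ι] [DecidableEq ι] [CommRing R] [IsReduced R] :
    (MvPolynomial ι R ≃ₐ[R] MvPolynomial ι R) →* Rˣ :=
  MonoidHom.toHomUnits
    { toFun σ := constantCoeff (jacobian σ.toAlgHom)
      map_one' := by rw [toAlgHom_one, jacobian_one, map_one]
      map_mul' σ τ := by
        obtain ⟨c, -, hσ⟩ := exists_isUnit_jacobian_eq_C σ
        obtain ⟨d, -, hτ⟩ := exists_isUnit_jacobian_eq_C τ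
        simp only [jacobian_mul_eq_C hσ hτ, hσ, hτ, constantCoeff_C] }

theorem C_jacobianHom [IsReduced R] (σ : MvPolynomial ι R ≃ₐ[R] MvPolynomial ι R) :
    C (jacobianHom ι R σ : R) = jacobian σ.toAlgHom := by
  obtain ⟨c, -, hσ⟩ := exists_isUnit_jacobian_eq_C σ
  simp [jacobianHom, hσ]

theorem mem_ker_jacobianHom [IsReduced R] {σ : MvPolynomial ι R ≃ₐ[R] MvPolynomial ι R} :
    σ ∈ (jacobianHom ι R).ker ↔ jacobian σ.toAlgHom = 1 := by
  rw [MonoidHom.mem_ker, ← C_jacobianHom, ← C_1, (C_injective ι R).eq_iff, Units.val_eq_one]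

end Jacobian

section Scaling

open MvPolynomial

variable {ι R : Type*} [DecidableEq ι]

/-- The automorphisms `γ_μ` scaling the variable `X i₀` by the unit `μ` and fixing the others. -/
def scaleVariable (R : Type*) [CommSemiring R] (i₀ : ι) :
    Rˣ →* (MvPolynomial ι R ≃ₐ[R] MvPolynomial ι R) :=
  (AlgEquiv.algHomUnitsEquiv R (MvPolynomial ι R)).toMonoidHom.comp <|
    Units.map <| (diagonalHom ι R).comp <| MonoidHom.mulSingle (fun _ ↦ R) i₀

theorem scaleVariable_X [CommSemiring R] (i₀ i : ι) (μ : Rˣ) :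
    scaleVariable R i₀ μ (X i) = C ((Pi.mulSingle i₀ (μ : R) : ι → R) i) * X i :=
  aeval_X _ i

theorem mem_range_scaleVariable [CommSemiring R] {i₀ : ι}
    {σ : MvPolynomial ι R ≃ₐ[R] MvPolynomial ι R} :
    σ ∈ (scaleVariable R i₀).range ↔
      ∃ μ : R, IsUnit μ ∧ σ (X i₀) = C μ * X i₀ ∧ ∀ i ≠ i₀, σ (X i) = X i := by
  constructor
  · rintro ⟨μ, rfl⟩
    refine ⟨μ, μ.isUnit, ?_, fun i hi ↦ ?_⟩
    · simp [scaleVariable_X]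
    · simp [scaleVariable_X, hi]
  · rintro ⟨_, ⟨μ, rfl⟩, h_scale, h_fix⟩
    refine ⟨μ, AlgEquiv.coe_toAlgHom_injective <| algHom_ext fun i ↦ ?_⟩
    obtain rfl | hi := eq_or_ne i i₀
    · simp [scaleVariable_X, h_scale]
    · simp [scaleVariable_X, h_fix i hi, hi]

theorem jacobianHom_comp_scaleVariable [Fintype ι] [CommRing R] [IsReduced R] (i₀ : ι) :
    (jacobianHom ι R).comp (scaleVariable R i₀) = .id Rˣ := by
  ext μ
  apply C_injective ι R
  calc C (jacobianHom ι R (scaleVariable R i₀ μ) : R)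
      = C (∏ i, (Pi.mulSingle i₀ (μ : R) : ι → R) i) :=
        (C_jacobianHom _).trans (jacobian_diagonalHom _)
    _ = C (μ : R) := by rw [Fintype.prod_pi_mulSingle']

end Scaling

open MvPolynomial in
theorem statement15_general {ι R : Type*} [Fintype ι] [DecidableEq ι] [CommRing R] [IsReduced R]
    (i₀ : ι) :
    (∀ σ τ : MvPolynomial ι R ≃ₐ[R] MvPolynomial ι R,
      jacobian (σ * τ).toAlgHom = jacobian σ.toAlgHom * σ (jacobian τ.toAlgHom)) ∧
    (∀ σ : MvPolynomial ι R ≃ₐ[R] MvPolynomial ι R,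
      ∃ c : R, IsUnit c ∧ jacobian σ.toAlgHom = C c) ∧
    (∀ (σ τ : MvPolynomial ι R ≃ₐ[R] MvPolynomial ι R) (c d : R),
      jacobian σ.toAlgHom = C c → jacobian τ.toAlgHom = C d →
      jacobian (σ * τ).toAlgHom = C (c * d)) ∧
    (∀ σ : MvPolynomial ι R ≃ₐ[R] MvPolynomial ι R,
      ∃! gt : (MvPolynomial ι R ≃ₐ[R] MvPolynomial ι R) ×
          (MvPolynomial ι R ≃ₐ[R] MvPolynomial ι R),
        (∃ μ : R, IsUnit μ ∧ gt.1 (X i₀) = C μ * X i₀ ∧ ∀ i ≠ i₀, gt.1 (X i) = X i) ∧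
        jacobian gt.2.toAlgHom = 1 ∧ σ = gt.1 * gt.2) := by
  refine ⟨jacobian_mul, exists_isUnit_jacobian_eq_C,
    fun _ _ _ _ ↦ jacobian_mul_eq_C, fun σ ↦ ?_⟩
  simpa only [mem_range_scaleVariable, mem_ker_jacobianHom] using
    existsUnique_mul_of_comp_eq_id (jacobianHom_comp_scaleVariable i₀) σ

theorem statement15 (K : Type*) [Field K] :
    (∀ σ τ : MvPolynomial (Fin 2) K ≃ₐ[K] MvPolynomial (Fin 2) K,
      jacP K (σ * τ) = jacP K σ * σ (jacP K τ)) ∧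
    (∀ σ : MvPolynomial (Fin 2) K ≃ₐ[K] MvPolynomial (Fin 2) K,
      ∃ c : K, c ≠ 0 ∧ jacP K σ = MvPolynomial.C c) ∧
    (∀ (σ τ : MvPolynomial (Fin 2) K ≃ₐ[K] MvPolynomial (Fin 2) K) (c d : K),
      jacP K σ = MvPolynomial.C c → jacP K τ = MvPolynomial.C d →
      jacP K (σ * τ) = MvPolynomial.C (c * d)) ∧
    (∀ σ : MvPolynomial (Fin 2) K ≃ₐ[K] MvPolynomial (Fin 2) K,
      ∃! gt : (MvPolynomial (Fin 2) K ≃ₐ[K] MvPolynomial (Fin 2) K) ×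
          (MvPolynomial (Fin 2) K ≃ₐ[K] MvPolynomial (Fin 2) K),
        (∃ μ : K, μ ≠ 0 ∧ gt.1 (MvPolynomial.X 0) = MvPolynomial.C μ * MvPolynomial.X 0 ∧
          gt.1 (MvPolynomial.X 1) = MvPolynomial.X 1) ∧
        jacP K gt.2 = 1 ∧ σ = gt.1 * gt.2) := by
  simpa [jacP_eq_jacobian, Fin.forall_fin_two] using statement15_general (R := K) (0 : Fin 2)
end
end

section
/- Let K be a perfect field of characteristic p > 0. The group Aut_K(A_1) of K-algebra automorphisms of the first Weyl algebra A_1 is generated by the subgroup Aff(A_1) of affine automorphisms together with the automorphisms φ_{λx^i} : x ↦ x, ∂ ↦ ∂ + λx^i for λ ∈ K^* and i = 2, 3, …. -/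
/-!
STATEMENT 16: Let `K` be a perfect field of characteristic `p > 0`.  The group
`Aut_K(A₁)` is generated by the subgroup `Aff(A₁)` of affine automorphisms (those of
degree `1`) together with the automorphisms `φ_{λx^i} : x ↦ x, ∂ ↦ ∂ + λx^i` for
`λ ∈ K^*`, `i = 2, 3, …`.
-/

noncomputable section

/-- The defining relation of the first Weyl algebra: `∂·x = x·∂ + 1`. -/
inductive WeylRel (K : Type*) [CommRing K] :
    FreeAlgebra K (Fin 2) → FreeAlgebra K (Fin 2) → Prop
  | rel : WeylRel K (FreeAlgebra.ι K 1 * FreeAlgebra.ι K 0)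
      (FreeAlgebra.ι K 0 * FreeAlgebra.ι K 1 + 1)

/-- The first Weyl algebra `A₁(K) = K⟨x, ∂ | ∂x − x∂ = 1⟩`. -/
abbrev Weyl (K : Type*) [CommRing K] := RingQuot (WeylRel K)

/-- The generator `x` of the first Weyl algebra. -/
def wX (K : Type*) [CommRing K] : Weyl K :=
  RingQuot.mkAlgHom K (WeylRel K) (FreeAlgebra.ι K 0)

/-- The generator `∂` of the first Weyl algebra. -/
def wD (K : Type*) [CommRing K] : Weyl K :=
  RingQuot.mkAlgHom K (WeylRel K) (FreeAlgebra.ι K 1)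

/-- The degree of an element of `A₁` in the basis `{x^i ∂^j}`: the least `n` such that the
element lies in the `K`-span of `{x^i ∂^j : i + j ≤ n}`. -/
def wdeg (K : Type*) [CommRing K] (a : Weyl K) : ℕ :=
  sInf {n : ℕ | a ∈ Submodule.span K {w : Weyl K | ∃ i j : ℕ, i + j ≤ n ∧ w = wX K ^ i * wD K ^ j}}

/-!
Every automorphism `σ` transports the family `x ↦ x`, `∂ ↦ ∂ + T` to a nontrivial polynomial
one-parameter family of homomorphisms fixing `σ x`. Passing to leading forms for a weight on `x` and
`∂` turns it into a nontrivial family on `K[x, y]` fixing the leading form of `σ x`. This leaves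
very few possible leading forms: such a form is `c x ^ d` or `c (y ^ v - r x ^ u) ^ N`, since over
an algebraic closure all its factors are fixed as well, and one of `u`, `v` is `1` if `r ≠ 0`, by a
comparison of degrees in the parameter of a Jacobian. With the ordinary degree first, and then with
the weight of an edge of the Newton polygon, one finds an affine automorphism followed by a shear
`∂ ↦ ∂ + r x ^ u` which lowers the degree of `σ x`. Once the degree is `1`, an affine automorphism
reduces to the case `σ x = x`, and then `σ` is a shear.
-/

namespace Weyl

open MvPolynomial
open scoped Polynomial

section Presentation

variable {K : Type*} [CommRing K]

lemma wD_mul_wX : wD K * wX K = wX K * wD K + 1 := by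
  simpa [wD, wX] using RingQuot.mkAlgHom_rel K (WeylRel.rel (K := K))

lemma wD_mul_wX_pow (i : ℕ) :
    wD K * wX K ^ i = wX K ^ i * wD K + (i : K) • wX K ^ (i - 1) := by
  induction i with
  | zero => simp
  | succ i ih =>
    rw [pow_succ, ← mul_assoc, ih, add_mul, mul_assoc, wD_mul_wX]
    rcases i with _ | i
    · simp
    · rw [Nat.add_sub_cancel, smul_mul_assoc, Nat.add_sub_cancel, ← pow_succ, mul_add, ← mul_assoc,
        mul_one, add_assoc]
      congr 1
      push_cast
      module

variable {S : Type*} [Semiring S] [Algebra K S]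

/-- The universal property of `A₁`: a homomorphism is determined by a pair `a`, `b` with
`b * a = a * b + 1`, the images of `x` and `∂`. -/
def lift (a b : S) (h : b * a = a * b + 1) : Weyl K →ₐ[K] S :=
  RingQuot.liftAlgHom K ⟨FreeAlgebra.lift K ![a, b], by
    rintro _ _ ⟨⟩
    simpa using h⟩

@[simp]
lemma lift_wX (a b : S) (h : b * a = a * b + 1) : lift (K := K) a b h (wX K) = a := by
  simp [lift, wX]

@[simp]
lemma lift_wD (a b : S) (h : b * a = a * b + 1) : lift (K := K) a b h (wD K) = b := by
  simp [lift, wD]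

lemma algHom_ext {f g : Weyl K →ₐ[K] S} (hX : f (wX K) = g (wX K)) (hD : f (wD K) = g (wD K)) :
    f = g := by
  refine RingQuot.ringQuot_ext' K f g (FreeAlgebra.hom_ext (funext fun i => ?_))
  fin_cases i
  exacts [hX, hD]

@[elab_as_elim]
lemma induction_on {C : Weyl K → Prop} (a : Weyl K) (algebraMap : ∀ r : K, C (algebraMap K _ r))
    (wX : C (wX K)) (wD : C (wD K)) (mul : ∀ a b, C a → C b → C (a * b))
    (add : ∀ a b, C a → C b → C (a + b)) : C a := by
  obtain ⟨a, rfl⟩ := RingQuot.mkAlgHom_surjective K (WeylRel K) a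
  induction a using FreeAlgebra.induction with
  | grade0 r => simpa using algebraMap r
  | grade1 i => fin_cases i; exacts [wX, wD]
  | mul a b ha hb => rw [map_mul]; exact mul _ _ ha hb
  | add a b ha hb => rw [map_add]; exact add _ _ ha hb

end Presentation

section Symbol

variable {K : Type*} [CommRing K]

/-- The ring `K[x, y]` of symbols of elements of `A₁`: `X 0` stands for `x` and `X 1` for `∂`. -/
abbrev SymbolRing (K : Type*) [CommRing K] := MvPolynomial (Fin 2) K

lemma monomial_eq_X_pow_mul (n : Fin 2 →₀ ℕ) (c : K) :
    (monomial n c : SymbolRing K) = C c * (X 0 ^ n 0 * X 1 ^ n 1) := by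
  rw [monomial_eq, Finsupp.prod_fintype _ _ (by simp), Fin.prod_univ_two]

/-- The representation of `A₁` on `K[x, y]` in which `x` acts by multiplication and `∂` as
`y + ∂/∂x`. Applied to `1` it sends `xⁱ∂ʲ` to `xⁱyʲ`. -/
def polyRep : Weyl K →ₐ[K] Module.End K (SymbolRing K) :=
  lift (LinearMap.mulLeft K (X 0)) (LinearMap.mulLeft K (X 1) + (pderiv (0 : Fin 2)).toLinearMap) <|
    LinearMap.ext fun f => by
      simp only [LinearMap.add_apply, Module.End.mul_apply, LinearMap.mulLeft_apply,
        Derivation.coeFn_coe, Derivation.leibniz, pderiv_X_self, smul_eq_mul, mul_one,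
        Module.End.one_apply]
      ring

@[simp]
lemma polyRep_wX (f : SymbolRing K) : polyRep (wX K) f = X 0 * f := by
  simp [polyRep]

@[simp]
lemma polyRep_wD (f : SymbolRing K) : polyRep (wD K) f = X 1 * f + pderiv 0 f := by
  simp [polyRep]

@[simp]
lemma polyRep_wX_pow (k : ℕ) (f : SymbolRing K) : polyRep (wX K ^ k) f = X 0 ^ k * f := by
  induction k with
  | zero => simp
  | succ k ih => rw [pow_succ', map_mul, Module.End.mul_apply, ih, polyRep_wX]; ring

/-- The symbol of `a = Σ λᵢⱼ xⁱ∂ʲ` is the commutative polynomial `Σ λᵢⱼ xⁱyʲ`. -/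
def symbol : Weyl K →ₗ[K] SymbolRing K :=
  LinearMap.applyₗ 1 ∘ₗ polyRep.toLinearMap

lemma symbol_apply (a : Weyl K) : symbol a = polyRep a 1 := rfl

lemma symbol_mul (a b : Weyl K) : symbol (a * b) = polyRep a (symbol b) := by
  simp [symbol_apply]

@[simp]
lemma symbol_wX : symbol (wX K) = X 0 := by simp [symbol_apply]

@[simp]
lemma symbol_wD : symbol (wD K) = X 1 := by simp [symbol_apply]

@[simp]
lemma symbol_algebraMap (c : K) : symbol (algebraMap K (Weyl K) c) = C c := by
  rw [symbol_apply, AlgHom.commutes, Module.algebraMap_end_apply, smul_eq_C_mul, mul_one]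

variable {S : Type*} [Semiring S] [Algebra K S] {S' : Type*} [Semiring S'] [Algebra K S']

/-- The linear map `xⁱyʲ ↦ aⁱbʲ`; it is multiplicative only if `a` and `b` commute. -/
def orderedEval (a b : S) : SymbolRing K →ₗ[K] S :=
  (basisMonomials (Fin 2) K).constr K fun n => a ^ n 0 * b ^ n 1

@[simp]
lemma orderedEval_monomial (a b : S) (n : Fin 2 →₀ ℕ) (c : K) :
    orderedEval a b (monomial n c) = c • (a ^ n 0 * b ^ n 1) := by
  have h : monomial n c = c • basisMonomials (Fin 2) K n := by
    rw [coe_basisMonomials, smul_monomial, smul_eq_mul, mul_one]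
  rw [h, map_smul, orderedEval, Module.Basis.constr_basis]

lemma map_orderedEval (φ : S →ₐ[K] S') (a b : S) (f : SymbolRing K) :
    φ (orderedEval a b f) = orderedEval (φ a) (φ b) f := by
  induction f using MvPolynomial.induction_on' with
  | monomial n c => simp
  | add f g hf hg => rw [map_add, map_add, map_add, hf, hg]

lemma orderedEval_X_zero_mul (a b : S) (f : SymbolRing K) :
    orderedEval a b (X 0 * f) = a * orderedEval a b f := by
  induction f using MvPolynomial.induction_on' with
  | monomial n c =>
    rw [X, monomial_mul]
    simp [pow_add, mul_assoc]
  | add f g hf hg => rw [mul_add, map_add, map_add, hf, hg, mul_add]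

lemma orderedEval_X_one_mul_add_pderiv (f : SymbolRing K) :
    orderedEval (wX K) (wD K) (X 1 * f + pderiv 0 f) = wD K * orderedEval (wX K) (wD K) f := by
  induction f using MvPolynomial.induction_on' with
  | monomial n c =>
    rw [X, monomial_mul, pderiv_monomial, map_add]
    simp only [orderedEval_monomial, one_mul, mul_smul_comm]
    rw [← mul_assoc (wD K), wD_mul_wX_pow, mul_smul, ← smul_add]
    simp [pow_add, mul_assoc, add_mul]
  | add f g hf hg =>
    rw [map_add (orderedEval _ _) f g, mul_add (wD K), ← hf, ← hg, ← map_add (orderedEval _ _),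
      map_add (pderiv 0)]
    congr 1
    ring

lemma orderedEval_polyRep (a : Weyl K) (f : SymbolRing K) :
    orderedEval (wX K) (wD K) (polyRep a f) = a * orderedEval (wX K) (wD K) f := by
  induction a using induction_on generalizing f with
  | algebraMap r => rw [AlgHom.commutes, Module.algebraMap_end_apply, map_smul, Algebra.smul_def]
  | wX => rw [polyRep_wX, orderedEval_X_zero_mul]
  | wD => rw [polyRep_wD, orderedEval_X_one_mul_add_pderiv]
  | mul a b ha hb => rw [map_mul, Module.End.mul_apply, ha, hb, mul_assoc]
  | add a b ha hb => rw [map_add, LinearMap.add_apply, map_add, ha, hb, add_mul]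

@[simp]
lemma orderedEval_symbol (a : Weyl K) : orderedEval (wX K) (wD K) (symbol a) = a := by
  have h : orderedEval (wX K) (wD K) (1 : SymbolRing K) = 1 := by
    rw [← C_1, C_apply, orderedEval_monomial]
    simp
  rw [symbol_apply, orderedEval_polyRep, h, mul_one]

@[simp]
lemma symbol_orderedEval (f : SymbolRing K) : symbol (orderedEval (wX K) (wD K) f) = f := by
  induction f using MvPolynomial.induction_on' with
  | monomial n c =>
    have hD (k : ℕ) : polyRep (wD K ^ k) 1 = X 1 ^ k := by
      induction k with
      | zero => simp
      | succ k ih =>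
        rw [pow_succ', map_mul, Module.End.mul_apply, ih, polyRep_wD, Derivation.leibniz_pow,
          pderiv_X_of_ne one_ne_zero, smul_zero, smul_zero, add_zero, pow_succ']
    rw [orderedEval_monomial, map_smul, symbol_mul, symbol_apply, hD, polyRep_wX_pow,
      monomial_eq_X_pow_mul, smul_eq_C_mul]
  | add f g hf hg => rw [map_add, map_add, hf, hg]

lemma symbol_injective : Function.Injective (symbol (K := K)) :=
  Function.LeftInverse.injective orderedEval_symbol

lemma algHom_apply_eq_orderedEval (φ : Weyl K →ₐ[K] S) (a : Weyl K) :
    φ a = orderedEval (φ (wX K)) (φ (wD K)) (symbol a) := by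
  rw [← map_orderedEval, orderedEval_symbol]

end Symbol

section WeightFiltration

variable {K : Type*} [CommRing K] {ι : Type*} {w : ι → ℚ} {m m' : ℚ} {f g : MvPolynomial ι K}

variable (K) in
/-- The polynomials all of whose monomials have `w`-weight at most `m`. -/
def weightLE (w : ι → ℚ) (m : ℚ) : Submodule K (MvPolynomial ι K) :=
  restrictSupport K {n | Finsupp.weight w n ≤ m}

variable (K) in
/-- The polynomials all of whose monomials have `w`-weight less than `m`. -/
def weightLT (w : ι → ℚ) (m : ℚ) : Submodule K (MvPolynomial ι K) :=
  restrictSupport K {n | Finsupp.weight w n < m}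

lemma mem_weightLE : f ∈ weightLE K w m ↔ ∀ n, coeff n f ≠ 0 → Finsupp.weight w n ≤ m := by
  simp [weightLE, mem_restrictSupport_iff, Set.subset_def]

lemma mem_weightLT : f ∈ weightLT K w m ↔ ∀ n, coeff n f ≠ 0 → Finsupp.weight w n < m := by
  simp [weightLT, mem_restrictSupport_iff, Set.subset_def]

lemma weightLE_mono (h : m ≤ m') : weightLE K w m ≤ weightLE K w m' :=
  restrictSupport_mono K fun _ hn => le_trans hn h

lemma weightLT_mono (h : m ≤ m') : weightLT K w m ≤ weightLT K w m' :=
  restrictSupport_mono K fun _ hn => lt_of_lt_of_le hn h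

lemma weightLT_le_weightLE : weightLT K w m ≤ weightLE K w m :=
  fun _ hf => mem_weightLE.2 fun n hn => (mem_weightLT.1 hf n hn).le

lemma weightLE_le_weightLT (h : m < m') : weightLE K w m ≤ weightLT K w m' :=
  restrictSupport_mono K fun _ hn => lt_of_le_of_lt hn h

lemma mem_weightLE_of_isWeightedHomogeneous (hf : IsWeightedHomogeneous w f m) :
    f ∈ weightLE K w m :=
  mem_weightLE.2 fun _ hn => (hf hn).le

lemma mul_mem_weightLE (hf : f ∈ weightLE K w m) (hg : g ∈ weightLE K w m') :
    f * g ∈ weightLE K w (m + m') := by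
  have h := Submodule.mul_mem_mul hf hg
  rw [weightLE, weightLE, ← restrictSupport_add] at h
  refine restrictSupport_mono K ?_ h
  rintro _ ⟨a, ha, b, hb, rfl⟩
  simpa only [Set.mem_ofPred_eq, map_add] using add_le_add ha hb

lemma mul_mem_weightLT (hf : f ∈ weightLT K w m) (hg : g ∈ weightLE K w m') :
    f * g ∈ weightLT K w (m + m') := by
  have h := Submodule.mul_mem_mul hf hg
  rw [weightLT, weightLE, ← restrictSupport_add] at h
  refine restrictSupport_mono K ?_ h
  rintro _ ⟨a, ha, b, hb, rfl⟩
  simpa only [Set.mem_ofPred_eq, map_add] using add_lt_add_of_lt_of_le ha hb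

lemma pderiv_mem_weightLE (hf : f ∈ weightLE K w m) (i : ι) :
    pderiv i f ∈ weightLE K w (m - w i) := by
  rw [mem_weightLE] at *
  intro n hn
  rw [coeff_pderiv] at hn
  have h := hf _ (left_ne_zero_of_mul hn)
  rw [map_add, Finsupp.weight_single, one_smul] at h
  linarith

lemma sub_weightedHomogeneousComponent_mem_weightLT (hf : f ∈ weightLE K w m) :
    f - weightedHomogeneousComponent w m f ∈ weightLT K w m := by
  classical
  rw [mem_weightLT]
  intro n hn
  rw [coeff_sub, coeff_weightedHomogeneousComponent] at hn
  split_ifs at hn with hnm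
  · simp at hn
  · exact lt_of_le_of_ne (mem_weightLE.1 hf n (by simpa using hn)) hnm

lemma weight_smul (k : ℚ) (w : ι → ℚ) (n : ι →₀ ℕ) :
    Finsupp.weight (k • w) n = k * Finsupp.weight w n := by
  simp [Finsupp.weight_apply, Finsupp.sum, Finset.mul_sum, mul_left_comm]

lemma weight_fin_two (w : Fin 2 → ℚ) (n : Fin 2 →₀ ℕ) :
    Finsupp.weight w n = n 0 * w 0 + n 1 * w 1 := by
  rw [Finsupp.weight_apply, Finsupp.sum_fintype _ _ (by simp), Fin.sum_univ_two]
  simp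

lemma weight_one_one (n : Fin 2 →₀ ℕ) :
    Finsupp.weight ![(1 : ℚ), 1] n = (n 0 + n 1 : ℕ) := by
  simp [weight_fin_two]

lemma weight_zero_one (n : Fin 2 →₀ ℕ) : Finsupp.weight ![(0 : ℚ), 1] n = n 1 := by
  simp [weight_fin_two]

end WeightFiltration

section LeadingForm

variable {K : Type*} [CommRing K] {w : Fin 2 → ℚ} {m m' : ℚ}

lemma polyRep_wD_pow_sub_mem_weightLT (hw : 0 < w 0 + w 1) {f : SymbolRing K}
    (hf : f ∈ weightLE K w m) (j : ℕ) :
    polyRep (wD K ^ j) f - X 1 ^ j * f ∈ weightLT K w (j * w 1 + m) := by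
  induction j with
  | zero => simp
  | succ j ih =>
    have hX : (X 1 : SymbolRing K) ∈ weightLE K w (w 1) :=
      mem_weightLE_of_isWeightedHomogeneous (isWeightedHomogeneous_X K w 1)
    have hXf : X 1 ^ j * f ∈ weightLE K w (j * w 1 + m) := by
      refine mul_mem_weightLE (mem_weightLE_of_isWeightedHomogeneous ?_) hf
      simpa using (isWeightedHomogeneous_X K w 1).pow j
    set E := polyRep (wD K ^ j) f - X 1 ^ j * f with hE
    have hpoly : polyRep (wD K ^ j) f = X 1 ^ j * f + E := by rw [hE]; ring
    have hsucc : polyRep (wD K ^ (j + 1)) f - X 1 ^ (j + 1) * f =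
        E * X 1 + pderiv 0 (X 1 ^ j * f + E) := by
      rw [pow_succ' (wD K), map_mul, Module.End.mul_apply, hpoly, polyRep_wD]
      ring
    rw [hsucc]
    refine add_mem (weightLT_mono ?_ (mul_mem_weightLT ih hX)) (weightLE_le_weightLT ?_
      (pderiv_mem_weightLE (add_mem hXf (weightLT_le_weightLE ih)) 0))
    · push_cast; linarith
    · push_cast; linarith

lemma polyRep_orderedEval_monomial_sub_mem_weightLT (hw : 0 < w 0 + w 1) {f : SymbolRing K}
    (hf : f ∈ weightLE K w m) (n : Fin 2 →₀ ℕ) (c : K) :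
    polyRep (orderedEval (wX K) (wD K) (monomial n c)) f - monomial n c * f ∈
      weightLT K w (Finsupp.weight w n + m) := by
  have hX : (X 0 ^ n 0 : SymbolRing K) ∈ weightLE K w (n 0 * w 0) := by
    simpa using mem_weightLE_of_isWeightedHomogeneous ((isWeightedHomogeneous_X K w 0).pow (n 0))
  have hD := polyRep_wD_pow_sub_mem_weightLT hw hf (n 1)
  have hweight : n 1 * w 1 + m + n 0 * w 0 = Finsupp.weight w n + m := by
    rw [weight_fin_two]
    ring
  have hXD := hweight ▸ mul_mem_weightLT hD hX
  convert Submodule.smul_mem (weightLT K w (Finsupp.weight w n + m)) c hXD using 1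
  rw [orderedEval_monomial, map_smul, map_mul, LinearMap.smul_apply, Module.End.mul_apply,
    polyRep_wX_pow, monomial_eq_X_pow_mul, smul_eq_C_mul, smul_eq_C_mul]
  ring

lemma symbol_mul_sub_mem_weightLT (hw : 0 < w 0 + w 1) {a b : Weyl K}
    (ha : symbol a ∈ weightLE K w m) (hb : symbol b ∈ weightLE K w m') :
    symbol (a * b) - symbol a * symbol b ∈ weightLT K w (m + m') := by
  have hsum : symbol (a * b) - symbol a * symbol b = ∑ n ∈ (symbol a).support,
      (polyRep (orderedEval (wX K) (wD K) (monomial n (coeff n (symbol a)))) (symbol b) -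
        monomial n (coeff n (symbol a)) * symbol b) := by
    rw [Finset.sum_sub_distrib, ← Finset.sum_mul, ← LinearMap.sum_apply, ← map_sum, ← map_sum,
      ← as_sum, orderedEval_symbol, symbol_mul]
  rw [hsum]
  exact sum_mem fun n hn => weightLT_mono (by
    linarith [mem_weightLE.1 ha n (mem_support_iff.1 hn)])
    (polyRep_orderedEval_monomial_sub_mem_weightLT hw hb n _)

/-- The part of weight `m` of the symbol of `a` is `g`, and no part has larger weight. The form `g`
may be zero, in which case the symbol has weight less than `m`. -/
def IsLeadingForm (w : Fin 2 → ℚ) (m : ℚ) (a : Weyl K) (g : SymbolRing K) : Prop :=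
  IsWeightedHomogeneous w g m ∧ symbol a - g ∈ weightLT K w m

namespace IsLeadingForm

variable {a b : Weyl K} {g h : SymbolRing K}

lemma mem_weightLE (ha : IsLeadingForm w m a g) : symbol a ∈ weightLE K w m := by
  simpa using add_mem (weightLT_le_weightLE ha.2) (mem_weightLE_of_isWeightedHomogeneous ha.1)

protected lemma mul (hw : 0 < w 0 + w 1) (ha : IsLeadingForm w m a g)
    (hb : IsLeadingForm w m' b h) : IsLeadingForm w (m + m') (a * b) (g * h) := by
  refine ⟨ha.1.mul hb.1, ?_⟩
  have h₁ := symbol_mul_sub_mem_weightLT hw ha.mem_weightLE hb.mem_weightLE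
  have h₂ := mul_mem_weightLT ha.2 hb.mem_weightLE
  have h₃ := mul_mem_weightLT hb.2 (mem_weightLE_of_isWeightedHomogeneous ha.1)
  rw [add_comm m' m] at h₃
  convert add_mem (add_mem h₁ h₂) h₃ using 1
  ring

protected lemma add (ha : IsLeadingForm w m a g) (hb : IsLeadingForm w m b h) :
    IsLeadingForm w m (a + b) (g + h) := by
  refine ⟨ha.1.add hb.1, ?_⟩
  rw [map_add, add_sub_add_comm]
  exact add_mem ha.2 hb.2

protected lemma zero : IsLeadingForm w m (0 : Weyl K) 0 :=
  ⟨isWeightedHomogeneous_zero K w m, by simp⟩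

protected lemma sum {ι : Type*} (s : Finset ι) {a : ι → Weyl K} {g : ι → SymbolRing K}
    (h : ∀ i ∈ s, IsLeadingForm w m (a i) (g i)) :
    IsLeadingForm w m (∑ i ∈ s, a i) (∑ i ∈ s, g i) := by
  classical
  induction s using Finset.induction_on with
  | empty => simpa using IsLeadingForm.zero
  | insert i s hi ih =>
    rw [Finset.sum_insert hi, Finset.sum_insert hi]
    exact (h i (by simp)).add (ih fun j hj => h j (by simp [hj]))

protected lemma algebraMap (c : K) : IsLeadingForm w 0 (algebraMap K (Weyl K) c) (C c) :=
  ⟨isWeightedHomogeneous_C w c, by simp⟩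

protected lemma one : IsLeadingForm w 0 (1 : Weyl K) 1 := by
  simpa using IsLeadingForm.algebraMap (w := w) (1 : K)

protected lemma wX : IsLeadingForm w (w 0) (wX K) (X 0) :=
  ⟨isWeightedHomogeneous_X K w 0, by simp⟩

protected lemma wD : IsLeadingForm w (w 1) (wD K) (X 1) :=
  ⟨isWeightedHomogeneous_X K w 1, by simp⟩

protected lemma smul (c : K) (ha : IsLeadingForm w m a g) : IsLeadingForm w m (c • a) (c • g) := by
  refine ⟨?_, ?_⟩
  · rw [smul_eq_C_mul]
    exact ha.1.C_mul c
  · rw [map_smul, ← smul_sub]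
    exact Submodule.smul_mem _ _ ha.2

protected lemma pow (hw : 0 < w 0 + w 1) (ha : IsLeadingForm w m a g) (k : ℕ) :
    IsLeadingForm w (k * m) (a ^ k) (g ^ k) := by
  induction k with
  | zero => simpa using IsLeadingForm.one
  | succ k ih =>
    rw [pow_succ, pow_succ, Nat.cast_add_one, add_one_mul]
    exact ih.mul hw ha

lemma zero_of_mem_weightLT (ha : symbol a ∈ weightLT K w m) : IsLeadingForm w m a 0 :=
  ⟨isWeightedHomogeneous_zero K w m, by rwa [sub_zero]⟩

lemma zero_of_lt (ha : IsLeadingForm w m a g) (h : m < m') : IsLeadingForm w m' a 0 :=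
  zero_of_mem_weightLT (weightLE_le_weightLT h ha.mem_weightLE)

lemma unique (ha : IsLeadingForm w m a g) (hb : IsLeadingForm w m a h) : g = h := by
  have hgh : g - h ∈ weightLT K w m := by simpa using sub_mem hb.2 ha.2
  rw [← sub_eq_zero]
  by_contra hne
  obtain ⟨n, hn⟩ := MvPolynomial.ne_zero_iff.1 hne
  exact (mem_weightLT.1 hgh n hn).ne ((ha.1.sub hb.1) hn)

lemma degree_unique (ha : IsLeadingForm w m a g) (hg : g ≠ 0) (hb : IsLeadingForm w m' a h)
    (hh : h ≠ 0) : m = m' := by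
  rcases lt_trichotomy m m' with hlt | heq | hlt
  · exact absurd (hb.unique (ha.zero_of_lt hlt)) hh
  · exact heq
  · exact absurd (ha.unique (hb.zero_of_lt hlt)) hg

lemma of_mem_weightLE (ha : symbol a ∈ weightLE K w m) :
    IsLeadingForm w m a (weightedHomogeneousComponent w m (symbol a)) :=
  ⟨weightedHomogeneousComponent_isWeightedHomogeneous _ _,
    sub_weightedHomogeneousComponent_mem_weightLT ha⟩

lemma smul_weight {k : ℚ} (hk : 0 < k) (ha : IsLeadingForm w m a g) :
    IsLeadingForm (k • w) (k * m) a g := by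
  obtain ⟨hhom, hlt⟩ := ha
  refine ⟨fun n hn => by rw [weight_smul, hhom hn], mem_weightLT.2 fun n hn => ?_⟩
  rw [weight_smul]
  exact mul_lt_mul_of_pos_left (mem_weightLT.1 hlt n hn) hk

end IsLeadingForm

lemma exists_isLeadingForm (w : Fin 2 → ℚ) {a : Weyl K} (ha : a ≠ 0) :
    ∃ n g, coeff n g ≠ 0 ∧ IsLeadingForm w (Finsupp.weight w n) a g := by
  have hs : symbol a ≠ 0 := fun h => ha (symbol_injective (by rw [h, map_zero]))
  obtain ⟨n, hn, hmax⟩ := Finset.exists_max_image (symbol a).support (Finsupp.weight w)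
    (support_nonempty.2 hs)
  refine ⟨n, _, ?_, .of_mem_weightLE (mem_weightLE.2 fun k hk => hmax k (mem_support_iff.2 hk))⟩
  classical
  rw [coeff_weightedHomogeneousComponent, if_pos rfl]
  exact mem_support_iff.1 hn

end LeadingForm

section PolyLeadingForm

variable {K : Type*} [CommRing K] {w : Fin 2 → ℚ} {e m m' : ℚ}

/-- The analogue of `IsLeadingForm` on `A₁[T]`, where the central variable `T` has weight `e`. -/
def IsPolyLeadingForm (w : Fin 2 → ℚ) (e m : ℚ) (b : (Weyl K)[X]) (g : (SymbolRing K)[X]) : Prop :=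
  ∀ k : ℕ, IsLeadingForm w (m - k * e) (b.coeff k) (g.coeff k)

namespace IsPolyLeadingForm

variable {a b : (Weyl K)[X]} {g h : (SymbolRing K)[X]}

protected lemma mul (hw : 0 < w 0 + w 1) (ha : IsPolyLeadingForm w e m a g)
    (hb : IsPolyLeadingForm w e m' b h) : IsPolyLeadingForm w e (m + m') (a * b) (g * h) := by
  intro k
  rw [Polynomial.coeff_mul, Polynomial.coeff_mul]
  refine IsLeadingForm.sum _ fun ij hij => ?_
  have hk : m + m' - k * e = (m - ij.1 * e) + (m' - ij.2 * e) := by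
    rw [← Finset.HasAntidiagonal.mem_antidiagonal.1 hij]
    push_cast
    ring
  rw [hk]
  exact (ha ij.1).mul hw (hb ij.2)

protected lemma sum {ι : Type*} (s : Finset ι) {a : ι → (Weyl K)[X]} {g : ι → (SymbolRing K)[X]}
    (h : ∀ i ∈ s, IsPolyLeadingForm w e m (a i) (g i)) :
    IsPolyLeadingForm w e m (∑ i ∈ s, a i) (∑ i ∈ s, g i) := by
  intro k
  rw [Polynomial.finsetSum_coeff, Polynomial.finsetSum_coeff]
  exact IsLeadingForm.sum s fun i hi => h i hi k

protected lemma C {a : Weyl K} {g : SymbolRing K} (h : IsLeadingForm w m a g) :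
    IsPolyLeadingForm w e m (Polynomial.C a) (Polynomial.C g) := by
  rintro (_ | k)
  · simpa using h
  · rw [Polynomial.coeff_C_succ, Polynomial.coeff_C_succ]
    exact .zero

protected lemma smul (c : K) (ha : IsPolyLeadingForm w e m a g) :
    IsPolyLeadingForm w e m (c • a) (c • g) := by
  intro k
  rw [Polynomial.coeff_smul, Polynomial.coeff_smul]
  exact (ha k).smul c

protected lemma pow (hw : 0 < w 0 + w 1) (ha : IsPolyLeadingForm w e m a g) (k : ℕ) :
    IsPolyLeadingForm w e (k * m) (a ^ k) (g ^ k) := by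
  induction k with
  | zero => simpa using IsPolyLeadingForm.C IsLeadingForm.one
  | succ k ih =>
    rw [pow_succ, pow_succ, Nat.cast_add_one, add_one_mul]
    exact ih.mul hw ha

lemma zero_of_lt (ha : IsPolyLeadingForm w e m a g) (h : m < m') :
    IsPolyLeadingForm w e m' a 0 :=
  fun k => by simpa using (ha k).zero_of_lt (by linarith)

lemma unique (ha : IsPolyLeadingForm w e m a g) (hb : IsPolyLeadingForm w e m a h) : g = h :=
  Polynomial.ext fun k => (ha k).unique (hb k)

variable {w' : Fin 2 → ℚ}

lemma orderedEval_monomial (hw : 0 < w 0 + w 1) (ha : IsPolyLeadingForm w e (w' 0) a g)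
    (hb : IsPolyLeadingForm w e (w' 1) b h) (n : Fin 2 →₀ ℕ) (c : K) :
    IsPolyLeadingForm w e (Finsupp.weight w' n) (orderedEval a b (monomial n c))
      (aeval ![g, h] (monomial n c)) := by
  rw [Weyl.orderedEval_monomial, monomial_eq_X_pow_mul, weight_fin_two, ← smul_eq_C_mul, map_smul]
  simpa using ((ha.pow hw (n 0)).mul hw (hb.pow hw (n 1))).smul c

lemma orderedEval_of_isWeightedHomogeneous (hw : 0 < w 0 + w 1)
    (ha : IsPolyLeadingForm w e (w' 0) a g) (hb : IsPolyLeadingForm w e (w' 1) b h)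
    {f : SymbolRing K} (hf : IsWeightedHomogeneous w' f m) :
    IsPolyLeadingForm w e m (orderedEval a b f) (aeval ![g, h] f) := by
  rw [f.as_sum, map_sum, map_sum]
  refine .sum _ fun n hn => ?_
  rw [← hf (mem_support_iff.1 hn)]
  exact orderedEval_monomial hw ha hb n _

lemma orderedEval_of_mem_weightLT (hw : 0 < w 0 + w 1)
    (ha : IsPolyLeadingForm w e (w' 0) a g) (hb : IsPolyLeadingForm w e (w' 1) b h)
    {f : SymbolRing K} (hf : f ∈ weightLT K w' m) :
    IsPolyLeadingForm w e m (orderedEval a b f) 0 := by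
  rw [f.as_sum, map_sum]
  simpa using IsPolyLeadingForm.sum f.support (g := 0) fun n hn =>
    (orderedEval_monomial hw ha hb n (coeff n f)).zero_of_lt
      (mem_weightLT.1 hf n (mem_support_iff.1 hn))

lemma map_isLeadingForm (hw : 0 < w 0 + w 1) {φ : Weyl K →ₐ[K] (Weyl K)[X]}
    (hX : IsPolyLeadingForm w e (w' 0) (φ (wX K)) g)
    (hD : IsPolyLeadingForm w e (w' 1) (φ (wD K)) h)
    {a : Weyl K} {f : SymbolRing K} (ha : IsLeadingForm w' m a f) :
    IsPolyLeadingForm w e m (φ a) (aeval ![g, h] f) := by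
  intro k
  rw [algHom_apply_eq_orderedEval φ a, ← add_sub_cancel f (symbol a), map_add, Polynomial.coeff_add]
  simpa using (orderedEval_of_isWeightedHomogeneous hw hX hD ha.1 k).add
    (orderedEval_of_mem_weightLT hw hX hD ha.2 k)

end IsPolyLeadingForm

lemma IsLeadingForm.map (hw : 0 < w 0 + w 1) {w' : Fin 2 → ℚ} {φ : Weyl K →ₐ[K] Weyl K}
    {f g h : SymbolRing K} (hX : IsLeadingForm w (w' 0) (φ (wX K)) g)
    (hD : IsLeadingForm w (w' 1) (φ (wD K)) h) {a : Weyl K} (ha : IsLeadingForm w' m a f) :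
    IsLeadingForm w m (φ a) (aeval ![g, h] f) := by
  have hC := IsPolyLeadingForm.map_isLeadingForm (e := 0) (φ := Polynomial.CAlgHom.comp φ) hw
    (.C hX) (.C hD) ha 0
  have haeval : aeval ![Polynomial.C g, Polynomial.C h] f = Polynomial.C (aeval ![g, h] f) := by
    rw [← Polynomial.CAlgHom_apply (R := K) (aeval ![g, h] f), comp_aeval_apply]
    congr 2
    ext i : 1
    fin_cases i <;> rfl
  simpa [haeval] using hC

end PolyLeadingForm

section Deformation

variable {K : Type*} [CommRing K]

/-- A polynomial one-parameter family of algebra homomorphisms `R → R` which is the identity at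
parameter `0`. The parameter is the variable of `R[X]`; for noncommutative `R` it is central. -/
def IsDeformation {R : Type*} [Semiring R] [Algebra K R] (φ : R →ₐ[K] R[X]) : Prop :=
  ∀ a, (φ a).coeff 0 = a

namespace IsDeformation

variable {R : Type*} [CommRing R] [Algebra K R] {φ : R →ₐ[K] R[X]}

lemma eq_C_iff (hφ : IsDeformation φ) {a : R} :
    φ a = Polynomial.C a ↔ (φ a).natDegree = 0 := by
  refine ⟨fun h => by rw [h, Polynomial.natDegree_C], fun h => ?_⟩
  rw [Polynomial.eq_C_of_natDegree_eq_zero h, hφ a]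

lemma ne_zero (hφ : IsDeformation φ) {a : R} (ha : a ≠ 0) : φ a ≠ 0 := fun h =>
  ha (by rw [← hφ a, h, Polynomial.coeff_zero])

variable [IsDomain R]

lemma eq_C_of_dvd (hφ : IsDeformation φ) {a b : R} (hb : b ≠ 0) (hab : a ∣ b)
    (h : φ b = Polynomial.C b) : φ a = Polynomial.C a := by
  have hdeg := Polynomial.natDegree_le_of_dvd (map_dvd φ hab) (hφ.ne_zero hb)
  rw [hφ.eq_C_iff.1 h] at hdeg
  exact hφ.eq_C_iff.2 (Nat.le_zero.1 hdeg)

lemma eq_C_of_pow (hφ : IsDeformation φ) {a : R} (ha : a ≠ 0) {n : ℕ} (hn : n ≠ 0)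
    (h : φ (a ^ n) = Polynomial.C (a ^ n)) : φ a = Polynomial.C a :=
  hφ.eq_C_of_dvd (pow_ne_zero n ha) (dvd_pow_self a hn) h

end IsDeformation

lemma isDeformation_aeval {ι : Type*} {A : ι → (MvPolynomial ι K)[X]}
    (hA : ∀ i, (A i).coeff 0 = X i) : IsDeformation (aeval (R := K) A) := by
  intro f
  induction f using MvPolynomial.induction_on with
  | C c => rw [aeval_C, Polynomial.algebraMap_apply, Polynomial.coeff_C_zero, algebraMap_eq]
  | add f g hf hg => rw [map_add, Polynomial.coeff_add, hf, hg]
  | mul_X f i hf => rw [map_mul, Polynomial.mul_coeff_zero, hf, aeval_X, hA]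

/-- The extension of scalars of a deformation of a polynomial ring. -/
def baseChange {ι : Type*} (L : Type*) [CommRing L] [Algebra K L]
    (φ : MvPolynomial ι K →ₐ[K] (MvPolynomial ι K)[X]) :
    MvPolynomial ι L →ₐ[L] (MvPolynomial ι L)[X] :=
  aeval fun i => (φ (X i)).map (map (algebraMap K L))

section BaseChange

variable {ι L : Type*} [CommRing L] [Algebra K L]
  {φ : MvPolynomial ι K →ₐ[K] (MvPolynomial ι K)[X]}

lemma baseChange_map (f : MvPolynomial ι K) :
    baseChange L φ (map (algebraMap K L) f) = (φ f).map (map (algebraMap K L)) := by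
  induction f using MvPolynomial.induction_on with
  | C c =>
    rw [map_C, ← algebraMap_eq, AlgHom.commutes, ← algebraMap_eq, AlgHom.commutes,
      Polynomial.algebraMap_apply, Polynomial.algebraMap_apply, Polynomial.map_C, algebraMap_eq,
      algebraMap_eq, map_C]
  | add f g hf hg => rw [map_add, map_add, hf, hg, map_add, Polynomial.map_add]
  | mul_X f i hf =>
    rw [map_mul, map_mul, hf, map_X, baseChange, aeval_X, map_mul, Polynomial.map_mul]

lemma IsDeformation.baseChange (hφ : IsDeformation φ) : IsDeformation (baseChange L φ) :=
  isDeformation_aeval fun i => by rw [Polynomial.coeff_map, hφ, map_X]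

lemma baseChange_map_eq_C (hL : Function.Injective (algebraMap K L)) {f : MvPolynomial ι K} :
    Weyl.baseChange L φ (map (algebraMap K L) f) = Polynomial.C (map (algebraMap K L) f) ↔
      φ f = Polynomial.C f := by
  rw [baseChange_map, ← Polynomial.map_C]
  exact (Polynomial.map_injective _ (map_injective _ hL)).eq_iff

lemma baseChange_ne_CAlgHom (hL : Function.Injective (algebraMap K L))
    (hφ : φ ≠ Polynomial.CAlgHom) : Weyl.baseChange L φ ≠ Polynomial.CAlgHom := by
  refine fun h => hφ (MvPolynomial.algHom_ext fun i => ?_)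
  exact (baseChange_map_eq_C hL).1 (by rw [h, Polynomial.CAlgHom_apply])

end BaseChange

end Deformation

section InitialDeformation

variable {K : Type*} [CommRing K] {w : Fin 2 → ℚ}

lemma exists_isPolyLeadingForm {e m : ℚ} {b : (Weyl K)[X]}
    (hb : ∀ k : ℕ, symbol (b.coeff k) ∈ weightLE K w (m - k * e)) :
    ∃ g, IsPolyLeadingForm w e m b g := by
  refine ⟨∑ k ∈ b.support,
    Polynomial.monomial k (weightedHomogeneousComponent w (m - k * e) (symbol (b.coeff k))),
    fun k => ?_⟩
  convert IsLeadingForm.of_mem_weightLE (hb k) using 1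
  rw [Polynomial.finsetSum_coeff]
  simp only [Polynomial.coeff_monomial, Finset.sum_ite_eq', Polynomial.mem_support_iff,
    ite_eq_left_iff, not_not]
  intro hk
  rw [hk, map_zero, map_zero]

lemma exists_deformationWeight (w : Fin 2 → ℚ) {b : Fin 2 → (Weyl K)[X]}
    (hb : ∃ i, ∃ k ≠ 0, (b i).coeff k ≠ 0) :
    ∃ e : ℚ, (∀ i, ∀ k : ℕ, k ≠ 0 → symbol ((b i).coeff k) ∈ weightLE K w (w i - k * e)) ∧
      ∃ i, ∃ k : ℕ, k ≠ 0 ∧ ∃ n, coeff n (symbol ((b i).coeff k)) ≠ 0 ∧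
        Finsupp.weight w n = w i - k * e := by
  classical
  let terms : Finset (Σ _ : Fin 2, Σ _ : ℕ, Fin 2 →₀ ℕ) :=
    Finset.univ.sigma fun i => ((b i).support.erase 0).sigma fun k =>
      (symbol ((b i).coeff k)).support
  have mem_terms {i k n} :
      ⟨i, k, n⟩ ∈ terms ↔ k ≠ 0 ∧ coeff n (symbol ((b i).coeff k)) ≠ 0 := by
    simp only [terms, Finset.mem_sigma, Finset.mem_univ, Finset.mem_erase,
      Polynomial.mem_support_iff, mem_support_iff, true_and]
    refine ⟨fun h => ⟨h.1.1, h.2⟩, fun h => ⟨⟨h.1, fun h0 => h.2 ?_⟩, h.2⟩⟩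
    rw [h0, map_zero, coeff_zero]
  have hterms : terms.Nonempty := by
    obtain ⟨i, k, hk, hbk⟩ := hb
    obtain ⟨n, hn⟩ := MvPolynomial.ne_zero_iff.1
      ((map_ne_zero_iff symbol symbol_injective).2 hbk)
    exact ⟨⟨i, k, n⟩, mem_terms.2 ⟨hk, hn⟩⟩
  obtain ⟨⟨i, k, n⟩, hmem, hmin⟩ := terms.exists_min_image
    (fun t => (w t.1 - Finsupp.weight w t.2.2) / t.2.1) hterms
  obtain ⟨hk, hn⟩ := mem_terms.1 hmem
  refine ⟨(w i - Finsupp.weight w n) / k, fun i' k' hk' => mem_weightLE.2 fun n' hn' => ?_,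
    i, k, hk, n, hn, ?_⟩
  · have hle := hmin ⟨i', k', n'⟩ (mem_terms.2 ⟨hk', hn'⟩)
    dsimp only at hle
    rw [le_div_iff₀ (by positivity)] at hle
    linarith
  · field_simp
    ring

/-- The associated graded deformation: give `T` the largest weight for which `φ` does not raise
weights, and take leading forms of the images of the generators. -/
theorem IsDeformation.exists_initial {φ : Weyl K →ₐ[K] (Weyl K)[X]} (hφ : IsDeformation φ)
    (hne : φ ≠ Polynomial.CAlgHom) (hw : 0 < w 0 + w 1) :
    ∃ Φ : SymbolRing K →ₐ[K] (SymbolRing K)[X], IsDeformation Φ ∧ Φ ≠ Polynomial.CAlgHom ∧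
      ∀ a m f, φ a = Polynomial.C a → IsLeadingForm w m a f → Φ f = Polynomial.C f := by
  have hgen (i : Fin 2) : IsLeadingForm w (w i) (![wX K, wD K] i) (X i) := by
    fin_cases i
    exacts [.wX, .wD]
  have hne' : ∃ i, ∃ k ≠ 0, (φ (![wX K, wD K] i)).coeff k ≠ 0 := by
    by_contra! h
    have hC (i : Fin 2) : φ (![wX K, wD K] i) = Polynomial.CAlgHom (R := K) (![wX K, wD K] i) := by
      ext k
      rcases eq_or_ne k 0 with rfl | hk
      · simp [hφ _]
      · rw [h i k hk, Polynomial.CAlgHom_apply, Polynomial.coeff_C_of_ne_zero hk]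
    exact hne (algHom_ext (hC 0) (hC 1))
  obtain ⟨e, hle, i, k, hk, n, hn, hweight⟩ := exists_deformationWeight w hne'
  have hA (j : Fin 2) : ∃ g, IsPolyLeadingForm w e (w j) (φ (![wX K, wD K] j)) g := by
    refine exists_isPolyLeadingForm fun l => ?_
    rcases eq_or_ne l 0 with rfl | hl
    · simpa [hφ _] using (hgen j).mem_weightLE
    · exact hle j l hl
  choose A hA using hA
  refine ⟨aeval A, isDeformation_aeval fun j => ?_, fun hC => hn ?_, fun a m f ha hf => ?_⟩
  · have h := hA j 0
    rw [hφ, Nat.cast_zero, zero_mul, sub_zero] at h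
    exact h.unique (hgen j)
  · have hAik : (A i).coeff k = 0 := by
      rw [← aeval_X (R := K) A i, hC, Polynomial.CAlgHom_apply, Polynomial.coeff_C_of_ne_zero hk]
    have h := (hA i k).2
    rw [hAik, sub_zero] at h
    by_contra hn0
    exact (mem_weightLT.1 h n hn0).ne hweight
  · have hmap : IsPolyLeadingForm w e m (φ a) (aeval ![A 0, A 1] f) :=
      IsPolyLeadingForm.map_isLeadingForm hw (hA 0) (hA 1) hf
    have hA₂ : A = ![A 0, A 1] := (FinVec.etaExpand_eq A).symm
    rw [ha, ← hA₂] at hmap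
    exact hmap.unique (.C hf)

/-- The deformation `σ ∘ (x ↦ x, ∂ ↦ ∂ + T) ∘ σ⁻¹` of `A₁`. -/
def translation (σ : Weyl K ≃ₐ[K] Weyl K) : Weyl K →ₐ[K] (Weyl K)[X] :=
  ((Polynomial.mapAlgHom (σ : Weyl K →ₐ[K] Weyl K)).comp
    (lift (Polynomial.C (wX K)) (Polynomial.C (wD K) + Polynomial.X) (by
      rw [add_mul, mul_add, ← map_mul, ← map_mul, wD_mul_wX, Polynomial.X_mul]
      simp [add_right_comm]))).comp σ.symm

variable (σ : Weyl K ≃ₐ[K] Weyl K)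

@[simp]
lemma translation_wX : translation σ (σ (wX K)) = Polynomial.C (σ (wX K)) := by
  simp [translation]

@[simp]
lemma translation_wD : translation σ (σ (wD K)) = Polynomial.C (σ (wD K)) + Polynomial.X := by
  simp [translation]

lemma isDeformation_translation : IsDeformation (translation σ) := by
  intro a
  obtain ⟨a, rfl⟩ := σ.surjective a
  induction a using induction_on with
  | algebraMap c => simp
  | wX => simp
  | wD => simp
  | mul a b ha hb => rw [map_mul, map_mul, Polynomial.mul_coeff_zero, ha, hb]
  | add a b ha hb => rw [map_add, map_add, Polynomial.coeff_add, ha, hb]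

lemma translation_ne_CAlgHom [Nontrivial K] : translation σ ≠ Polynomial.CAlgHom := by
  intro h
  have hD : (0 : Weyl K) = 1 := by
    simpa [h, Polynomial.coeff_C] using congrArg (Polynomial.coeff · 1) (translation_wD σ)
  have hsymbol := congrArg symbol hD
  rw [← map_one (algebraMap K (Weyl K)), symbol_algebraMap, map_zero, map_one] at hsymbol
  exact zero_ne_one hsymbol

theorem exists_isDeformation_leadingForm_eq_C [Nontrivial K] (hw : 0 < w 0 + w 1) {m : ℚ}
    {f : SymbolRing K} (hf : IsLeadingForm w m (σ (wX K)) f) :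
    ∃ Φ : SymbolRing K →ₐ[K] (SymbolRing K)[X], IsDeformation Φ ∧ Φ ≠ Polynomial.CAlgHom ∧
      Φ f = Polynomial.C f := by
  obtain ⟨Φ, hΦ, hne, hinv⟩ :=
    (isDeformation_translation σ).exists_initial (translation_ne_CAlgHom σ) hw
  exact ⟨Φ, hΦ, hne, hinv _ _ _ (translation_wX σ) hf⟩

end InitialDeformation

section QuasiHomogeneous

/-- The form `Σ pₖ xᵘ⁽ᴺ⁻ᵏ⁾yᵛᵏ`, where `p = Σ pₖ tᵏ` has degree `N`: it is homogeneous if `x` has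
weight `v` and `y` has weight `u`. -/
def quasiHomogenize {K : Type*} [CommRing K] (u v : ℕ) (p : K[X]) : SymbolRing K :=
  aeval ![X 1 ^ v, X 0 ^ u] (p.homogenize p.natDegree)

section CommRing

variable {K : Type*} [CommRing K] {u v d : ℕ}

lemma quasiHomogenize_dvd [IsDomain K] (u v : ℕ) {p q : K[X]} (h : p ∣ q) :
    quasiHomogenize u v p ∣ quasiHomogenize u v q :=
  map_dvd _ (Polynomial.homogenize_dvd h)

@[simp]
lemma quasiHomogenize_C (u v : ℕ) (c : K) : quasiHomogenize u v (Polynomial.C c) = C c := by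
  simp [quasiHomogenize]

@[simp]
lemma quasiHomogenize_X_sub_C [Nontrivial K] (u v : ℕ) (r : K) :
    quasiHomogenize u v (Polynomial.X - Polynomial.C r) = X 1 ^ v - r • X 0 ^ u := by
  simp [quasiHomogenize, smul_eq_C_mul]

lemma quasiHomogenize_mul [IsDomain K] (u v : ℕ) {p q : K[X]} (hp : p ≠ 0) (hq : q ≠ 0) :
    quasiHomogenize u v (p * q) = quasiHomogenize u v p * quasiHomogenize u v q := by
  rw [quasiHomogenize, Polynomial.natDegree_mul hp hq, Polynomial.homogenize_mul _ _ le_rfl le_rfl,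
    map_mul, quasiHomogenize, quasiHomogenize]

lemma quasiHomogenize_pow [IsDomain K] (u v : ℕ) {p : K[X]} (hp : p ≠ 0) (N : ℕ) :
    quasiHomogenize u v (p ^ N) = quasiHomogenize u v p ^ N := by
  induction N with
  | zero => simpa using quasiHomogenize_C u v (1 : K)
  | succ N ih => rw [pow_succ, quasiHomogenize_mul u v (pow_ne_zero N hp) hp, ih, pow_succ]

lemma quasiHomogenize_map {L : Type*} [CommRing L] {φ : K →+* L} (hφ : Function.Injective φ)
    (u v : ℕ) (p : K[X]) : quasiHomogenize u v (p.map φ) = map φ (quasiHomogenize u v p) := by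
  rw [quasiHomogenize, Polynomial.natDegree_map_eq_of_injective hφ, Polynomial.homogenize_map,
    quasiHomogenize, aeval_def, aeval_def, eval₂_map, eval₂_comp_left (map φ)]
  congr 1
  · ext
    simp [algebraMap_eq]
  · ext i : 1
    fin_cases i <;> simp

lemma quasiHomogenize_C_mul_X_sub_C_pow [IsDomain K] (u v : ℕ) (c r : K) (N : ℕ) :
    quasiHomogenize u v (Polynomial.C c * (Polynomial.X - Polynomial.C r) ^ N) =
      c • (X 1 ^ v - r • X 0 ^ u) ^ N := by
  rcases eq_or_ne c 0 with rfl | hc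
  · simpa using quasiHomogenize_C u v (0 : K)
  have hX := Polynomial.X_sub_C_ne_zero r
  rw [quasiHomogenize_mul u v (Polynomial.C_ne_zero.2 hc) (pow_ne_zero _ hX),
    quasiHomogenize_pow u v hX, quasiHomogenize_C, quasiHomogenize_X_sub_C, ← smul_eq_C_mul]

lemma homogenize_eq_mul_X_one_pow {p : K[X]} {N : ℕ} (h : p.natDegree ≤ N) :
    p.homogenize N = p.homogenize p.natDegree * X 1 ^ (N - p.natDegree) := by
  rw [← Polynomial.homogenize_one, ← Polynomial.homogenize_mul _ _ le_rfl (by simp), mul_one,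
    Nat.add_sub_cancel' h]

lemma mul_div_eq_and_add_mul_div_eq (hv : v ≠ 0) (huv : u.Coprime v) {f : SymbolRing K}
    (hf : IsWeightedHomogeneous ![(v : ℚ), u] f (v * d)) {n : Fin 2 →₀ ℕ} (hn : coeff n f ≠ 0) :
    v * (n 1 / v) = n 1 ∧ n 0 + u * (n 1 / v) = d := by
  have hweight : n 0 * v + n 1 * u = v * d := by
    have h := hf hn
    simp only [weight_fin_two, Matrix.cons_val_zero, Matrix.cons_val_one] at h
    exact_mod_cast h
  have hdvd : v ∣ n 1 := by
    refine huv.symm.dvd_of_dvd_mul_right ((Nat.dvd_add_right (Dvd.intro_left (n 0) rfl)).1 ?_)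
    exact hweight ▸ Dvd.intro d rfl
  obtain ⟨k, hk⟩ := hdvd
  rw [hk, Nat.mul_div_cancel_left k (Nat.pos_of_ne_zero hv)]
  refine ⟨rfl, Nat.eq_of_mul_eq_mul_left (Nat.pos_of_ne_zero hv) ?_⟩
  rw [← hweight, hk]
  ring

lemma exists_eq_X_pow_mul_quasiHomogenize (hu : u ≠ 0) (hv : v ≠ 0) (huv : u.Coprime v)
    {f : SymbolRing K} (hf : IsWeightedHomogeneous ![(v : ℚ), u] f (v * d)) :
    ∃ p : K[X], u * p.natDegree ≤ d ∧
      f = X 0 ^ (d - u * p.natDegree) * quasiHomogenize u v p := by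
  have hsupp {n} (hn : n ∈ f.support) :=
    mul_div_eq_and_add_mul_div_eq hv huv hf (mem_support_iff.1 hn)
  have hle {n} (hn : n ∈ f.support) : n 1 / v ≤ d / u := by
    rw [Nat.le_div_iff_mul_le (Nat.pos_of_ne_zero hu), mul_comm]
    exact (hsupp hn).2 ▸ Nat.le_add_left _ _
  let p : K[X] := ∑ n ∈ f.support, Polynomial.monomial (n 1 / v) (coeff n f)
  have hdeg : p.natDegree ≤ d / u := Polynomial.natDegree_sum_le_of_forall_le _ _ fun n hn =>
    (Polynomial.natDegree_monomial_le _).trans (hle hn)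
  have hdu : u * (d / u) ≤ d := Nat.mul_div_le d u
  have hf_eq : f = X 0 ^ (d - u * (d / u)) *
      aeval (R := K) ![X 1 ^ v, X 0 ^ u] (p.homogenize (d / u)) := by
    conv_lhs => rw [f.as_sum]
    rw [Polynomial.homogenize_finsetSum, map_sum, Finset.mul_sum]
    refine Finset.sum_congr rfl fun n hn => ?_
    have hexp : d - u * (d / u) + u * (d / u - n 1 / v) = n 0 := by
      have := Nat.mul_le_mul_left u (hle hn)
      have := (hsupp hn).2
      rw [Nat.mul_sub]
      omega
    rw [Polynomial.homogenize_monomial (hle hn), monomial_eq_X_pow_mul, monomial_eq_X_pow_mul]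
    simp only [map_mul, map_pow, aeval_X, algHom_C, algebraMap_eq]
    simp only [← hexp, pow_add, Matrix.cons_val_zero, Finsupp.coe_update, ne_eq, zero_ne_one,
      not_false_eq_true, Function.update_of_ne, Finsupp.single_eq_same, ← pow_mul, (hsupp hn).1,
      Matrix.cons_val_one, Matrix.cons_val_fin_one, Function.update_self]
    ring
  have hdeg' := Nat.mul_le_mul_left u hdeg
  refine ⟨p, hdeg'.trans hdu, ?_⟩
  rw [hf_eq, homogenize_eq_mul_X_one_pow hdeg, map_mul, map_pow, aeval_X, Matrix.cons_val_one,
    Matrix.cons_val_fin_one, ← pow_mul, mul_comm (aeval _ _), ← mul_assoc, ← pow_add,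
    quasiHomogenize]
  congr 2
  rw [Nat.mul_sub]
  omega

end CommRing

end QuasiHomogeneous

section FixedForms

namespace IsDeformation

variable {K : Type*} [CommRing K] [IsDomain K] {u v : ℕ} {Φ : SymbolRing K →ₐ[K] (SymbolRing K)[X]}

lemma eq_CAlgHom (hΦ : IsDeformation Φ) (hu : u ≠ 0) (hv : v ≠ 0) {r : K}
    (h₀ : Φ (X 0 ^ u) = Polynomial.C (X 0 ^ u))
    (h : Φ (X 1 ^ v - r • X 0 ^ u) = Polynomial.C (X 1 ^ v - r • X 0 ^ u)) :
    Φ = Polynomial.CAlgHom := by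
  have h₁ : Φ (X 1 ^ v) = Polynomial.C (X 1 ^ v) := by
    rw [map_sub, map_smul, h₀, map_sub, ← Polynomial.smul_C] at h
    exact sub_left_injective h
  refine MvPolynomial.algHom_ext fun i => ?_
  fin_cases i
  exacts [hΦ.eq_C_of_pow (X_ne_zero 0) hu h₀, hΦ.eq_C_of_pow (X_ne_zero 1) hv h₁]

lemma eq_of_map_eq_C (hΦ : IsDeformation Φ) (hne : Φ ≠ Polynomial.CAlgHom) (hu : u ≠ 0)
    (hv : v ≠ 0) {r s : K} (hr : Φ (X 1 ^ v - r • X 0 ^ u) = Polynomial.C (X 1 ^ v - r • X 0 ^ u))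
    (hs : Φ (X 1 ^ v - s • X 0 ^ u) = Polynomial.C (X 1 ^ v - s • X 0 ^ u)) : r = s := by
  by_contra hrs
  have hsub : Φ ((s - r) • X 0 ^ u) = Polynomial.C ((s - r) • X 0 ^ u) := by
    have h : (s - r) • (X 0 ^ u : SymbolRing K) =
        (X 1 ^ v - r • X 0 ^ u) - (X 1 ^ v - s • X 0 ^ u) := by module
    rw [h, map_sub, hr, hs, ← map_sub]
  rw [map_smul, ← Polynomial.smul_C] at hsub
  exact hne (hΦ.eq_CAlgHom hu hv (smul_right_injective _ (sub_ne_zero.2 (Ne.symm hrs)) hsub) hr)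

lemma exists_algebraMap_eq {K L : Type*} [Field K] [Field L] [Algebra K L]
    {Φ : SymbolRing K →ₐ[K] (SymbolRing K)[X]} (hΦ : IsDeformation Φ)
    (hne : Φ ≠ Polynomial.CAlgHom) (hu : u ≠ 0) (hv : v ≠ 0) {r : L}
    (hr : Weyl.baseChange L Φ (X 1 ^ v - r • X 0 ^ u) =
      Polynomial.C (X 1 ^ v - r • X 0 ^ u)) :
    ∃ r₀ : K, algebraMap K L r₀ = r := by
  have hmap (i : Fin 2) (n : ℕ) : Weyl.baseChange L Φ (X i ^ n) =
      (Φ (X i ^ n)).map (map (algebraMap K L)) := by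
    rw [← baseChange_map, map_pow, map_pow, map_pow, map_X]
  have hcoeff {k : ℕ} (hk : k ≠ 0) (n : Fin 2 →₀ ℕ) :
      algebraMap K L (coeff n ((Φ (X 1 ^ v)).coeff k)) =
        r * algebraMap K L (coeff n ((Φ (X 0 ^ u)).coeff k)) := by
    have h := congrArg (fun P => coeff n (P.coeff k)) hr
    rw [map_sub, map_smul, hmap, hmap] at h
    simpa only [Polynomial.coeff_sub, Polynomial.coeff_smul, Polynomial.coeff_map, coeff_sub,
      coeff_smul, coeff_map, Polynomial.coeff_C_of_ne_zero hk, coeff_zero, smul_eq_mul,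
      sub_eq_zero] using h
  obtain ⟨k, hk, n, hn⟩ : ∃ k ≠ 0, ∃ n, coeff n ((Φ (X 0 ^ u)).coeff k) ≠ 0 := by
    by_contra! h
    have h₀ : Φ (X 0 ^ u) = Polynomial.C (X 0 ^ u) :=
      hΦ.eq_C_iff.2 (Polynomial.natDegree_eq_zero.2 ⟨_, (Polynomial.ext fun k => by
        rcases eq_or_ne k 0 with rfl | hk
        · exact Polynomial.coeff_C_zero
        · rw [Polynomial.coeff_C_of_ne_zero hk]
          exact (MvPolynomial.ext _ _ (h k hk)).symm)⟩)
    have h₀' : Weyl.baseChange L Φ (X 0 ^ u) = Polynomial.C (X 0 ^ u) := by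
      rw [hmap, h₀, Polynomial.map_C, map_pow, map_X]
    exact baseChange_ne_CAlgHom (algebraMap K L).injective hne
      (hΦ.baseChange.eq_CAlgHom hu hv h₀' hr)
  refine ⟨coeff n ((Φ (X 1 ^ v)).coeff k) / coeff n ((Φ (X 0 ^ u)).coeff k), ?_⟩
  rw [map_div₀, hcoeff hk, mul_div_cancel_right₀]
  exact (map_ne_zero _).2 hn

end IsDeformation

lemma eq_C_mul_X_sub_C_pow_of_forall_isRoot {K L : Type*} [Field K] [Field L] [IsAlgClosed L]
    [Algebra K L] {p : K[X]} {r : K}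
    (h : ∀ s : L, (p.map (algebraMap K L)).IsRoot s → s = algebraMap K L r) :
    p = Polynomial.C p.leadingCoeff * (Polynomial.X - Polynomial.C r) ^ p.natDegree := by
  apply Polynomial.map_injective _ (algebraMap K L).injective
  have hroots : (p.map (algebraMap K L)).roots =
      Multiset.replicate p.natDegree (algebraMap K L r) := by
    rw [Multiset.eq_replicate, ← (IsAlgClosed.splits _).natDegree_eq_card_roots,
      Polynomial.natDegree_map]
    exact ⟨rfl, fun s hs => h s (Polynomial.isRoot_of_mem_roots hs)⟩
  rw [(IsAlgClosed.splits (p.map (algebraMap K L))).eq_prod_roots, hroots]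
  simp

/-- Over an algebraic closure a fixed quasi-homogeneous form is a product of factors `x` and
`yᵛ - r xᵘ`, each of which is fixed; two different ones would make the deformation trivial. -/
theorem IsDeformation.eq_smul_X_pow_or_eq_smul_pow {K : Type*} [Field K] {u v d : ℕ}
    {Φ : SymbolRing K →ₐ[K] (SymbolRing K)[X]} (hΦ : IsDeformation Φ)
    (hne : Φ ≠ Polynomial.CAlgHom) (hu : u ≠ 0) (hv : v ≠ 0) (huv : u.Coprime v) {f : SymbolRing K}
    (hf : IsWeightedHomogeneous ![(v : ℚ), u] f (v * d)) (hf0 : f ≠ 0)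
    (hfix : Φ f = Polynomial.C f) :
    (∃ c : K, f = c • X 0 ^ d) ∨ ∃ (c r : K) (N : ℕ), N ≠ 0 ∧ u * N = d ∧
      f = c • (X 1 ^ v - r • X 0 ^ u) ^ N ∧
      Φ (X 1 ^ v - r • X 0 ^ u) = Polynomial.C (X 1 ^ v - r • X 0 ^ u) := by
  obtain ⟨p, hpd, rfl⟩ := exists_eq_X_pow_mul_quasiHomogenize hu hv huv hf
  rcases eq_or_ne p.natDegree 0 with hN | hN
  · left
    obtain ⟨c, rfl⟩ := Polynomial.natDegree_eq_zero.1 hN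
    exact ⟨c, by rw [hN, mul_zero, Nat.sub_zero, quasiHomogenize_C, mul_comm, smul_eq_C_mul]⟩
  right
  let L := AlgebraicClosure K
  have hinj : Function.Injective (algebraMap K L) := (algebraMap K L).injective
  have hfactor {s : L} (hs : (p.map (algebraMap K L)).IsRoot s) :
      Weyl.baseChange L Φ (X 1 ^ v - s • X 0 ^ u) = Polynomial.C (X 1 ^ v - s • X 0 ^ u) := by
    refine hΦ.baseChange.eq_C_of_dvd ((map_ne_zero_iff _ (map_injective _ hinj)).2 hf0) ?_
      ((baseChange_map_eq_C hinj).2 hfix)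
    rw [map_mul, ← quasiHomogenize_map hinj, ← quasiHomogenize_X_sub_C]
    exact (quasiHomogenize_dvd u v (Polynomial.dvd_iff_isRoot.2 hs)).mul_left _
  obtain ⟨s, hs⟩ := IsAlgClosed.exists_root (p.map (algebraMap K L))
    (Polynomial.degree_ne_of_natDegree_ne (by rwa [Polynomial.natDegree_map]))
  obtain ⟨r, rfl⟩ := hΦ.exists_algebraMap_eq hne hu hv (hfactor hs)
  have hp := eq_C_mul_X_sub_C_pow_of_forall_isRoot fun s' hs' => hΦ.baseChange.eq_of_map_eq_C
    (baseChange_ne_CAlgHom hinj hne) hu hv (hfactor hs') (hfactor hs)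
  have hf_eq : quasiHomogenize u v p =
      p.leadingCoeff • (X 1 ^ v - r • X 0 ^ u) ^ p.natDegree := by
    rw [← quasiHomogenize_C_mul_X_sub_C_pow, ← hp]
  have hr : Φ (X 1 ^ v - r • X 0 ^ u) = Polynomial.C (X 1 ^ v - r • X 0 ^ u) := by
    refine hΦ.eq_C_of_dvd hf0 (dvd_mul_of_dvd_right ?_ _) hfix
    rw [hf_eq]
    exact dvd_smul_of_dvd _ (dvd_pow_self _ hN)
  have hd : d - u * p.natDegree = 0 := by
    by_contra hd
    have hX := hΦ.eq_C_of_dvd hf0 ((dvd_pow_self (X 0) hd).mul_right _) hfix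
    exact hne (hΦ.eq_CAlgHom hu hv (by rw [map_pow, hX, map_pow]) hr)
  refine ⟨p.leadingCoeff, r, p.natDegree, hN, by omega, ?_, hr⟩
  rw [hd, pow_zero, one_mul, hf_eq]

end FixedForms

section Jacobian

/-- The derivation of `R[X]` obtained by applying a derivation of `R` to the coefficients. -/
def coeffDerivation {K R : Type*} [CommRing K] [CommRing R] [Algebra K R] (δ : Derivation K R R) :
    Derivation K R[X] R[X] :=
  (PolynomialModule.equivPolynomialSelf (R := R)).toLinearMap.compDer δ.mapCoeffs

section CommRing

variable {K R : Type*} [CommRing K] [CommRing R] [Algebra K R] (δ : Derivation K R R)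

lemma coeff_coeffDerivation (P : R[X]) (k : ℕ) :
    (coeffDerivation δ P).coeff k = δ (P.coeff k) := rfl

lemma coeffDerivation_C (a : R) :
    coeffDerivation δ (Polynomial.C a) = Polynomial.C (δ a) := by
  ext k
  rw [coeff_coeffDerivation, Polynomial.coeff_C, Polynomial.coeff_C, apply_ite δ, map_zero]

lemma natDegree_coeffDerivation_le (P : R[X]) :
    (coeffDerivation δ P).natDegree ≤ P.natDegree :=
  Polynomial.natDegree_le_iff_coeff_eq_zero.2 fun k hk => by
    rw [coeff_coeffDerivation, Polynomial.coeff_eq_zero_of_natDegree_lt hk, map_zero]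

end CommRing

variable {K : Type*} [CommRing K] {u v : ℕ}

/-- The Jacobian determinant of two polynomials over `K[x, y]` with respect to `x` and `y`. -/
def jacobian (P Q : (SymbolRing K)[X]) : (SymbolRing K)[X] :=
  coeffDerivation (pderiv 0) P * coeffDerivation (pderiv 1) Q -
    coeffDerivation (pderiv 1) P * coeffDerivation (pderiv 0) Q

lemma jacobian_swap (P Q : (SymbolRing K)[X]) : jacobian Q P = -jacobian P Q := by
  rw [jacobian, jacobian]
  ring

lemma IsDeformation.jacobian_ne_zero [Nontrivial K] {Φ : SymbolRing K →ₐ[K] (SymbolRing K)[X]}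
    (hΦ : IsDeformation Φ) : jacobian (Φ (X 0)) (Φ (X 1)) ≠ 0 := by
  intro h
  have h₀ := congrArg (Polynomial.coeff · 0) h
  simp [jacobian, Polynomial.mul_coeff_zero, coeff_coeffDerivation, hΦ _, pderiv_X] at h₀

/-- Differentiating `α Pᵘ + β Qᵛ = h` and eliminating `Q` writes `α u Pᵘ⁻¹ J(P, Q)` as a
combination of derivatives of `Q` with coefficients not involving the parameter. -/
lemma natDegree_le_of_smul_pow_add_smul_pow_eq_C [IsDomain K] {P Q : (SymbolRing K)[X]}
    {α β : K} {h : SymbolRing K} (hPQ : α • P ^ u + β • Q ^ v = Polynomial.C h)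
    (hJ : jacobian P Q ≠ 0) (hα : α ≠ 0) (hu : (u : K) ≠ 0) (hP : P ≠ 0) :
    (u - 1) * P.natDegree ≤ Q.natDegree := by
  have hδ (i : Fin 2) : α • u • (P ^ (u - 1) * coeffDerivation (pderiv i) P) +
      β • v • (Q ^ (v - 1) * coeffDerivation (pderiv i) Q) = Polynomial.C (pderiv i h) := by
    have hi := congrArg (coeffDerivation (pderiv i)) hPQ
    rwa [map_add, Derivation.map_smul, Derivation.map_smul, Derivation.leibniz_pow,
      Derivation.leibniz_pow, coeffDerivation_C, smul_eq_mul, smul_eq_mul] at hi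
  have hJ_eq : (α * u) • (P ^ (u - 1) * jacobian P Q) =
      Polynomial.C (pderiv 0 h) * coeffDerivation (pderiv 1) Q -
        Polynomial.C (pderiv 1 h) * coeffDerivation (pderiv 0) Q := by
    rw [← hδ 0, ← hδ 1, jacobian]
    simp only [← Nat.cast_smul_eq_nsmul K, Algebra.smul_def, map_mul]
    ring
  calc (u - 1) * P.natDegree
    _ ≤ (P ^ (u - 1) * jacobian P Q).natDegree := by
      rw [Polynomial.natDegree_mul (pow_ne_zero _ hP) hJ, Polynomial.natDegree_pow]
      exact Nat.le_add_right _ _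
    _ = ((α * u) • (P ^ (u - 1) * jacobian P Q)).natDegree :=
      (Polynomial.natDegree_smul _ (mul_ne_zero hα hu)).symm
    _ ≤ Q.natDegree := by
      rw [hJ_eq]
      refine (Polynomial.natDegree_sub_le _ _).trans (max_le ?_ ?_) <;>
      exact (Polynomial.natDegree_C_mul_le _ _).trans (natDegree_coeffDerivation_le _ _)

lemma eq_two_of_mul_eq_mul {a b : ℕ} (hu : 2 ≤ u) (hv : 2 ≤ v) (ha : 0 < a)
    (hab : v * b = u * a) (hle : (u - 1) * a ≤ b) : u = 2 ∧ v = 2 := by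
  have h : v * (u - 1) ≤ u := Nat.le_of_mul_le_mul_right
    (by rw [mul_assoc, ← hab]; exact Nat.mul_le_mul_left v hle) ha
  obtain ⟨t, rfl⟩ := Nat.exists_eq_add_of_le hu
  have h2 := Nat.mul_le_mul_right (2 + t - 1) hv
  obtain rfl : t = 0 := by omega
  omega

theorem IsDeformation.eq_CAlgHom_of_two_le [IsDomain K]
    {Φ : SymbolRing K →ₐ[K] (SymbolRing K)[X]} (hΦ : IsDeformation Φ) (hu : 2 ≤ u)
    (hv : 2 ≤ v) (huv : u.Coprime v) {r : K} (hr : r ≠ 0)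
    (hfix : Φ (X 1 ^ v - r • X 0 ^ u) = Polynomial.C (X 1 ^ v - r • X 0 ^ u)) :
    Φ = Polynomial.CAlgHom := by
  by_contra hne
  set P := Φ (X 0)
  set Q := Φ (X 1)
  have hP : P ≠ 0 := hΦ.ne_zero (X_ne_zero 0)
  have hQ : Q ≠ 0 := hΦ.ne_zero (X_ne_zero 1)
  have hPQ : Q ^ v - r • P ^ u = Polynomial.C (X 1 ^ v - r • X 0 ^ u) := by
    rw [← hfix, map_sub, map_smul, map_pow, map_pow]
  have hdegP : 0 < P.natDegree := by
    refine Nat.pos_of_ne_zero fun h => hne (hΦ.eq_CAlgHom (by omega) (by omega) ?_ hfix)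
    rw [map_pow, hΦ.eq_C_iff.2 h, map_pow]
  have hdeg : v * Q.natDegree = u * P.natDegree := by
    rw [← Polynomial.natDegree_pow, sub_eq_iff_eq_add'.1 hPQ, Polynomial.natDegree_add_C,
      Polynomial.natDegree_smul _ hr, Polynomial.natDegree_pow]
  suffices u = 2 ∧ v = 2 by
    obtain ⟨rfl, rfl⟩ := this
    exact absurd huv (by decide)
  rcases ((Nat.isCoprime_iff_coprime.2 huv).map (Int.castRingHom K)).ne_zero_or_ne_zero with h | h
  · exact eq_two_of_mul_eq_mul hu hv hdegP hdeg <|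
      natDegree_le_of_smul_pow_add_smul_pow_eq_C (α := -r) (β := 1)
        (by rw [← hPQ]; module) hΦ.jacobian_ne_zero (neg_ne_zero.2 hr) (by simpa using h) hP
  · have hdegQ : 0 < Q.natDegree :=
      Nat.pos_of_mul_pos_left (hdeg ▸ Nat.mul_pos (by omega) hdegP)
    exact (eq_two_of_mul_eq_mul hv hu hdegQ hdeg.symm <|
      natDegree_le_of_smul_pow_add_smul_pow_eq_C (α := 1) (β := -r) (by rw [← hPQ]; module)
        (jacobian_swap P Q ▸ neg_ne_zero.2 hΦ.jacobian_ne_zero) one_ne_zero (by simpa using h)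
        hQ).symm

end Jacobian

section Automorphisms

variable {K : Type*} [CommRing K]

lemma aeval_wX_mul_wX (P : K[X]) :
    Polynomial.aeval (wX K) P * wX K = wX K * Polynomial.aeval (wX K) P := by
  simpa using congrArg (Polynomial.aeval (wX K)) (Polynomial.X_mul (p := P)).symm

/-- The endomorphism `x ↦ x`, `∂ ↦ ∂ + P(x)`. -/
def shearHom (P : K[X]) : Weyl K →ₐ[K] Weyl K :=
  lift (wX K) (wD K + Polynomial.aeval (wX K) P) <| by
    rw [add_mul, wD_mul_wX, aeval_wX_mul_wX, mul_add, add_right_comm]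

lemma shearHom_comp_shearHom (P Q : K[X]) :
    (shearHom P).comp (shearHom Q) = shearHom (P + Q) := by
  refine algHom_ext ?_ ?_
  · simp [shearHom]
  · simp [shearHom, ← Polynomial.aeval_algHom_apply, add_assoc]

@[simp]
lemma shearHom_zero : shearHom (0 : K[X]) = AlgHom.id K (Weyl K) :=
  algHom_ext (by simp [shearHom]) (by simp [shearHom])

/-- The automorphism `x ↦ x`, `∂ ↦ ∂ + P(x)`. -/
def shear (P : K[X]) : Weyl K ≃ₐ[K] Weyl K :=
  AlgEquiv.ofAlgHom (shearHom P) (shearHom (-P))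
    (by rw [shearHom_comp_shearHom, add_neg_cancel, shearHom_zero])
    (by rw [shearHom_comp_shearHom, neg_add_cancel, shearHom_zero])

@[simp]
lemma shear_wX (P : K[X]) : shear P (wX K) = wX K := by simp [shear, shearHom]

@[simp]
lemma shear_wD (P : K[X]) : shear P (wD K) = wD K + Polynomial.aeval (wX K) P := by
  simp [shear, shearHom]

lemma algEquiv_ext {σ τ : Weyl K ≃ₐ[K] Weyl K} (hX : σ (wX K) = τ (wX K))
    (hD : σ (wD K) = τ (wD K)) : σ = τ :=
  AlgEquiv.coe_toAlgHom_injective (algHom_ext hX hD)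

lemma shear_add (P Q : K[X]) : shear (P + Q) = shear P * shear Q :=
  AlgEquiv.coe_toAlgHom_injective (shearHom_comp_shearHom P Q).symm

/-- The endomorphism `x ↦ αx + β∂ + a`, `∂ ↦ γx + δ∂ + b`. -/
def affineHom {α β γ δ : K} (h : α * δ - β * γ = 1) (a b : K) : Weyl K →ₐ[K] Weyl K :=
  lift (α • wX K + β • wD K + a • 1) (γ • wX K + δ • wD K + b • 1) <| by
    simp only [mul_add, add_mul, smul_mul_smul_comm, wD_mul_wX, mul_one, one_mul]
    linear_combination (norm := module) h • (1 : Weyl K)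

/-- The automorphism `x ↦ αx + β∂ + a`, `∂ ↦ γx + δ∂ + b`. -/
def affineEquiv {α β γ δ : K} (h : α * δ - β * γ = 1) (a b : K) : Weyl K ≃ₐ[K] Weyl K :=
  have h' : δ * α - -β * -γ = 1 := by linear_combination h
  AlgEquiv.ofAlgHom (affineHom h a b) (affineHom h' (β * b - δ * a) (γ * a - α * b))
    (by
      refine algHom_ext ?_ ?_
      · simp only [affineHom, AlgHom.coe_comp, Function.comp_apply, lift_wX, lift_wD, map_add,
          map_smul, map_one, AlgHom.coe_id, id_eq]
        linear_combination (norm := module) h • wX K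
      · simp only [affineHom, AlgHom.coe_comp, Function.comp_apply, lift_wX, lift_wD, map_add,
          map_smul, map_one, AlgHom.coe_id, id_eq]
        linear_combination (norm := module) h • wD K)
    (by
      refine algHom_ext ?_ ?_
      · simp only [affineHom, AlgHom.coe_comp, Function.comp_apply, lift_wX, lift_wD, map_add,
          map_smul, map_one, AlgHom.coe_id, id_eq]
        linear_combination (norm := module) h • (wX K - a • 1)
      · simp only [affineHom, AlgHom.coe_comp, Function.comp_apply, lift_wX, lift_wD, map_add,
          map_smul, map_one, AlgHom.coe_id, id_eq]
        linear_combination (norm := module) h • (wD K - b • 1))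

@[simp]
lemma affineEquiv_wX {α β γ δ : K} (h : α * δ - β * γ = 1) (a b : K) :
    affineEquiv h a b (wX K) = α • wX K + β • wD K + a • 1 := by
  simp [affineEquiv, affineHom]

@[simp]
lemma affineEquiv_wD {α β γ δ : K} (h : α * δ - β * γ = 1) (a b : K) :
    affineEquiv h a b (wD K) = γ • wX K + δ • wD K + b • 1 := by
  simp [affineEquiv, affineHom]

end Automorphisms

section TameGroup

variable {K : Type*} [CommRing K]

variable (K) in
/-- The subgroup of `Aut(A₁)` generated by the affine automorphisms and by `x ↦ x`, `∂ ↦ ∂ + λxⁱ`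
with `λ ≠ 0` and `i ≥ 2`. -/
def tameGroup : Subgroup (Weyl K ≃ₐ[K] Weyl K) :=
  Subgroup.closure
    ({σ | max (wdeg K (σ (wX K))) (wdeg K (σ (wD K))) = 1} ∪
      {σ | ∃ lam : K, lam ≠ 0 ∧ ∃ i : ℕ, 2 ≤ i ∧ σ (wX K) = wX K ∧
        σ (wD K) = wD K + algebraMap K (Weyl K) lam * wX K ^ i})

lemma mem_span_iff_symbol_mem_weightLE {a : Weyl K} {n : ℕ} :
    a ∈ Submodule.span K {w | ∃ i j : ℕ, i + j ≤ n ∧ w = wX K ^ i * wD K ^ j} ↔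
      symbol a ∈ weightLE K ![1, 1] n := by
  have hset : {w | ∃ i j : ℕ, i + j ≤ n ∧ w = wX K ^ i * wD K ^ j} =
      orderedEval (wX K) (wD K) ''
        ((monomial · (1 : K)) '' {k | Finsupp.weight ![(1 : ℚ), 1] k ≤ n}) := by
    ext w
    simp only [Set.mem_ofPred_eq, Set.mem_image, exists_exists_and_eq_and, orderedEval_monomial,
      one_smul, weight_one_one, Nat.cast_le]
    constructor
    · rintro ⟨i, j, hij, rfl⟩
      exact ⟨Finsupp.single 0 i + Finsupp.single 1 j, by simpa using hij, by simp⟩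
    · rintro ⟨k, hk, rfl⟩
      exact ⟨k 0, k 1, hk, rfl⟩
  rw [hset, Submodule.span_image, ← restrictSupport_eq_span, ← weightLE, Submodule.mem_map]
  refine ⟨?_, fun h => ⟨_, h, orderedEval_symbol a⟩⟩
  rintro ⟨f, hf, rfl⟩
  rwa [symbol_orderedEval]

lemma wdeg_le_iff {a : Weyl K} {n : ℕ} :
    wdeg K a ≤ n ↔ symbol a ∈ weightLE K ![1, 1] n := by
  simp only [wdeg, mem_span_iff_symbol_mem_weightLE]
  refine ⟨fun h => ?_, fun h => Nat.sInf_le h⟩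
  have hne : {n : ℕ | symbol a ∈ weightLE K ![1, 1] n}.Nonempty :=
    ⟨(symbol a).totalDegree, mem_weightLE.2 fun k hk => by
      rw [weight_one_one, Nat.cast_le, ← Fin.sum_univ_two (⇑k), ← Finsupp.degree_eq_sum]
      exact le_totalDegree (mem_support_iff.2 hk)⟩
  exact weightLE_mono (Nat.cast_le.2 h) (Nat.sInf_mem hne)

lemma eq_algebraMap_of_symbol_mem_weightLE_zero {a : Weyl K}
    (ha : symbol a ∈ weightLE K ![1, 1] 0) :
    a = algebraMap K (Weyl K) (coeff 0 (symbol a)) := by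
  refine symbol_injective (MvPolynomial.ext _ _ fun n => ?_)
  rw [symbol_algebraMap, coeff_C]
  split_ifs with hn
  · rw [hn]
  · by_contra h
    have hle := mem_weightLE.1 ha n h
    rw [weight_one_one] at hle
    have hsum : n 0 + n 1 = 0 := by exact_mod_cast le_antisymm hle (Nat.cast_nonneg _)
    refine hn (Finsupp.ext fun i => ?_)
    fin_cases i
    exacts [(Nat.eq_zero_of_add_eq_zero_right hsum).symm,
      (Nat.eq_zero_of_add_eq_zero_left hsum).symm]

lemma wX_ne_algebraMap [Nontrivial K] (c : K) : wX K ≠ algebraMap K (Weyl K) c := by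
  intro h
  have hcoeff := congrArg (coeff (Finsupp.single 0 1) ∘ symbol) h
  simp [coeff_C, Finsupp.single_eq_zero, eq_comm] at hcoeff

lemma symbol_apply_wX_notMem_weightLE_zero [Nontrivial K] (σ : Weyl K ≃ₐ[K] Weyl K) :
    symbol (σ (wX K)) ∉ weightLE K ![1, 1] 0 := by
  intro h
  have hc := eq_algebraMap_of_symbol_mem_weightLE_zero h
  rw [← AlgEquiv.commutes σ] at hc
  exact wX_ne_algebraMap _ (σ.injective hc)

lemma mem_tameGroup_of_symbol_mem_weightLE_one [Nontrivial K] {σ : Weyl K ≃ₐ[K] Weyl K}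
    (hX : symbol (σ (wX K)) ∈ weightLE K ![1, 1] 1)
    (hD : symbol (σ (wD K)) ∈ weightLE K ![1, 1] 1) : σ ∈ tameGroup K := by
  have hX₁ : wdeg K (σ (wX K)) ≤ 1 := wdeg_le_iff.2 (by rwa [Nat.cast_one])
  have hD₁ : wdeg K (σ (wD K)) ≤ 1 := wdeg_le_iff.2 (by rwa [Nat.cast_one])
  have hX₀ : ¬ wdeg K (σ (wX K)) ≤ 0 := by
    rw [wdeg_le_iff, Nat.cast_zero]
    exact symbol_apply_wX_notMem_weightLE_zero σ
  exact Subgroup.subset_closure (Or.inl (show max _ _ = 1 by omega))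

lemma symbol_smul_add_smul_add_smul_mem_weightLE (α β γ : K) :
    symbol (α • wX K + β • wD K + γ • 1) ∈ weightLE K ![1, 1] 1 := by
  have hX : IsLeadingForm ![1, 1] 1 (wX K) (X 0) := .wX
  have hD : IsLeadingForm ![1, 1] 1 (wD K) (X 1) := .wD
  have h1 : IsLeadingForm ![1, 1] 0 (1 : Weyl K) 1 := .one
  exact (((hX.smul α).add (hD.smul β)).add ((h1.smul γ).zero_of_lt one_pos)).mem_weightLE

lemma exists_eq_smul_add_smul_add_smul {a : Weyl K} (ha : symbol a ∈ weightLE K ![1, 1] 1) :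
    ∃ α β γ : K, α • wX K + β • wD K + γ • 1 = a := by
  rw [← Submodule.mem_span_triple, ← orderedEval_symbol a, (symbol a).as_sum, map_sum]
  refine sum_mem fun n hn => ?_
  rw [orderedEval_monomial]
  refine Submodule.smul_mem _ _ (Submodule.subset_span ?_)
  have hle := mem_weightLE.1 ha n (mem_support_iff.1 hn)
  rw [weight_one_one, Nat.cast_le_one] at hle
  obtain ⟨h0, h1⟩ | ⟨h0, h1⟩ | ⟨h0, h1⟩ :
      n 0 = 1 ∧ n 1 = 0 ∨ n 0 = 0 ∧ n 1 = 1 ∨ n 0 = 0 ∧ n 1 = 0 := by omega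
  all_goals simp [h0, h1]

lemma affineEquiv_mem_tameGroup [Nontrivial K] {α β γ δ : K} (h : α * δ - β * γ = 1) (a b : K) :
    affineEquiv h a b ∈ tameGroup K := by
  apply mem_tameGroup_of_symbol_mem_weightLE_one
  · rw [affineEquiv_wX]
    exact symbol_smul_add_smul_add_smul_mem_weightLE α β a
  · rw [affineEquiv_wD]
    exact symbol_smul_add_smul_add_smul_mem_weightLE γ δ b

lemma shear_mem_tameGroup [Nontrivial K] (P : K[X]) : shear P ∈ tameGroup K := by
  induction P using Polynomial.induction_on' with
  | add P Q hP hQ => rw [shear_add]; exact mul_mem hP hQ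
  | monomial i c =>
    rcases eq_or_ne c 0 with rfl | hc
    · have h : shear (Polynomial.monomial i (0 : K)) = 1 := algEquiv_ext (by simp) (by simp)
      exact h ▸ one_mem _
    rcases i with _ | _ | i
    · have h : shear (Polynomial.monomial 0 c) =
          affineEquiv (α := 1) (β := 0) (γ := 0) (δ := 1) (by simp) 0 c :=
        algEquiv_ext (by simp) (by simp [Algebra.algebraMap_eq_smul_one])
      exact h ▸ affineEquiv_mem_tameGroup _ _ _
    · have h : shear (Polynomial.monomial 1 c) =
          affineEquiv (α := 1) (β := 0) (γ := c) (δ := 1) (by simp) 0 0 :=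
        algEquiv_ext (by simp) (by simp [Polynomial.aeval_monomial, Algebra.smul_def, add_comm])
      exact h ▸ affineEquiv_mem_tameGroup _ _ _
    · refine Subgroup.subset_closure (Or.inr ⟨c, hc, i + 2, by omega, by simp, ?_⟩)
      rw [shear_wD, Polynomial.aeval_monomial]

end TameGroup

section FixingX

variable {K : Type*} [CommRing K]

lemma wX_ne_zero [Nontrivial K] : wX K ≠ 0 := by
  simpa using wX_ne_algebraMap (0 : K)

lemma wD_ne_zero [Nontrivial K] : wD K ≠ 0 := by
  intro h
  simpa using congrArg symbol h

lemma exists_eq_aeval_wX_add_aeval_wX_mul_wD {a : Weyl K} (ha : symbol a ∈ weightLE K ![0, 1] 1) :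
    ∃ P Q : K[X], Polynomial.aeval (wX K) P + Polynomial.aeval (wX K) Q * wD K = a := by
  let ev : K[X] →ₗ[K] Weyl K := (Polynomial.aeval (wX K)).toLinearMap
  suffices a ∈ LinearMap.range (ev.coprod (LinearMap.mulRight K (wD K) ∘ₗ ev)) by
    obtain ⟨⟨P, Q⟩, h⟩ := this
    exact ⟨P, Q, h⟩
  rw [← orderedEval_symbol a, (symbol a).as_sum, map_sum]
  refine sum_mem fun n hn => ?_
  rw [orderedEval_monomial]
  refine Submodule.smul_mem _ _ ?_
  have hle := mem_weightLE.1 ha n (mem_support_iff.1 hn)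
  simp only [weight_fin_two, Matrix.cons_val_zero, mul_zero, Matrix.cons_val_one, mul_one,
    zero_add, Nat.cast_le_one] at hle
  obtain h | h : n 1 = 0 ∨ n 1 = 1 := by omega
  · exact ⟨(Polynomial.X ^ n 0, 0), by simp [ev, h]⟩
  · exact ⟨(0, Polynomial.X ^ n 0), by simp [ev, h]⟩

lemma aeval_X_zero_mul_X_one_pow {f : SymbolRing K} {N : ℕ}
    (hf : IsWeightedHomogeneous ![(0 : ℚ), 1] f N) (g : SymbolRing K) :
    aeval ![X 0, g] f * X 1 ^ N = f * g ^ N := by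
  rw [f.as_sum, map_sum, Finset.sum_mul, Finset.sum_mul]
  refine Finset.sum_congr rfl fun n hn => ?_
  have hn1 : n 1 = N := by simpa [weight_fin_two] using hf (mem_support_iff.1 hn)
  rw [monomial_eq_X_pow_mul, hn1]
  simp only [map_mul, map_pow, aeval_X, algHom_C, algebraMap_eq, Matrix.cons_val_zero,
    Matrix.cons_val_one]
  ring

end FixingX

section DegreeOne

variable {K : Type*} [CommRing K] [IsDomain K]

/-- The `∂`-degrees of `σ ∂` and `σ⁻¹ ∂` have product `1`. -/
lemma symbol_apply_wD_mem_weightLE {σ : Weyl K ≃ₐ[K] Weyl K} (hσ : σ (wX K) = wX K) :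
    symbol (σ (wD K)) ∈ weightLE K ![0, 1] 1 := by
  have hw : (0 : ℚ) < ![(0 : ℚ), 1] 0 + ![(0 : ℚ), 1] 1 := by simp
  obtain ⟨m, g, hg, hσD⟩ := exists_isLeadingForm ![0, 1]
    ((map_ne_zero_iff σ σ.injective).2 wD_ne_zero)
  obtain ⟨N, f, hf, hτD⟩ := exists_isLeadingForm ![0, 1]
    ((map_ne_zero_iff σ.symm σ.symm.injective).2 wD_ne_zero)
  rw [weight_zero_one] at hσD hτD
  have hX : IsLeadingForm ![0, 1] 0 (σ (wX K)) (X 0) := by rw [hσ]; exact .wX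
  have hD : IsLeadingForm ![0, 1] 1 (wD K) (X 1) := .wD
  have hmap {e : ℚ} {h : SymbolRing K}
      (hh : IsLeadingForm ((m 1 : ℚ) • ![0, 1]) e (σ.symm (wD K)) h) :
      IsLeadingForm ![0, 1] e (wD K) (aeval ![X 0, g] h) := by
    simpa using IsLeadingForm.map (φ := (σ : Weyl K →ₐ[K] Weyl K)) hw (by simpa using hX)
      (by simpa using hσD) hh
  have hm : 0 < m 1 := by
    by_contra! hm
    have hh : IsLeadingForm ((m 1 : ℚ) • ![0, 1]) 0 (σ.symm (wD K)) _ :=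
      .of_mem_weightLE (mem_weightLE.2 fun n _ => by
        rw [weight_smul, Nat.le_zero.1 hm, Nat.cast_zero, zero_mul])
    exact X_ne_zero 1 (hD.unique ((hmap hh).zero_of_lt one_pos))
  have hne : aeval ![X 0, g] f ≠ 0 := by
    have hfg : f * g ^ N 1 ≠ 0 :=
      mul_ne_zero (ne_zero_iff.2 ⟨N, hf⟩) (pow_ne_zero _ (ne_zero_iff.2 ⟨m, hg⟩))
    rw [← aeval_X_zero_mul_X_one_pow hτD.1] at hfg
    exact left_ne_zero_of_mul hfg
  have hmN : (m 1 * N 1 : ℚ) = 1 :=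
    (hmap (hτD.smul_weight (Nat.cast_pos.2 hm))).degree_unique hne hD (X_ne_zero _)
  have hm1 : m 1 = 1 := Nat.eq_one_of_mul_eq_one_right (by exact_mod_cast hmN)
  simpa only [hm1, Nat.cast_one] using hσD.mem_weightLE

lemma exists_eq_shear {σ : Weyl K ≃ₐ[K] Weyl K} (hσ : σ (wX K) = wX K) : ∃ P, σ = shear P := by
  obtain ⟨P, Q, hPQ⟩ := exists_eq_aeval_wX_add_aeval_wX_mul_wD (symbol_apply_wD_mem_weightLE hσ)
  have hcomm : σ (wD K) * wX K = wX K * σ (wD K) + 1 := by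
    rw [← hσ, ← map_mul, wD_mul_wX, map_add, map_mul, map_one, hσ]
  have hcomm' : σ (wD K) * wX K = wX K * σ (wD K) + Polynomial.aeval (wX K) Q := by
    rw [← hPQ, add_mul, mul_assoc, wD_mul_wX, aeval_wX_mul_wX, mul_add, mul_add, ← mul_assoc,
      aeval_wX_mul_wX, mul_assoc, mul_one, add_assoc]
  have hQ : Polynomial.aeval (wX K) Q = 1 := add_left_cancel (hcomm'.symm.trans hcomm)
  refine ⟨P, algEquiv_ext (by rw [hσ, shear_wX]) ?_⟩
  rw [← hPQ, hQ, one_mul, shear_wD, add_comm]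

lemma mem_tameGroup_of_symbol_apply_wX_mem_weightLE_one {K : Type*} [Field K]
    {σ : Weyl K ≃ₐ[K] Weyl K} (hσ : symbol (σ (wX K)) ∈ weightLE K ![1, 1] 1) :
    σ ∈ tameGroup K := by
  obtain ⟨α, β, a, hσX⟩ := exists_eq_smul_add_smul_add_smul hσ
  obtain ⟨γ, δ, h⟩ : ∃ γ δ : K, α * δ - β * γ = 1 := by
    by_cases hα : α = 0
    · have hβ : β ≠ 0 := by
        rintro rfl
        refine symbol_apply_wX_notMem_weightLE_zero σ ?_
        rw [← hσX, hα, zero_smul, zero_smul, zero_add, zero_add]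
        exact (IsLeadingForm.one.smul a).mem_weightLE
      exact ⟨-β⁻¹, 0, by field_simp; simp⟩
    · exact ⟨0, α⁻¹, by field_simp; simp⟩
  have hfix : ((affineEquiv h a 0)⁻¹ * σ) (wX K) = wX K := by
    rw [AlgEquiv.mul_apply, ← hσX, ← affineEquiv_wX h, ← AlgEquiv.mul_apply, inv_mul_cancel,
      AlgEquiv.one_apply]
  obtain ⟨P, hP⟩ := exists_eq_shear hfix
  rw [inv_mul_eq_iff_eq_mul] at hP
  exact hP ▸ mul_mem (affineEquiv_mem_tameGroup h a 0) (shear_mem_tameGroup P)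

end DegreeOne

section Slope

variable {K : Type*} [CommRing K] {f : SymbolRing K} {d : ℕ} {c : K} {n : Fin 2 →₀ ℕ}

lemma eq_single_of_coeff_smul_X_pow_ne_zero {i : Fin 2}
    (hn : coeff n (c • X i ^ d : SymbolRing K) ≠ 0) :
    n = Finsupp.single i d := by
  classical
  by_contra h
  simp [coeff_X_pow, Ne.symm h] at hn

lemma coeff_single_ne_zero_of_sub_mem_weightLT (hf : f - c • X 0 ^ d ∈ weightLT K ![1, 1] d)
    (hc : c ≠ 0) : coeff (Finsupp.single 0 d) f ≠ 0 := by
  classical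
  intro h
  have hlt := mem_weightLT.1 hf (Finsupp.single 0 d) (by simpa [coeff_X_pow, h] using hc)
  simp [Finsupp.weight_single] at hlt

lemma coeff_weightedHomogeneousComponent_ne_zero {w : Fin 2 → ℚ} (hn : coeff n f ≠ 0) :
    coeff n (weightedHomogeneousComponent w (Finsupp.weight w n) f) ≠ 0 := by
  classical
  rwa [coeff_weightedHomogeneousComponent, if_pos rfl]

lemma add_lt_or_eq_of_sub_mem_weightLT (hf : f - c • X 0 ^ d ∈ weightLT K ![1, 1] d)
    (hn : coeff n f ≠ 0) : n 0 + n 1 < d ∨ n 0 = d ∧ n 1 = 0 := by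
  by_cases hnd : n = Finsupp.single 0 d
  · simp [hnd]
  · left
    have hcn : coeff n (c • X 0 ^ d : SymbolRing K) = 0 :=
      not_ne_iff.1 fun h => hnd (eq_single_of_coeff_smul_X_pow_ne_zero h)
    have h := mem_weightLT.1 hf n (by rwa [coeff_sub, hcn, sub_zero])
    rw [weight_one_one] at h
    exact_mod_cast h

/-- The slope `u / v` is that of the edge of the Newton polygon of `f` issuing from `(d, 0)`. -/
lemma exists_newtonEdge (hf : f - c • X 0 ^ d ∈ weightLT K ![1, 1] d)
    (hf1 : ∃ n, coeff n f ≠ 0 ∧ n 1 ≠ 0) :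
    ∃ u v : ℕ, v ≠ 0 ∧ v < u ∧ u.Coprime v ∧ f ∈ weightLE K ![(v : ℚ), u] (v * d) ∧
      ∃ n, coeff n f ≠ 0 ∧ n 1 ≠ 0 ∧ Finsupp.weight ![(v : ℚ), u] n = v * d := by
  have hsupp {n : Fin 2 →₀ ℕ} (hn : coeff n f ≠ 0) : n 0 + n 1 < d ∨ n 0 = d ∧ n 1 = 0 :=
    add_lt_or_eq_of_sub_mem_weightLT hf hn
  let slope (n : Fin 2 →₀ ℕ) : ℚ := (d - n 0) / n 1
  obtain ⟨n, hn, hmin⟩ := Finset.exists_min_image {n ∈ f.support | n 1 ≠ 0} slope (by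
    simpa [Finset.Nonempty] using hf1)
  simp only [Finset.mem_filter, mem_support_iff, and_imp] at hn hmin
  obtain ⟨hn, hn1⟩ := hn
  have hslope : 1 < slope n := by
    rw [one_lt_div (by positivity), lt_sub_iff_add_lt']
    have h : n 0 + n 1 < d := by have := hsupp hn; omega
    exact_mod_cast h
  obtain ⟨u, v, hv, huv, hslope_eq⟩ : ∃ u v : ℕ, v ≠ 0 ∧ u.Coprime v ∧ slope n = u / v := by
    refine ⟨_, _, (slope n).den_ne_zero, (slope n).reduced, ?_⟩
    rw [Nat.cast_natAbs, abs_of_pos (Rat.num_pos.2 (by linarith)), Rat.num_div_den]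
  have hweight (k : Fin 2 →₀ ℕ) : Finsupp.weight ![(v : ℚ), u] k = k 0 * v + k 1 * u := by
    simp [weight_fin_two]
  have hv0 : (0 : ℚ) < v := by positivity
  rw [hslope_eq] at hslope hmin
  refine ⟨u, v, hv, by rw [one_lt_div hv0] at hslope; exact_mod_cast hslope, huv,
    mem_weightLE.2 fun k hk => ?_, n, hn, hn1, ?_⟩
  · rw [hweight]
    rcases eq_or_ne (k 1) 0 with hk1 | hk1
    · have hkd : (k 0 : ℚ) ≤ d := by exact_mod_cast (by have := hsupp hk; omega : k 0 ≤ d)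
      rw [hk1, Nat.cast_zero, zero_mul, add_zero, mul_comm]
      gcongr
    · have h := hmin k hk hk1
      rw [div_le_div_iff₀ hv0 (by positivity)] at h
      linarith
  · rw [div_eq_div_iff (by positivity) (by positivity)] at hslope_eq
    rw [hweight]
    linarith

end Slope

section DegreeReduction

section CommRing

variable {K : Type*} [CommRing K]

lemma IsLeadingForm.change_weights {d : ℕ} {c : K} {a : Weyl K}
    (ha : IsLeadingForm ![1, 1] d a (c • X 0 ^ d))
    (hpure : ∀ n, coeff n (symbol a) ≠ 0 → n 1 = 0) {m : ℚ} (hm : 0 < m) (M : ℚ) :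
    IsLeadingForm ![m, M] (d * m) a (c • X 0 ^ d) := by
  classical
  have hhom : IsWeightedHomogeneous ![m, M] (c • X 0 ^ d : SymbolRing K) (d * m) := by
    rw [smul_eq_C_mul]
    simpa using ((isWeightedHomogeneous_X K ![m, M] 0).pow d).C_mul c
  refine ⟨hhom, mem_weightLT.2 fun n hn => ?_⟩
  have hn1 : n 1 = 0 := by
    by_contra hn1
    have hcn : coeff n (c • X 0 ^ d : SymbolRing K) = 0 :=
      not_ne_iff.1 fun h => hn1 (by simp [eq_single_of_coeff_smul_X_pow_ne_zero h])
    rw [coeff_sub, hcn, sub_zero] at hn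
    exact hn1 (hpure n hn)
  have hlt := mem_weightLT.1 ha.2 n hn
  rw [weight_one_one, hn1, add_zero] at hlt
  simpa [weight_fin_two, hn1] using mul_lt_mul_of_pos_right hlt hm

/-- Otherwise `x = σ⁻¹ (σ x)` would have degree `d * deg (σ⁻¹ x)`. -/
lemma exists_coeff_symbol_ne_zero_of_isLeadingForm [IsDomain K] {σ : Weyl K ≃ₐ[K] Weyl K}
    {d : ℕ} (hd : 2 ≤ d) {c : K} (hc : c ≠ 0)
    (hσ : IsLeadingForm ![1, 1] d (σ (wX K)) (c • X 0 ^ d)) :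
    ∃ n, coeff n (symbol (σ (wX K))) ≠ 0 ∧ n 1 ≠ 0 := by
  by_contra! hpure
  have hne {z : Weyl K} (hz : z ≠ 0) : σ.symm z ≠ 0 :=
    (map_ne_zero_iff σ.symm σ.symm.injective).2 hz
  obtain ⟨k, h, hk, hτX⟩ := exists_isLeadingForm ![1, 1] (hne wX_ne_zero)
  obtain ⟨l, g, -, hτD⟩ := exists_isLeadingForm ![1, 1] (hne wD_ne_zero)
  set m : ℚ := Finsupp.weight ![1, 1] k with hm
  rw [weight_one_one] at hm
  have hm0 : 0 < m := by
    by_contra! hm0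
    exact symbol_apply_wX_notMem_weightLE_zero σ.symm (weightLE_mono hm0 hτX.mem_weightLE)
  set M : ℚ := Finsupp.weight ![1, 1] l
  have hX : IsLeadingForm ![1, 1] (d * m) (wX K) (c • h ^ d) := by
    simpa using IsLeadingForm.map (φ := (σ.symm : Weyl K →ₐ[K] Weyl K)) (by simp) hτX hτD
      (hσ.change_weights hpure hm0 M)
  have hform : c • h ^ d ≠ 0 := smul_ne_zero hc (pow_ne_zero d (ne_zero_iff.2 ⟨k, hk⟩))
  have hdm : d * m = 1 := hX.degree_unique hform .wX (X_ne_zero _)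
  rw [hm] at hdm
  have hd1 : d = 1 := Nat.eq_one_of_mul_eq_one_right (by exact_mod_cast hdm)
  omega

/-- The shear removes the leading form `(y - r xᵘ)ᴺ` of weight `uN` in favour of `yᴺ`, which has
degree `N < uN`. -/
lemma symbol_shear_apply_mem_weightLT {u N : ℕ} (hu : 2 ≤ u) (hN : N ≠ 0) {c r : K} {a : Weyl K}
    (ha : IsLeadingForm ![1, (u : ℚ)] (u * N : ℕ) a (c • (X 1 - r • X 0 ^ u) ^ N)) :
    symbol (shear (Polynomial.monomial u r) a) ∈ weightLT K ![1, 1] (u * N : ℕ) := by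
  have hw : (0 : ℚ) < ![1, (u : ℚ)] 0 + ![1, (u : ℚ)] 1 := show (0 : ℚ) < 1 + u by positivity
  have hX : IsLeadingForm ![1, (u : ℚ)] 1 (shear (Polynomial.monomial u r) (wX K)) (X 0) := by
    rw [shear_wX]
    exact .wX
  have hD : IsLeadingForm ![1, (u : ℚ)] u (shear (Polynomial.monomial u r) (wD K))
      (X 1 + r • X 0 ^ u) := by
    rw [shear_wD, Polynomial.aeval_monomial, ← Algebra.smul_def]
    refine .add .wD (.smul r ?_)
    simpa using IsLeadingForm.wX.pow hw u
  have hmap : IsLeadingForm ![1, (u : ℚ)] (u * N : ℕ) (shear (Polynomial.monomial u r) a)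
      (c • X 1 ^ N) := by
    simpa using IsLeadingForm.map
      (φ := (shear (Polynomial.monomial u r) : Weyl K →ₐ[K] Weyl K)) hw hX hD ha
  refine mem_weightLT.2 fun n hn => ?_
  have hle : n 0 + n 1 * u ≤ u * N := by
    have h := mem_weightLE.1 hmap.mem_weightLE n hn
    simp only [weight_fin_two, Matrix.cons_val_zero, mul_one, Matrix.cons_val_one] at h
    exact_mod_cast h
  rw [weight_one_one, Nat.cast_lt]
  by_cases hn1 : n 1 = 0
  · have hcn : coeff n (c • X 1 ^ N : SymbolRing K) = 0 :=
      not_ne_iff.1 fun h => hN (by simpa [eq_single_of_coeff_smul_X_pow_ne_zero h] using hn1)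
    have h := mem_weightLT.1 hmap.2 n (by rwa [coeff_sub, hcn, sub_zero])
    simp only [weight_fin_two, Matrix.cons_val_zero, mul_one, Matrix.cons_val_one, hn1,
      Nat.cast_zero, zero_mul, add_zero, Nat.cast_lt] at h
    omega
  · have h : n 1 * 2 ≤ n 1 * u := Nat.mul_le_mul_left _ hu
    omega

end CommRing

variable {K : Type*} [Field K]

lemma exists_isLeadingForm_smul_pow {σ : Weyl K ≃ₐ[K] Weyl K} {d : ℕ} (hd : 2 ≤ d) {c : K}
    (hc : c ≠ 0) (hσ : IsLeadingForm ![1, 1] d (σ (wX K)) (c • X 0 ^ d)) :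
    ∃ u N : ℕ, ∃ c' r : K, 2 ≤ u ∧ N ≠ 0 ∧ u * N = d ∧
      IsLeadingForm ![1, (u : ℚ)] d (σ (wX K)) (c' • (X 1 - r • X 0 ^ u) ^ N) := by
  obtain ⟨u, v, hv, hvu, huv, hle, n, hn, hn1, hweight⟩ :=
    exists_newtonEdge hσ.2 (exists_coeff_symbol_ne_zero_of_isLeadingForm hd hc hσ)
  have hw : (0 : ℚ) < ![(v : ℚ), u] 0 + ![(v : ℚ), u] 1 := show (0 : ℚ) < v + u by positivity
  have hf := IsLeadingForm.of_mem_weightLE hle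
  set f := weightedHomogeneousComponent ![(v : ℚ), u] (v * d) (symbol (σ (wX K))) with hf_def
  have hfn : coeff n f ≠ 0 := by
    rw [hf_def, ← hweight]
    exact coeff_weightedHomogeneousComponent_ne_zero hn
  have hfd : coeff (Finsupp.single 0 d) f ≠ 0 := by
    have hd : Finsupp.weight ![(v : ℚ), u] (Finsupp.single 0 d) = v * d := by
      simp [Finsupp.weight_single, mul_comm]
    rw [hf_def, ← hd]
    exact coeff_weightedHomogeneousComponent_ne_zero
      (coeff_single_ne_zero_of_sub_mem_weightLT hσ.2 hc)
  obtain ⟨Φ, hΦ, hne, hfix⟩ := exists_isDeformation_leadingForm_eq_C σ hw hf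
  obtain ⟨c', h⟩ | ⟨c', r, N, hN, huN, hform, hΦr⟩ := hΦ.eq_smul_X_pow_or_eq_smul_pow hne
    (by omega) hv huv hf.1 (ne_zero_iff.2 ⟨n, hfn⟩) hfix
  · rw [h] at hfn
    simp [eq_single_of_coeff_smul_X_pow_ne_zero hfn] at hn1
  have hr : r ≠ 0 := by
    rintro rfl
    rw [hform, zero_smul, sub_zero, ← pow_mul] at hfd
    have h := DFunLike.congr_fun (eq_single_of_coeff_smul_X_pow_ne_zero hfd) 1
    rw [Finsupp.single_eq_of_ne one_ne_zero, Finsupp.single_eq_same] at h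
    exact mul_ne_zero hv hN h.symm
  have hv1 : v = 1 := by
    by_contra hv1
    exact hne (hΦ.eq_CAlgHom_of_two_le (by omega) (by omega) huv hr hΦr)
  subst hv1
  refine ⟨u, N, c', r, hvu, hN, huN, ?_⟩
  simpa [hform] using hf

lemma exists_mem_tameGroup_symbol_mem_weightLT_of_isLeadingForm {σ : Weyl K ≃ₐ[K] Weyl K} {d : ℕ}
    (hd : 2 ≤ d) {c : K} (hc : c ≠ 0) (hσ : IsLeadingForm ![1, 1] d (σ (wX K)) (c • X 0 ^ d)) :
    ∃ τ ∈ tameGroup K, symbol (τ (σ (wX K))) ∈ weightLT K ![1, 1] d := by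
  obtain ⟨u, N, c', r, hu, hN, rfl, h⟩ := exists_isLeadingForm_smul_pow hd hc hσ
  exact ⟨_, shear_mem_tameGroup _, symbol_shear_apply_mem_weightLT hu hN h⟩

lemma exists_mem_tameGroup_symbol_mem_weightLT {σ : Weyl K ≃ₐ[K] Weyl K} {d : ℕ}
    (hd : 2 ≤ d) (hσ : symbol (σ (wX K)) ∈ weightLE K ![1, 1] d) :
    ∃ τ ∈ tameGroup K, symbol (τ (σ (wX K))) ∈ weightLT K ![1, 1] d := by
  have hw : (0 : ℚ) < ![(1 : ℚ), 1] 0 + ![(1 : ℚ), 1] 1 := by simp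
  have hf := IsLeadingForm.of_mem_weightLE hσ
  set f := weightedHomogeneousComponent ![(1 : ℚ), 1] d (symbol (σ (wX K)))
  rcases eq_or_ne f 0 with hf0 | hf0
  · exact ⟨1, one_mem _, by simpa [hf0] using hf.2⟩
  obtain ⟨Φ, hΦ, hne, hfix⟩ := exists_isDeformation_leadingForm_eq_C σ hw hf
  obtain ⟨c, h⟩ | ⟨c, r, N, -, hdN, h, -⟩ := hΦ.eq_smul_X_pow_or_eq_smul_pow hne one_ne_zero
    one_ne_zero (Nat.coprime_one_left 1) (by simpa using hf.1) hf0 hfix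
  · rw [h] at hf hf0
    exact exists_mem_tameGroup_symbol_mem_weightLT_of_isLeadingForm hd (left_ne_zero_of_smul hf0) hf
  · obtain rfl : N = d := by omega
    rw [h] at hf hf0
    have hdet : (0 : K) * -r - -1 * 1 = 1 := by ring
    let ρ := affineEquiv hdet 0 0
    have hX : IsLeadingForm ![1, 1] 1 (ρ (wX K)) (-X 1) := by
      have h : IsLeadingForm ![1, 1] 1 (wD K) (X 1) := .wD
      simpa [ρ] using h.smul (-1 : K)
    have hD : IsLeadingForm ![1, 1] 1 (ρ (wD K)) (X 0 - r • X 1) := by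
      have hx : IsLeadingForm ![1, 1] 1 (wX K) (X 0) := .wX
      have hy : IsLeadingForm ![1, 1] 1 (wD K) (X 1) := .wD
      simpa [ρ, sub_eq_add_neg] using hx.add (hy.smul (-r))
    have hρ : IsLeadingForm ![1, 1] N ((ρ * σ) (wX K)) (c • X 0 ^ N) := by
      have := IsLeadingForm.map (φ := (ρ : Weyl K →ₐ[K] Weyl K)) hw hX hD hf
      simpa using this
    obtain ⟨τ, hτ, hlt⟩ := exists_mem_tameGroup_symbol_mem_weightLT_of_isLeadingForm hd
      (left_ne_zero_of_smul hf0) hρ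
    exact ⟨τ * ρ, mul_mem hτ (affineEquiv_mem_tameGroup _ _ _), hlt⟩

lemma mem_tameGroup_of_symbol_apply_wX_mem_weightLE (d : ℕ) {σ : Weyl K ≃ₐ[K] Weyl K}
    (hσ : symbol (σ (wX K)) ∈ weightLE K ![1, 1] d) : σ ∈ tameGroup K := by
  induction d generalizing σ with
  | zero => exact absurd (by simpa using hσ) (symbol_apply_wX_notMem_weightLE_zero σ)
  | succ d ih =>
    rcases d.eq_zero_or_pos with rfl | hd
    · exact mem_tameGroup_of_symbol_apply_wX_mem_weightLE_one (by simpa using hσ)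
    · obtain ⟨τ, hτ, hlt⟩ := exists_mem_tameGroup_symbol_mem_weightLT (by omega) hσ
      rw [← (tameGroup K).mul_mem_cancel_left hτ]
      refine ih (mem_weightLE.2 fun n hn => ?_)
      have h := mem_weightLT.1 hlt n hn
      rw [weight_one_one, Nat.cast_lt] at h
      rw [weight_one_one, Nat.cast_le]
      omega

end DegreeReduction

end Weyl

theorem statement16_general (K : Type*) [Field K] :
    Subgroup.closure
      ({σ : Weyl K ≃ₐ[K] Weyl K | max (wdeg K (σ (wX K))) (wdeg K (σ (wD K))) = 1} ∪
        {σ : Weyl K ≃ₐ[K] Weyl K | ∃ lam : K, lam ≠ 0 ∧ ∃ i : ℕ, 2 ≤ i ∧ σ (wX K) = wX K ∧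
          σ (wD K) = wD K + algebraMap K (Weyl K) lam * wX K ^ i}) = ⊤ :=
  (Subgroup.eq_top_iff' _).2 fun _ =>
    Weyl.mem_tameGroup_of_symbol_apply_wX_mem_weightLE _ (Weyl.wdeg_le_iff.1 le_rfl)

theorem statement16 (p : ℕ) (hp : p.Prime) (K : Type*) [Field K] [CharP K p]
    (hperf : Function.Surjective fun a : K => a ^ p) :
    Subgroup.closure
      ({σ : Weyl K ≃ₐ[K] Weyl K | max (wdeg K (σ (wX K))) (wdeg K (σ (wD K))) = 1} ∪
       {σ : Weyl K ≃ₐ[K] Weyl K | ∃ lam : K, lam ≠ 0 ∧ ∃ i : ℕ, 2 ≤ i ∧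
          σ (wX K) = wX K ∧
          σ (wD K) = wD K + algebraMap K (Weyl K) lam * wX K ^ i}) = ⊤ :=
  statement16_general K
end
end
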